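/- Assume the Riemann Hypothesis and the Strong Pair Correlation Conjecture. Then the Simple Zeros Conjecture holds: N*(T) → 1 as T → ∞. -/

import Mathlib

open Complex Filter MeasureTheory Real Set

noncomputable section

/-- A non-trivial zero of the Riemann zeta function. -/
def ZetaNontrivZero (ρ : ℂ) : Prop := riemannZeta ρ = 0 ∧ 0 < ρ.re ∧ ρ.re < 1

/-- The multiplicity of `ρ` as a zero of `ζ`. -/
def zetaMult (ρ : ℂ) : ℕ := sInf {n : ℕ | iteratedDeriv n riemannZeta ρ ≠ 0}

/-- The set of non-trivial zeros with ordinate in `(0, T]`. -/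
def zerosUpTo (T : ℝ) : Set ℂ := {ρ | ZetaNontrivZero ρ ∧ 0 < ρ.im ∧ ρ.im ≤ T}

/-- Montgomery's pair correlation function `F(x,T)`, zeros counted with multiplicity. -/
def Fxt (x T : ℝ) : ℂ :=
  ∑' p : zerosUpTo T × zerosUpTo T,
    (zetaMult p.1 * zetaMult p.2 : ℂ) *
      Complex.exp (Complex.I * (((p.1 : ℂ).im - (p.2 : ℂ).im : ℝ) : ℂ) * (Real.log x : ℂ)) *
      ((4 / (4 + ((p.1 : ℂ).im - (p.2 : ℂ).im) ^ 2) : ℝ) : ℂ)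

/-- The normalized form `F(α) = F(α, T)`. -/
def FF (α T : ℝ) : ℂ := ((T / (2 * π) * Real.log T : ℝ) : ℂ)⁻¹ * Fxt (T ^ α) T

/-- The Strong Pair Correlation Conjecture: for every fixed `M ≥ 1`,
`F(α,T) = 1 + o(1)` as `T → ∞`, uniformly for `1 ≤ α ≤ M`. -/
def SPC : Prop :=
  ∀ M : ℝ, 1 ≤ M → ∀ ε : ℝ, 0 < ε → ∃ T₀ : ℝ, ∀ T : ℝ, T₀ ≤ T →
    ∀ α : ℝ, 1 ≤ α → α ≤ M → ‖FF α T - 1‖ ≤ ε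

/-- `N*(T) = ((T/2π) log T)⁻¹ ∑_{0<γ≤T} m_ρ`, the sum over ordinates counted with
multiplicity (so each distinct zero contributes `m_ρ²`). -/
def Nstar (T : ℝ) : ℝ :=
  (T / (2 * π) * Real.log T)⁻¹ * ∑' ρ : zerosUpTo T, (zetaMult (ρ : ℂ) : ℝ) ^ 2

namespace SZC

/-- logarithm on a disc -/
lemma exists_log_ball {g : ℂ → ℂ} {c : ℂ} {R : ℝ} (hR : 0 < R)
    (hg : DifferentiableOn ℂ g (Metric.ball c R)) (h0 : ∀ z ∈ Metric.ball c R, g z ≠ 0) :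
    ∃ l : ℂ → ℂ, l c = 0 ∧ (∀ z ∈ Metric.ball c R, HasDerivAt l (logDeriv g z) z) ∧
      ∀ z ∈ Metric.ball c R, g z = g c * Complex.exp (l z) := by
  have hd : DifferentiableOn ℂ (logDeriv g) (Metric.ball c R) :=
    (hg.deriv Metric.isOpen_ball).div hg h0
  obtain ⟨l, hl0, hl⟩ := (hd.isExactOn_ball).with_val_at c 0
  refine ⟨l, hl0, hl, fun z hz => ?_⟩
  have hgd : ∀ w ∈ Metric.ball c R, HasDerivAt g (deriv g w) w := fun w hw =>
    ((hg w hw).differentiableAt (Metric.isOpen_ball.mem_nhds hw)).hasDerivAt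
  have key : ∀ w ∈ Metric.ball c R, HasDerivAt (fun w => g w * Complex.exp (-l w)) 0 w := by
    intro w hw
    have h1 := (hgd w hw).mul ((hl w hw).neg.cexp)
    have h2 : deriv g w * cexp ((-l) w) + g w * (cexp ((-l) w) * -logDeriv g w) = 0 := by
      rw [logDeriv_apply]
      field_simp [h0 w hw]
      ring
    rw [h2] at h1
    exact h1
  have hc := Metric.isOpen_ball.is_const_of_deriv_eq_zero (convex_ball c R).isPreconnected
    (f := fun w => g w * Complex.exp (-l w))
    (fun w hw => (key w hw).differentiableAt.differentiableWithinAt)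
    (fun w hw => (key w hw).deriv) hz (Metric.mem_ball_self hR)
  simp only [hl0, neg_zero, Complex.exp_zero, mul_one] at hc
  rw [← hc, mul_assoc, ← Complex.exp_add]
  simp

lemma logDeriv_variation {g : ℂ → ℂ} {R M : ℝ} (hR : 0 < R) (hM : 0 < M)
    (hg : DifferentiableOn ℂ g (Metric.ball 1 R)) (h0 : ∀ z ∈ Metric.ball (1:ℂ) R, g z ≠ 0)
    (hb : ∀ z ∈ Metric.ball (1:ℂ) R, ‖g z‖ ≤ ‖g 1‖ * Real.exp M) {z : ℂ}
    (hz : z ∈ Metric.ball (1:ℂ) (R/4)) :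
    ‖logDeriv g z - logDeriv g 1‖ ≤ 64 * M / R ^ 2 * ‖z - 1‖ := by
  obtain ⟨l, hl0, hl, hle⟩ := exists_log_ball hR hg h0
  have hre : ∀ z ∈ Metric.ball (1:ℂ) R, (l z).re ≤ M := by
    intro w hw
    have h1 := hb w hw
    rw [hle w hw, norm_mul, Complex.norm_exp] at h1
    have h2 : 0 < ‖g 1‖ := norm_pos_iff.2 (h0 1 (Metric.mem_ball_self hR))
    exact Real.exp_le_exp.1 (le_of_mul_le_mul_left h1 h2)
  have hbd : ∀ w, ‖w - 1‖ ≤ R / 2 → ‖l w‖ ≤ 2 * M := by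
    intro w hw
    have hd : DifferentiableOn ℂ (fun u => l (u + 1)) (Metric.ball 0 R) := by
      intro u hu
      have : u + 1 ∈ Metric.ball (1:ℂ) R := by simpa [dist_eq_norm] using hu
      exact ((hl _ this).comp_add_const u 1).differentiableAt.differentiableWithinAt
    have := borelCaratheodory_zero (f := fun u => l (u + 1)) (z := w - 1) hM hd
      (fun u hu => hre _ (by simpa [dist_eq_norm] using hu)) hR
      (by simp [dist_eq_norm]; linarith) (by simpa using hl0)
    simp only [sub_add_cancel] at this
    refine this.trans ?_
    rw [div_le_iff₀ (by linarith)]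
    nlinarith [norm_nonneg (w - 1)]
  have hder : ∀ w ∈ Metric.ball (1:ℂ) (R/4), ‖logDeriv g w‖ ≤ 8 * M / R := by
    intro w hw
    rw [Metric.mem_ball, dist_eq_norm] at hw
    have hsub : ∀ u, ‖u - w‖ ≤ R/4 → ‖u - 1‖ ≤ R / 2 := by
      intro u hu
      calc ‖u - 1‖ = ‖(u - w) + (w - 1)‖ := by ring_nf
        _ ≤ _ := norm_add_le _ _
        _ ≤ R / 2 := by linarith
    have hin : ∀ u, ‖u - w‖ ≤ R/4 → u ∈ Metric.ball (1:ℂ) R := by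
      intro u hu
      rw [Metric.mem_ball, dist_eq_norm]; linarith [hsub u hu]
    have := norm_deriv_le_of_forall_mem_sphere_norm_le (f := l) (c := w) (R := R/4) (C := 2 * M)
      (by linarith) (DifferentiableOn.diffContOnCl (by
        intro u hu
        have hu' := Metric.closure_ball_subset_closedBall hu
        rw [Metric.mem_closedBall, dist_eq_norm] at hu'
        exact (hl u (hin u hu')).differentiableAt.differentiableWithinAt))
      (fun u hu => hbd u (hsub u (by rw [mem_sphere_iff_norm] at hu; exact hu.le)))
    rw [(hl w (hin w (by simp; linarith))).deriv] at this
    refine this.trans (le_of_eq ?_)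
    field_simp; ring
  have hd : DifferentiableOn ℂ (logDeriv g) (Metric.ball 1 (R/4)) :=
    ((hg.deriv Metric.isOpen_ball).div hg h0).mono (Metric.ball_subset_ball (by linarith))
  have := dist_le_div_mul_dist_of_mapsTo_ball (R₂ := 16 * M / R) hd (by
    intro w hw
    rw [Metric.mem_closedBall, dist_eq_norm]
    refine (norm_sub_le _ _).trans ?_
    have h1 := hder w hw
    have h2 := hder 1 (Metric.mem_ball_self (by linarith))
    have : 16 * M / R = 8 * M / R + 8 * M / R := by ring
    linarith) hz
  rw [dist_eq_norm, dist_eq_norm] at this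
  refine this.trans (le_of_eq ?_)
  field_simp; ring

lemma extract_one {f : ℂ → ℂ} (hf : Differentiable ℂ f) (a : ℂ) (ht : analyticOrderAt f a ≠ ⊤) :
    ∃ g : ℂ → ℂ, Differentiable ℂ g ∧ g a ≠ 0 ∧
      ∀ z, f z = (z - a) ^ analyticOrderNatAt f a * g z := by
  obtain ⟨h, hh, h0, he⟩ := (hf.analyticAt a).analyticOrderAt_ne_top.1 ht
  set n := analyticOrderNatAt f a
  let g : ℂ → ℂ := fun z => if z = a then h a else f z / (z - a) ^ n
  have hga : g =ᶠ[nhds a] h := by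
    filter_upwards [he] with z hz
    by_cases hza : z = a
    · simp [g, hza]
    · simp only [g, hza, if_false, hz, smul_eq_mul]
      field_simp [sub_ne_zero.2 hza]
  refine ⟨g, fun z => ?_, by simpa [g] using h0, fun z => ?_⟩
  · by_cases hza : z = a
    · subst hza
      exact (hh.differentiableAt).congr_of_eventuallyEq hga
    · have : g =ᶠ[nhds z] fun z => f z / (z - a) ^ n := by
        filter_upwards [isOpen_ne.mem_nhds hza] with w hw
        simp only [g, if_neg hw]
      refine DifferentiableAt.congr_of_eventuallyEq ?_ this
      exact (hf z).div (by fun_prop) (pow_ne_zero _ (sub_ne_zero.2 hza))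
  · by_cases hza : z = a
    · subst hza
      simpa [g] using he.self_of_nhds
    · simp only [g, hza, if_false]
      field_simp [sub_ne_zero.2 hza]

lemma extract_finset {f : ℂ → ℂ} (hf : Differentiable ℂ f) (ht : ∀ a, analyticOrderAt f a ≠ ⊤)
    (S : Finset ℂ) :
    ∃ g : ℂ → ℂ, Differentiable ℂ g ∧ (∀ a ∈ S, g a ≠ 0) ∧
      ∀ z, f z = (∏ a ∈ S, (z - a) ^ analyticOrderNatAt f a) * g z := by
  classical
  induction S using Finset.induction_on with
  | empty => exact ⟨f, hf, by simp, by simp⟩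
  | insert a S haS ih =>
    obtain ⟨g, hg, hg0, hfg⟩ := ih
    have hfe : f = (fun z => ∏ a ∈ S, (z - a) ^ analyticOrderNatAt f a) * g := funext hfg
    have hP : Differentiable ℂ (fun z => ∏ a ∈ S, (z - a) ^ analyticOrderNatAt f a) := by
      fun_prop
    have ho : analyticOrderAt f a = analyticOrderAt g a := by
      conv_lhs => rw [hfe]
      rw [analyticOrderAt_mul (hP.analyticAt a) (hg.analyticAt a)]
      rw [((hP.analyticAt a).analyticOrderAt_eq_zero).2, zero_add]
      exact Finset.prod_ne_zero_iff.2 fun b hb => pow_ne_zero _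
        (sub_ne_zero.2 (fun h => haS (h ▸ hb)))
    have hoN : analyticOrderNatAt f a = analyticOrderNatAt g a := by
      simp only [analyticOrderNatAt, ho]
    obtain ⟨h, hh, hha, hgh⟩ := extract_one hg a (ho ▸ ht a)
    refine ⟨h, hh, ?_, fun z => ?_⟩
    · intro b hb
      rcases Finset.mem_insert.1 hb with rfl | hb
      · exact hha
      · have := hg0 b hb
        rw [hgh b] at this
        exact right_ne_zero_of_mul this
    · rw [Finset.prod_insert haS, hfg z, hgh z, hoN]; ring

lemma zeros_finite {f : ℂ → ℂ} (hf : Differentiable ℂ f) (ht : ∀ a, analyticOrderAt f a ≠ ⊤)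
    (R : ℝ) : {z | z ∈ Metric.closedBall (1:ℂ) R ∧ f z = 0}.Finite := by
  by_contra hinf
  obtain ⟨x, hx, hacc⟩ := Set.Infinite.exists_accPt_of_subset_isCompact
    (s := {z | z ∈ Metric.closedBall (1:ℂ) R ∧ f z = 0}) hinf
    (isCompact_closedBall (1:ℂ) R) (fun z hz => hz.1)
  have := accPt_iff_frequently.1 hacc
  rcases (hf.analyticAt x).eventually_eq_zero_or_eventually_ne_zero with h | h
  · exact ht x (analyticOrderAt_eq_top.2 h)
  · rw [eventually_nhdsWithin_iff] at h
    exact this (h.mono fun z hz hh => hz hh.1 hh.2.2)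

open scoped Classical in
/-- the zeros in the disc of radius `R` around `1` -/
def ZR (f : ℂ → ℂ) (R : ℝ) : Finset ℂ :=
  if h : {z | z ∈ Metric.closedBall (1:ℂ) R ∧ f z = 0}.Finite then h.toFinset else ∅

lemma mem_ZR {f : ℂ → ℂ} (hf : Differentiable ℂ f) (ht : ∀ a, analyticOrderAt f a ≠ ⊤)
    (R : ℝ) (z : ℂ) : z ∈ ZR f R ↔ ‖z - 1‖ ≤ R ∧ f z = 0 := by
  rw [ZR, dif_pos (zeros_finite hf ht R)]
  simp [dist_eq_norm]

lemma logDeriv_sub_sum_variation {f : ℂ → ℂ} (hf : Differentiable ℂ f)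
    (ht : ∀ a, analyticOrderAt f a ≠ ⊤)
    (h1 : f 1 ≠ 0) {R M : ℝ} (hR : 0 < R) (hM : 0 < M)
    (hb : ∀ z, ‖z - 1‖ = 2 * R → ‖f z‖ ≤ ‖f 1‖ * Real.exp M) {z : ℂ} (hz : ‖z - 1‖ < R / 4)
    (hfz : f z ≠ 0) :
    ‖(logDeriv f z - ∑ a ∈ ZR f R, (analyticOrderNatAt f a : ℂ) / (z - a)) -
      (logDeriv f 1 - ∑ a ∈ ZR f R, (analyticOrderNatAt f a : ℂ) / (1 - a))‖
        ≤ 64 * M / R ^ 2 * ‖z - 1‖ := by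
  obtain ⟨g, hg, hg0, hfg⟩ := extract_finset hf ht (ZR f R)
  have hld : ∀ w, f w ≠ 0 →
      logDeriv f w - ∑ a ∈ ZR f R, (analyticOrderNatAt f a : ℂ) / (w - a) = logDeriv g w := by
    intro w hw
    have hw' := hw
    rw [hfg w] at hw'
    have hP0 := left_ne_zero_of_mul hw'
    have hgw := right_ne_zero_of_mul hw'
    have hP0' := Finset.prod_ne_zero_iff.1 hP0
    have : f = fun z => (∏ a ∈ ZR f R, (z - a) ^ analyticOrderNatAt f a) * g z := funext hfg
    conv_lhs => enter [1]; rw [this]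
    rw [logDeriv_mul w hP0 hgw (by fun_prop) (hg w), logDeriv_prod hP0' (by intros; fun_prop)]
    rw [add_sub_right_comm, ← Finset.sum_sub_distrib, Finset.sum_eq_zero, zero_add]
    intro a _
    rw [logDeriv_fun_pow (by fun_prop), logDeriv_apply]
    simp [div_eq_mul_inv]
  rw [hld z hfz, hld 1 h1]
  have hg1 : g 1 ≠ 0 := by
    have := h1; rw [hfg 1] at this; exact right_ne_zero_of_mul this
  have hsph : ∀ w, ‖w - 1‖ = 2 * R → ‖g w‖ ≤ ‖g 1‖ * Real.exp M := by
    intro w hw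
    have hPle : ‖∏ a ∈ ZR f R, ((1:ℂ) - a) ^ analyticOrderNatAt f a‖ ≤
        ‖∏ a ∈ ZR f R, (w - a) ^ analyticOrderNatAt f a‖ := by
      rw [norm_prod, norm_prod]
      refine Finset.prod_le_prod (fun _ _ => norm_nonneg _) (fun a ha => ?_)
      rw [norm_pow, norm_pow]
      have ha1 := ((mem_ZR hf ht R a).1 ha).1
      refine pow_le_pow_left₀ (norm_nonneg _) ?_ _
      have := norm_sub_norm_le (w - 1) (a - 1)
      rw [sub_sub_sub_cancel_right] at this
      rw [norm_sub_rev] 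
      linarith
    have hP1 : 0 < ‖∏ a ∈ ZR f R, ((1:ℂ) - a) ^ analyticOrderNatAt f a‖ := by
      have := h1; rw [hfg 1] at this; exact norm_pos_iff.2 (left_ne_zero_of_mul this)
    have hb' := hb w hw
    rw [hfg w, hfg 1, norm_mul, norm_mul] at hb'
    have : ‖∏ a ∈ ZR f R, ((1:ℂ) - a) ^ analyticOrderNatAt f a‖ * ‖g w‖ ≤
      ‖∏ a ∈ ZR f R, ((1:ℂ) - a) ^ analyticOrderNatAt f a‖ * (‖g 1‖ * Real.exp M) := by
      rw [← mul_assoc]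
      exact (mul_le_mul_of_nonneg_right hPle (norm_nonneg _)).trans hb'
    exact le_of_mul_le_mul_left this hP1
  refine logDeriv_variation hR hM hg.differentiableOn ?_ ?_ (by simpa [dist_eq_norm] using hz)
  · intro w hw hgw
    have hfw : f w = 0 := by rw [hfg w, hgw, mul_zero]
    have hmem : w ∈ ZR f R := (mem_ZR hf ht R w).2 ⟨by
      rw [Metric.mem_ball, dist_eq_norm] at hw; exact hw.le, hfw⟩
    exact hg0 w hmem hgw
  · intro w hw
    refine norm_le_of_forall_mem_frontier_norm_le (U := Metric.ball (1:ℂ) (2 * R))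
      Metric.isBounded_ball hg.diffContOnCl (fun u hu => hsph u ?_) ?_
    · rw [frontier_ball (1:ℂ) (by positivity), mem_sphere_iff_norm] at hu; exact hu
    · refine subset_closure (Metric.ball_subset_ball (by linarith) hw)

theorem partial_fraction {f : ℂ → ℂ} (hf : Differentiable ℂ f) (hev : ∀ z, f (-z) = f z)
    (h1 : f 1 ≠ 0) {C : ℝ} (hgr : ∀ z, ‖f z‖ ≤ Real.exp (C * (1 + ‖z‖) ^ (3/2 : ℝ)))
    (him : ∀ a, f a = 0 → a.re = 0) {z : ℂ} (hfz : f z ≠ 0) :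
    Tendsto (fun R : ℕ => ∑ a ∈ ZR f R, (analyticOrderNatAt f a : ℝ) * (1 / (z - a)).re) atTop
      (nhds (logDeriv f z).re) := by
  have ht : ∀ a, analyticOrderAt f a ≠ ⊤ := by
    intro a
    refine AnalyticOnNhd.analyticOrderAt_ne_top_of_isPreconnected (x := 1) (U := univ)
      (fun x _ => hf.analyticAt x) isPreconnected_univ (mem_univ _) (mem_univ _) ?_
    rw [((hf.analyticAt 1).analyticOrderAt_eq_zero).2 h1]; simp
  -- the variation tends to zero
  set S : ℕ → ℂ → ℝ := fun R z => ∑ a ∈ ZR f R, (analyticOrderNatAt f a : ℝ) * (1 / (z - a)).re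
    with hS
  have hSre : ∀ (R : ℕ) w, (∑ a ∈ ZR f R, (analyticOrderNatAt f a : ℂ) / (w - a)).re = S R w := by
    intro R w
    simp only [hS, Complex.re_sum]
    refine Finset.sum_congr rfl fun a _ => ?_
    rw [div_eq_mul_one_div, ← Complex.ofReal_natCast, Complex.re_ofReal_mul]
  have hvar : ∀ w, f w ≠ 0 → Tendsto (fun R : ℕ => ((logDeriv f w).re - S R w) -
      ((logDeriv f 1).re - S R 1)) atTop (nhds 0) := by
    intro w hw
    set K := |C| * 4 ^ (3/2 : ℝ) + |Real.log ‖f 1‖| + 1 with hK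
    have hKpos : 0 < K := by positivity
    have hbound : ∀ R : ℕ, 4 * ‖w - 1‖ < R → 1 ≤ R → ‖((logDeriv f w).re - S R w) -
      ((logDeriv f 1).re - S R 1)‖ ≤ 64 * K * ‖w - 1‖ * (R : ℝ) ^ (-(1/2) : ℝ) := by
      intro R hR hR1
      have hR1' : (1:ℝ) ≤ R := by exact_mod_cast hR1
      have hR0 : (0:ℝ) < R := by linarith
      have hv := logDeriv_sub_sum_variation hf ht h1 (R := R) (M := K * (R:ℝ) ^ (3/2 : ℝ)) hR0
        (by positivity) (by
          intro u hu
          refine (hgr u).trans ?_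
          have h1p : 0 < ‖f 1‖ := norm_pos_iff.2 h1
          rw [← Real.exp_log h1p, ← Real.exp_add]
          refine Real.exp_le_exp.2 ?_
          have hu2 : 1 + ‖u‖ ≤ 4 * R := by
            have : ‖u‖ ≤ ‖u - 1‖ + 1 := by
              calc ‖u‖ = ‖(u - 1) + 1‖ := by ring_nf
                _ ≤ _ := (norm_add_le _ _).trans (by simp)
            linarith
          have hp1 : (1:ℝ) ≤ (R:ℝ) ^ (3/2 : ℝ) := Real.one_le_rpow hR1' (by norm_num)
          have : C * (1 + ‖u‖) ^ (3/2 : ℝ) ≤ |C| * (4 ^ (3/2 : ℝ) * (R:ℝ) ^ (3/2 : ℝ)) := by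
            rw [← Real.mul_rpow (by norm_num) hR0.le]
            refine mul_le_mul (le_abs_self C) ?_ (by positivity) (abs_nonneg _)
            exact Real.rpow_le_rpow (by positivity) hu2 (by norm_num)
          have h3 : -|Real.log ‖f 1‖| ≤ Real.log ‖f 1‖ := neg_abs_le _
          have h4 : |Real.log ‖f 1‖| ≤ |Real.log ‖f 1‖| * (R:ℝ) ^ (3/2 : ℝ) :=
            le_mul_of_one_le_right (abs_nonneg _) hp1
          rw [hK]; nlinarith) (z := w) (by linarith) hw
      have h5 := (Complex.abs_re_le_norm _).trans hv
      rw [Complex.sub_re, Complex.sub_re, Complex.sub_re, hSre, hSre] at h5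
      rw [Real.norm_eq_abs]
      refine h5.trans (le_of_eq ?_)
      have : (R:ℝ) ^ (-(1/2) : ℝ) = (R:ℝ) ^ (3/2 : ℝ) / R ^ 2 := by
        rw [← Real.rpow_natCast, ← Real.rpow_sub hR0]; norm_num
      rw [this]; ring
    refine squeeze_zero_norm' (a := fun R : ℕ => 64 * K * ‖w - 1‖ * (R : ℝ) ^ (-(1/2) : ℝ)) ?_ ?_
    · filter_upwards [eventually_ge_atTop 1,
        tendsto_natCast_atTop_atTop.eventually_gt_atTop (4 * ‖w - 1‖)] with R h1 h2
      exact hbound R h2 h1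
    · have := ((tendsto_rpow_neg_atTop (y := 1/2) (by norm_num)).comp
        (tendsto_natCast_atTop_atTop (R := ℝ))).const_mul (64 * K * ‖w - 1‖)
      simpa using this
  -- symmetry
  have hSodd : ∀ R, S R (-1) = - S R 1 := by
    intro R
    simp only [hS]
    rw [← Finset.sum_neg_distrib]
    refine Finset.sum_congr rfl fun a ha => ?_
    have har := him a ((mem_ZR hf ht R a).1 ha).2
    simp [Complex.inv_re, Complex.normSq_apply, har]
    ring
  have hlodd : logDeriv f (-1) = - logDeriv f 1 := by
    have h2 : (fun z => f (-z)) = f := funext hev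
    have : deriv f (-1) = - deriv f 1 := by
      have h3 := deriv_comp_neg f (1:ℂ)
      rw [h2] at h3
      rw [h3]; ring
    rw [logDeriv_apply, logDeriv_apply, this, hev 1]; ring
  have hc : Tendsto (fun R : ℕ => (logDeriv f 1).re - S R 1) atTop (nhds 0) := by
    have := (hvar (-1) (by rw [hev]; exact h1)).const_mul (-(1/2))
    simp only [mul_zero] at this
    refine this.congr fun R => ?_
    rw [hSodd, hlodd, Complex.neg_re]; ring
  have hz := (hvar z hfz).add hc
  simp only [sub_add_cancel, add_zero] at hz
  have := (tendsto_const_nhds (x := (logDeriv f z).re)).sub hz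
  simp only [sub_sub_cancel, sub_zero] at this
  exact this

end SZC

namespace SZC

/-- shifted completed zeta function -/
def EE (z : ℂ) : ℂ := (1/4 - z^2) * completedRiemannZeta₀ (1/2 + z) - 1

lemma EE_diff : Differentiable ℂ EE := by
  unfold EE
  have := differentiable_completedZeta₀
  fun_prop

lemma EE_even (z : ℂ) : EE (-z) = EE z := by
  unfold EE
  have := completedRiemannZeta₀_one_sub (1/2 + z)
  rw [show (1:ℂ) - (1/2+z) = 1/2 + -z by ring] at this
  rw [this]; ring

lemma EE_eq_completed (s : ℂ) (h0 : s ≠ 0) (h1 : s ≠ 1) :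
    EE (s - 1/2) = s * (1-s) * completedRiemannZeta s := by
  have h2 : 1 - s ≠ 0 := sub_ne_zero.mpr (Ne.symm h1)
  unfold EE
  rw [completedRiemannZeta_eq, show (1:ℂ)/2 + (s - 1/2) = s by ring]
  field_simp
  ring

lemma EE_eq (s : ℂ) (h0 : 0 < s.re) (h1 : s ≠ 1) :
    EE (s - 1/2) = s * (1-s) * (Gammaℝ s * riemannZeta s) := by
  have hs : s ≠ 0 := by rintro rfl; simp at h0
  rw [EE_eq_completed s hs h1, riemannZeta_def_of_ne_zero hs]
  have := Gammaℝ_ne_zero_of_re_pos h0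
  field_simp

/-- Zeros correspond -/
lemma EE_zero_iff (s : ℂ) (h0 : 0 < s.re) (h1 : s ≠ 1) : EE (s - 1/2) = 0 ↔ riemannZeta s = 0 := by
  have hs : s ≠ 0 := by rintro rfl; simp at h0
  rw [EE_eq s h0 h1]
  have := Gammaℝ_ne_zero_of_re_pos h0
  have h2 : 1 - s ≠ 0 := sub_ne_zero.mpr (Ne.symm h1)
  simp [*]

lemma EE_half : EE (1/2) = -1 := by unfold EE; norm_num

lemma EE_ne_zero_of_half_le {z : ℂ} (h : 1/2 ≤ z.re) : EE z ≠ 0 := by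
  by_cases h1 : z = 1/2
  · rw [h1, EE_half]; norm_num
  · have : z = (z + 1/2) - 1/2 := by ring
    rw [this, Ne, EE_zero_iff _ (by simp; linarith) (by intro h2; apply h1; linear_combination h2)]
    exact riemannZeta_ne_zero_of_one_le_re (by simp; linarith)

lemma EE_one : EE 1 ≠ 0 := EE_ne_zero_of_half_le (by norm_num)

lemma EE_zero_strip {z : ℂ} (h : EE z = 0) : -(1/2) < z.re ∧ z.re < 1/2 := by
  constructor
  · by_contra h2
    refine EE_ne_zero_of_half_le (z := -z) (by simp; linarith) ?_
    rw [EE_even, h]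
  · by_contra h2
    exact EE_ne_zero_of_half_le (z := z) (by linarith) h

lemma EE_zero_nontriv {z : ℂ} : EE z = 0 ↔ ZetaNontrivZero (1/2 + z) := by
  constructor
  · intro h
    have h1 := EE_zero_strip h
    have hz : z = (1/2 + z) - 1/2 := by ring
    refine ⟨?_, by simp; linarith, by simp; linarith⟩
    rw [hz, EE_zero_iff] at h
    · exact h
    · simp; linarith
    · intro h2; have := congrArg Complex.re h2; simp at this; linarith
  · rintro ⟨h, h0, h1⟩
    have hz : z = (1/2 + z) - 1/2 := by ring
    rw [hz, EE_zero_iff _ h0]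
    · exact h
    · intro h2; rw [h2] at h1; simp at h1

lemma EE_zero_im (hRH : RiemannHypothesis) {z : ℂ} (h : EE z = 0) : z.re = 0 := by
  obtain ⟨h, h0, h1⟩ := EE_zero_nontriv.mp h
  have := hRH _ h (by
    rintro ⟨n, hn⟩
    rw [hn] at h0
    have h3 : ((-2 * ((n:ℂ)+1))).re = -2 * ((n:ℝ)+1) := by
      simp [Complex.mul_re]
    rw [h3] at h0
    have : (0:ℝ) ≤ n := Nat.cast_nonneg n
    linarith) (by intro h2; rw [h2] at h1; simp at h1)
  simp at this
  exact this

lemma EE_order_ne_top (a : ℂ) : analyticOrderAt EE a ≠ ⊤ := by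
  have han : AnalyticOnNhd ℂ EE Set.univ := fun z _ => EE_diff.analyticAt z
  intro h
  have := han.eqOn_zero_of_preconnected_of_eventuallyEq_zero isPreconnected_univ (Set.mem_univ a) (analyticOrderAt_eq_top.mp h)
  exact EE_one (this (Set.mem_univ 1))

lemma Gammaℝ_diffAt {s : ℂ} (hs : 0 < s.re) : DifferentiableAt ℂ Gammaℝ s := by
  have h1 := differentiable_Gammaℝ_inv s
  have h2 := h1.inv (inv_ne_zero (Gammaℝ_ne_zero_of_re_pos hs))
  have h3 : (fun s => (Gammaℝ s)⁻¹)⁻¹ = Gammaℝ := by ext s; simp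
  rwa [h3] at h2

lemma EE_mult {ρ : ℂ} (h0 : 0 < ρ.re) (h1 : ρ ≠ 1) :
    analyticOrderNatAt EE (ρ - 1/2) = zetaMult ρ := by
  have hζ : AnalyticAt ℂ riemannZeta ρ := by
    apply DifferentiableOn.analyticAt (s := {1}ᶜ)
    · exact fun z hz => (differentiableAt_riemannZeta hz).differentiableWithinAt
    · exact isOpen_compl_singleton.mem_nhds h1
  have key : analyticOrderAt EE (ρ - 1/2) = analyticOrderAt riemannZeta ρ := by
    have e1 : analyticOrderAt (EE ∘ (fun s => s - 1/2)) ρ = analyticOrderAt EE (ρ - 1/2) := by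
      rw [analyticOrderAt_comp_of_deriv_ne_zero (by fun_prop)]
      simp
    rw [← e1]
    have hg : AnalyticAt ℂ (fun s => s * (1-s) * Gammaℝ s) ρ := by
      apply DifferentiableOn.analyticAt (s := {s | 0 < s.re})
      · intro z hz
        apply DifferentiableAt.differentiableWithinAt
        apply DifferentiableAt.mul (by fun_prop)
        exact Gammaℝ_diffAt hz
      · exact (isOpen_lt continuous_const Complex.continuous_re).mem_nhds h0
    have hc : (EE ∘ (fun s => s - 1/2)) =ᶠ[nhds ρ] (fun s => s * (1-s) * Gammaℝ s) * riemannZeta := by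
      filter_upwards [(isOpen_lt continuous_const Complex.continuous_re).mem_nhds h0, isOpen_compl_singleton.mem_nhds h1] with s hs hs1
      simp only [Function.comp, Pi.mul_apply]
      rw [EE_eq s hs hs1]; ring
    rw [analyticOrderAt_congr hc, analyticOrderAt_mul hg hζ, (hg.analyticOrderAt_eq_zero).mpr, zero_add]
    have := Gammaℝ_ne_zero_of_re_pos h0
    have h2 : 1 - ρ ≠ 0 := sub_ne_zero.mpr (Ne.symm h1)
    have hs : ρ ≠ 0 := by rintro rfl; simp at h0
    simp [*]
  have ht : analyticOrderAt riemannZeta ρ ≠ ⊤ := key ▸ EE_order_ne_top _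
  rw [analyticOrderNatAt, key]
  obtain ⟨n, hn⟩ := ENat.ne_top_iff_exists.mp ht
  rw [← hn]
  have := (analyticOrderAt_eq_nat_iff_iteratedDeriv_eq_zero hζ (n := n)).mp hn.symm
  unfold zetaMult
  simp only [ENat.toNat_natCast]
  apply le_antisymm
  · apply le_csInf ⟨n, this.2⟩
    intro b hb
    by_contra hlt
    exact hb (this.1 b (by omega))
  · exact Nat.sInf_le this.2

lemma zerosUpTo_finite (T : ℝ) : (zerosUpTo T).Finite := by
  refine (Set.Finite.subset (zeros_finite EE_diff EE_order_ne_top (|T|+2)) (t := (fun ρ => ρ - 1/2) '' zerosUpTo T) ?_).of_finite_image ?_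
  · rintro _ ⟨ρ, ⟨hρ, h0, h1⟩, rfl⟩
    refine ⟨?_, ?_⟩
    · rw [Metric.mem_closedBall, dist_eq_norm]
      refine (Complex.norm_le_abs_re_add_abs_im _).trans ?_
      have h2 := hρ.2.1
      have h3 := hρ.2.2
      have h4 : |(ρ - 1/2 - 1 : ℂ).re| ≤ 2 := by
        rw [abs_le]; constructor <;> norm_num <;> linarith
      have h5 : |(ρ - 1/2 - 1 : ℂ).im| ≤ |T| := by
        have : (ρ - 1/2 - 1 : ℂ).im = ρ.im := by norm_num
        rw [this]; exact abs_le_abs_of_nonneg h0.le h1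
      linarith
    · rw [EE_zero_nontriv, show (1:ℂ)/2 + (ρ - 1/2) = ρ by ring]
      exact hρ
  · intro a _ b _ h
    simpa using h

end SZC

namespace SZC

lemma norm_Gamma_le {s : ℂ} (hs : 0 < s.re) : ‖Complex.Gamma s‖ ≤ Real.Gamma s.re := by
  rw [Complex.Gamma_eq_integral hs, Real.Gamma_eq_integral hs, Complex.GammaIntegral]
  refine (norm_integral_le_integral_norm _).trans (le_of_eq ?_)
  refine setIntegral_congr_fun measurableSet_Ioi ?_
  intro x hx
  simp only [norm_mul]
  rw [Complex.norm_cpow_eq_rpow_re_of_pos hx, Complex.norm_of_nonneg (Real.exp_pos _).le]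
  simp

lemma Gamma_le_exp {x : ℝ} (hx : 1 ≤ x) : Real.Gamma x ≤ Real.exp (2 * (x+1)^(3/2:ℝ)) := by
  have h1 : Real.Gamma x ≤ Real.Gamma (x+1) := by
    rw [Real.Gamma_add_one (by linarith)]
    have := Real.Gamma_pos_of_pos (s := x) (by linarith)
    nlinarith
  have h2 : Real.Gamma (x+1) ≤ Real.Gamma (⌈x⌉₊ + 1) := by
    apply Real.Gamma_strictMonoOn_Ici.monotoneOn
    · simp; linarith
    · have := Nat.le_ceil x
      simp; linarith
    · have := Nat.le_ceil x
      linarith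
  rw [Real.Gamma_nat_eq_factorial] at h2
  set n := ⌈x⌉₊
  have hn1 : (1:ℝ) ≤ n := hx.trans (Nat.le_ceil x)
  have hn : (n:ℝ) ≤ x + 1 := (Nat.ceil_lt_add_one (by linarith)).le
  have h3 : ((n.factorial : ℕ) : ℝ) ≤ (n:ℝ)^n := by exact_mod_cast Nat.factorial_le_pow n
  have h4 : (n:ℝ)^n = Real.exp (n * Real.log n) := by
    rw [mul_comm, Real.exp_mul, Real.exp_log (by linarith)]; simp
  have h5 : (n:ℝ) * Real.log n ≤ 2 * (x+1)^(3/2:ℝ) := by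
    have : Real.log n ≤ 2 * (x+1)^(1/2:ℝ) := by
      have h6 := Real.log_le_rpow_div (x := x+1) (ε := 1/2) (by linarith) (by norm_num)
      have h7 : Real.log n ≤ Real.log (x+1) := Real.log_le_log (by linarith) hn
      linarith
    have h8 : (x+1)^(3/2:ℝ) = (x+1) * (x+1)^(1/2:ℝ) := by
      rw [show (3/2:ℝ) = 1 + 1/2 by norm_num, Real.rpow_add (by linarith), Real.rpow_one]
    rw [h8]
    have h9 : 0 ≤ Real.log n := Real.log_nonneg hn1
    calc (n:ℝ) * Real.log n ≤ (x+1) * (2 * (x+1)^(1/2:ℝ)) := by gcongr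
      _ = _ := by ring
  calc Real.Gamma x ≤ (n:ℝ)^n := (h1.trans h2).trans h3
    _ ≤ _ := by rw [h4]; exact Real.exp_le_exp.mpr h5

lemma norm_zeta_le {s : ℂ} (hs : 2 ≤ s.re) : ‖riemannZeta s‖ ≤ ∑' n : ℕ, 1 / (n:ℝ)^2 := by
  rw [zeta_eq_tsum_one_div_nat_cpow (by linarith)]
  have hsum : Summable (fun n : ℕ => 1 / (n:ℝ)^2) := Real.summable_one_div_nat_pow.mpr (by norm_num)
  apply tsum_of_norm_bounded hsum.hasSum
  intro n
  rcases Nat.eq_zero_or_pos n with rfl | hn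
  · have : s ≠ 0 := by rintro rfl; norm_num at hs
    simp [this]
  · rw [norm_div, norm_one, Complex.norm_natCast_cpow_of_pos hn]
    have h1 : (1:ℝ) ≤ n := by exact_mod_cast hn
    apply one_div_le_one_div_of_le (by positivity)
    rw [← Real.rpow_natCast]
    exact Real.rpow_le_rpow_of_exponent_le h1 (by exact_mod_cast hs)

lemma completed_bound_right : ∃ C : ℝ, 0 < C ∧ ∀ s : ℂ, 2 ≤ s.re →
    ‖completedRiemannZeta s‖ ≤ C * Real.exp (2 * (‖s‖+1)^(3/2:ℝ)) := by
  refine ⟨∑' n : ℕ, 1 / (n:ℝ)^2 + 1, by positivity, fun s hs => ?_⟩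
  have hs0 : s ≠ 0 := by rintro rfl; norm_num at hs
  have h0 : 0 < s.re := by linarith
  have e : completedRiemannZeta s = Gammaℝ s * riemannZeta s := by
    rw [riemannZeta_def_of_ne_zero hs0]
    have := Gammaℝ_ne_zero_of_re_pos h0
    field_simp
  rw [e, norm_mul, mul_comm]
  have h1 := norm_zeta_le hs
  have h2 : ‖Gammaℝ s‖ ≤ Real.exp (2 * (‖s‖+1)^(3/2:ℝ)) := by
    rw [Gammaℝ_def, norm_mul, Complex.norm_cpow_eq_rpow_re_of_pos Real.pi_pos]
    have h3 : π ^ (-s/2).re ≤ 1 := by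
      apply Real.rpow_le_one_of_one_le_of_nonpos (by linarith [Real.pi_gt_three])
      simp; linarith
    have hre : (s/2).re = s.re/2 := by simp
    have h4 := norm_Gamma_le (s := s/2) (by rw [hre]; linarith)
    have h5 := Gamma_le_exp (x := (s/2).re) (by rw [hre]; linarith)
    have h6 : (s/2).re ≤ ‖s‖ := by
      rw [hre]; linarith [Complex.re_le_norm s]
    calc π ^ (-s/2).re * ‖Complex.Gamma (s/2)‖ ≤ 1 * Real.exp (2 * ((s/2).re+1)^(3/2:ℝ)) := by
          gcongr; exact h4.trans h5
      _ ≤ _ := by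
        rw [one_mul]
        have : 0 ≤ (s/2).re + 1 := by rw [hre]; linarith
        gcongr
  have h7 : 0 ≤ ∑' n : ℕ, 1 / (n:ℝ)^2 := by positivity
  gcongr
  linarith

lemma completed0_bound_strip : ∃ C : ℝ, 0 < C ∧ ∀ s : ℂ, 0 ≤ s.re → s.re ≤ 2 →
    ‖completedRiemannZeta₀ s‖ ≤ C := by
  set P := HurwitzZeta.hurwitzEvenFEPair 0
  have hm : ∀ s : ℂ, MellinConvergent P.f_modif s := fun s =>
    (P.isStrongFEPair_toStrongFEPair.hasMellin s).1
  have hI : ∀ σ : ℝ, IntegrableOn (fun x : ℝ => x^(σ-1) * ‖P.f_modif x‖) (Ioi 0) := by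
    intro σ
    have := (hm σ).norm
    refine IntegrableOn.congr_fun this ?_ measurableSet_Ioi
    intro x hx
    simp only [norm_smul]
    rw [Complex.norm_cpow_eq_rpow_re_of_pos hx]
    simp
  set J : ℝ := ∫ x in Ioi (0:ℝ), (x^((0:ℝ)-1) * ‖P.f_modif x‖ + x^((1:ℝ)-1) * ‖P.f_modif x‖) with hJ
  refine ⟨J/2 + 1, ?_, ?_⟩
  · have : 0 ≤ J := by
      rw [hJ]
      apply setIntegral_nonneg measurableSet_Ioi
      intro x hx
      have : (0:ℝ) < x := hx
      positivity
    linarith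
  intro s h0 h2
  have e : completedRiemannZeta₀ s = mellin P.f_modif (s/2) / 2 := rfl
  rw [e, norm_div]
  have : ‖mellin P.f_modif (s/2)‖ ≤ J := by
    rw [mellin, hJ]
    apply norm_integral_le_of_norm_le ((hI 0).add (hI 1))
    refine (ae_restrict_mem measurableSet_Ioi).mono ?_
    intro x hx
    have hx : (0:ℝ) < x := hx
    rw [norm_smul, Complex.norm_cpow_eq_rpow_re_of_pos hx]
    simp only [Pi.add_apply]
    rw [← add_mul]
    gcongr
    have hre : (s/2 - 1).re = s.re/2 - 1 := by simp
    rw [hre]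
    rcases le_total x 1 with h | h
    · have h3 := Real.rpow_le_rpow_of_exponent_ge hx h (show (0:ℝ)-1 ≤ s.re/2 - 1 by linarith)
      have h4 : 0 < x^((1:ℝ)-1) := by positivity
      exact h3.trans (le_add_of_nonneg_right h4.le)
    · have h3 := Real.rpow_le_rpow_of_exponent_le h (show s.re/2 - 1 ≤ (1:ℝ)-1 by linarith)
      have h4 : 0 < x^((0:ℝ)-1) := by positivity
      exact h3.trans (le_add_of_nonneg_left h4.le)
  norm_num at this ⊢
  linarith

lemma EE_growth : ∃ C : ℝ, ∀ z, ‖EE z‖ ≤ Real.exp (C*(1+‖z‖)^(3/2:ℝ)) := by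
  obtain ⟨C1, hC1, h1⟩ := completed_bound_right
  obtain ⟨C2, hC2, h2⟩ := completed0_bound_strip
  -- bound for right half plane
  have key : ∀ z : ℂ, -(1/2) ≤ z.re → ‖EE z‖ ≤ (C1 + C2 + 1) * (2+‖z‖)^2 * Real.exp (2 * (‖z‖+2)^(3/2:ℝ)) := by
    intro z hz
    have hz0 := norm_nonneg z
    have hexp : 1 ≤ Real.exp (2 * (‖z‖+2)^(3/2:ℝ)) := Real.one_le_exp (by positivity)
    rcases le_total (1/2 + z.re) 2 with h | h
    · have hb := h2 (1/2 + z) (by simp; linarith) (by simpa using h)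
      have : ‖EE z‖ ≤ (1/4 + ‖z‖^2) * C2 + 1 := by
        unfold EE
        refine (norm_sub_le _ _).trans ?_
        rw [norm_mul, norm_one]
        gcongr
        refine (norm_sub_le _ _).trans ?_
        simp
      calc ‖EE z‖ ≤ (1/4 + ‖z‖^2) * C2 + 1 := this
        _ ≤ (C1 + C2 + 1) * (2+‖z‖)^2 * 1 := by nlinarith
        _ ≤ _ := by gcongr
    · have hb := h1 (1/2 + z) (by simpa using h)
      have e : z = (1/2 + z) - 1/2 := by ring
      have hne0 : (1/2 + z) ≠ 0 := by
        intro h3; have := congrArg Complex.re h3; simp at this; linarith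
      have hne1 : (1/2 + z) ≠ 1 := by
        intro h3; have := congrArg Complex.re h3; simp at this; linarith
      have hn1 : ‖1/2 + z‖ ≤ 1 + ‖z‖ := by
        refine (norm_add_le _ _).trans ?_
        norm_num
      have hn2 : ‖1 - (1/2 + z)‖ ≤ 1 + ‖z‖ := by
        rw [show (1:ℂ) - (1/2+z) = 1/2 - z by ring]
        refine (norm_sub_le _ _).trans ?_
        norm_num
      rw [e, EE_eq_completed _ hne0 hne1, ← e, norm_mul, norm_mul]
      calc ‖1/2 + z‖ * ‖1 - (1/2+z)‖ * ‖completedRiemannZeta (1/2+z)‖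
          ≤ (2 + ‖z‖) * (2+‖z‖) * (C1 * Real.exp (2 * (‖z‖+2)^(3/2:ℝ))) := by
            gcongr
            · linarith
            · linarith
            · refine hb.trans ?_
              have : ‖1/2 + z‖ + 1 ≤ ‖z‖ + 2 := by linarith
              gcongr
        _ = C1 * (2+‖z‖)^2 * Real.exp (2 * (‖z‖+2)^(3/2:ℝ)) := by ring
        _ ≤ _ := by gcongr; linarith
  have key2 : ∀ z : ℂ, ‖EE z‖ ≤ (C1 + C2 + 1) * (2+‖z‖)^2 * Real.exp (2 * (‖z‖+2)^(3/2:ℝ)) := by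
    intro z
    rcases le_total (-(1/2)) z.re with h | h
    · exact key z h
    · have := key (-z) (by simp; linarith)
      rwa [EE_even, norm_neg] at this
  refine ⟨Real.log (C1 + C2 + 1) + 4 + 2 * 2^(3/2:ℝ), fun z => (key2 z).trans ?_⟩
  have hz0 := norm_nonneg z
  set r := 1 + ‖z‖
  have hr : 1 ≤ r := by simp [r]
  have hr1 : r ≤ r^(3/2:ℝ) := Real.self_le_rpow_of_one_le hr (by norm_num)
  have hlog : 0 ≤ Real.log (C1 + C2 + 1) := Real.log_nonneg (by linarith)
  have a1 : C1 + C2 + 1 ≤ Real.exp (Real.log (C1 + C2 + 1) * r^(3/2:ℝ)) := by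
    conv_lhs => rw [← Real.exp_log (show 0 < C1 + C2 + 1 by linarith)]
    apply Real.exp_le_exp.mpr
    nlinarith
  have a2 : (2+‖z‖)^2 ≤ Real.exp (4 * r^(3/2:ℝ)) := by
    have : 2 + ‖z‖ ≤ Real.exp (2 * r) := by
      have := Real.add_one_le_exp (2*r)
      have e : r = 1 + ‖z‖ := rfl
      linarith
    calc (2+‖z‖)^2 ≤ (Real.exp (2*r))^2 := by gcongr
      _ = Real.exp (4 * r) := by rw [← Real.exp_nat_mul]; congr 1; push_cast; ring
      _ ≤ _ := by gcongr
  have a3 : Real.exp (2 * (‖z‖+2)^(3/2:ℝ)) ≤ Real.exp (2 * 2^(3/2:ℝ) * r^(3/2:ℝ)) := by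
    apply Real.exp_le_exp.mpr
    rw [mul_assoc, ← Real.mul_rpow (by norm_num) (by linarith)]
    gcongr
    have e : r = 1 + ‖z‖ := rfl
    linarith
  calc (C1 + C2 + 1) * (2+‖z‖)^2 * Real.exp (2 * (‖z‖+2)^(3/2:ℝ)) ≤
    Real.exp (Real.log (C1 + C2 + 1) * r^(3/2:ℝ)) * Real.exp (4 * r^(3/2:ℝ)) * Real.exp (2 * 2^(3/2:ℝ) * r^(3/2:ℝ)) := by gcongr
    _ = _ := by rw [← Real.exp_add, ← Real.exp_add]; congr 1; ring

/-- the partial fraction for `EE` -/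
theorem EE_partial (hRH : RiemannHypothesis) {z : ℂ} (hz : 0 < z.re) :
    Tendsto (fun R:ℕ => ∑ a ∈ ZR EE R, (analyticOrderNatAt EE a : ℝ) * (1/(z-a)).re) atTop
      (nhds (logDeriv EE z).re) := by
  obtain ⟨C, hC⟩ := EE_growth
  refine partial_fraction EE_diff EE_even EE_one hC (fun a ha => EE_zero_im hRH ha) ?_
  intro h
  have := EE_zero_im hRH h
  linarith

end SZC

namespace SZC

lemma deriv_tendsto_of_bounded {f : ℕ → ℂ → ℂ} {g : ℂ → ℂ} {U : Set ℂ} (hU : IsOpen U) {c : ℂ}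
    {R M : ℝ} (hR : 0 < R) (hc : Metric.closedBall c R ⊆ U)
    (hf : ∀ᶠ n in atTop, DifferentiableOn ℂ (f n) U) (hg : DifferentiableOn ℂ g U)
    (hM : ∀ᶠ n in atTop, ∀ z ∈ Metric.sphere c R, ‖f n z‖ ≤ M)
    (hlim : ∀ z ∈ Metric.sphere c R, Tendsto (fun n => f n z) atTop (nhds (g z))) :
    Tendsto (fun n => deriv (f n) c) atTop (nhds (deriv g c)) := by
  have hball : c ∈ Metric.ball c R := Metric.mem_ball_self hR
  have e : ∀ h : ℂ → ℂ, DifferentiableOn ℂ h U →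
      deriv h c = (2 * π * I : ℂ)⁻¹ • ∮ w in C(c, R), ((w - c)^2)⁻¹ • h w := fun h hh =>
    (two_pi_I_inv_smul_circleIntegral_sub_sq_inv_smul_of_differentiable hU hc hh hball).symm
  rw [e g hg]
  have : Tendsto (fun n => (2 * π * I : ℂ)⁻¹ • ∮ w in C(c, R), ((w - c)^2)⁻¹ • f n w) atTop
      (nhds ((2 * π * I : ℂ)⁻¹ • ∮ w in C(c, R), ((w - c)^2)⁻¹ • g w)) := by
    apply Tendsto.const_smul
    unfold circleIntegral
    apply intervalIntegral.tendsto_integral_filter_of_dominated_convergence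
      (fun _ => R * ((R^2)⁻¹ * M))
    · filter_upwards [hf] with n hn
      apply ContinuousOn.aestronglyMeasurable _ measurableSet_uIoc
      apply Continuous.continuousOn
      have h1 : Continuous fun θ => f n (circleMap c R θ) :=
        hn.continuousOn.comp_continuous (continuous_circleMap c R)
          (fun θ => hc (circleMap_mem_closedBall c hR.le θ))
      have h2 : Continuous fun θ => ((circleMap c R θ - c)^2)⁻¹ := by
        apply Continuous.inv₀ (by fun_prop)
        intro θ
        simp [hR.ne']
      have h5 : Continuous fun θ => (circleMap 0 R θ * I) := by fun_prop
      have h6 := h5.smul (h2.smul h1)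
      simp only [deriv_circleMap]
      exact h6
    · filter_upwards [hM] with n hn
      refine Eventually.of_forall fun θ _ => ?_
      rw [norm_smul, norm_smul]
      have := hn _ (circleMap_mem_sphere c hR.le θ)
      have h3 : ‖((circleMap c R θ - c)^2)⁻¹‖ = (R^2)⁻¹ := by simp
      have h4 : ‖deriv (circleMap c R) θ‖ = R := by simp [abs_of_pos hR]
      rw [h3, h4]
      gcongr
    · exact intervalIntegrable_const
    · refine Eventually.of_forall fun θ _ => ?_
      exact ((hlim _ (circleMap_mem_sphere c hR.le θ)).const_smul _).const_smul _
  refine this.congr' ?_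
  filter_upwards [hf] with n hn
  exact (e _ hn).symm

lemma GammaSeq_norm_le {s : ℂ} (hs : 0 < s.re) {n : ℕ} (hn : n ≠ 0) :
    ‖GammaSeq s n‖ ≤ Real.Gamma s.re := by
  have hn0 : (0:ℝ) < n := by exact_mod_cast Nat.pos_of_ne_zero hn
  rw [GammaSeq_eq_approx_Gamma_integral hs hn, Real.Gamma_eq_integral hs,
    intervalIntegral.integral_of_le hn0.le]
  have hIntg := Real.GammaIntegral_convergent hs
  refine (norm_integral_le_of_norm_le (hIntg.mono_set Ioc_subset_Ioi_self) ?_).trans ?_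
  · refine (ae_restrict_mem measurableSet_Ioc).mono ?_
    intro x hx
    rw [norm_mul, Complex.norm_cpow_eq_rpow_re_of_pos hx.1]
    have h1 : 0 ≤ 1 - x/n := by
      rw [sub_nonneg, div_le_one hn0]; exact hx.2
    rw [Complex.norm_of_nonneg (by positivity)]
    have h2 := Real.one_sub_div_pow_le_exp_neg (n := n) (t := x) hx.2
    have : (s-1).re = s.re - 1 := by simp
    rw [this]
    have := hx.1
    gcongr
  · apply setIntegral_mono_set hIntg
    · refine (ae_restrict_mem measurableSet_Ioi).mono ?_
      intro x hx
      have : (0:ℝ) < x := hx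
      simp only [Pi.zero_apply]
      positivity
    · exact Ioc_subset_Ioi_self.eventuallyLE

lemma add_nat_ne {s : ℂ} (hs : 0 < s.re) (j : ℕ) : s + j ≠ 0 := by
  intro h
  have := congrArg Complex.re h
  simp at this
  have : (0:ℝ) ≤ j := Nat.cast_nonneg j
  linarith

lemma GammaSeq_diffAt {s : ℂ} (hs : 0 < s.re) {n : ℕ} (hn : n ≠ 0) :
    DifferentiableAt ℂ (fun s => Complex.GammaSeq s n) s := by
  unfold Complex.GammaSeq
  apply DifferentiableAt.div
  · apply DifferentiableAt.mul_const
    apply DifferentiableAt.const_cpow differentiableAt_id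
    left; exact_mod_cast hn
  · fun_prop
  · exact Finset.prod_ne_zero_iff.mpr fun j _ => add_nat_ne hs j

lemma GammaSeq_logDeriv {s : ℂ} (hs : 0 < s.re) {n : ℕ} (hn : n ≠ 0) :
    logDeriv (fun s => Complex.GammaSeq s n) s = Real.log n - ∑ j ∈ Finset.range (n+1), 1/(s+j) := by
  have hn0 : (n:ℂ) ≠ 0 := by exact_mod_cast hn
  unfold Complex.GammaSeq
  have hp : ∏ j ∈ Finset.range (n+1), (s + j) ≠ 0 :=
    Finset.prod_ne_zero_iff.mpr fun j _ => add_nat_ne hs j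
  have hd : DifferentiableAt ℂ (fun s : ℂ => (n:ℂ)^s) s := by
    apply DifferentiableAt.const_cpow differentiableAt_id
    left; exact hn0
  have hne : (n:ℂ)^s ≠ 0 := by simp [hn0]
  have hfac : ((n.factorial : ℕ):ℂ) ≠ 0 := by exact_mod_cast n.factorial_ne_zero
  rw [logDeriv_div (f := fun s : ℂ => (n:ℂ)^s * n.factorial) s (mul_ne_zero hne hfac) hp
    (hd.mul_const _) (by fun_prop)]
  rw [logDeriv_mul_const (f := fun s : ℂ => (n:ℂ)^s) s _ hfac]
  have e1 : logDeriv (fun s : ℂ => (n:ℂ)^s) s = Real.log n := by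
    rw [logDeriv_apply, ((hasDerivAt_id' s).const_cpow (Or.inl hn0)).deriv]
    simp [hn0]
  have e2 : logDeriv (fun s : ℂ => ∏ j ∈ Finset.range (n+1), (s + j)) s = ∑ j ∈ Finset.range (n+1), 1/(s+j) := by
    rw [logDeriv_prod (f := fun (j:ℕ) (s:ℂ) => s + j) (fun j _ => add_nat_ne hs j) (fun j _ => by fun_prop)]
    refine Finset.sum_congr rfl fun j _ => ?_
    simp [logDeriv_apply]
  rw [e1, e2]

lemma digamma_series {s : ℂ} (hs : 0 < s.re) :
    Tendsto (fun n : ℕ => (Real.log n : ℂ) - ∑ j ∈ Finset.range (n+1), 1/(s+j)) atTop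
      (nhds (digamma s)) := by
  have hU : IsOpen {s : ℂ | 0 < s.re} := isOpen_lt continuous_const Complex.continuous_re
  obtain ⟨R, hR, hc⟩ := Metric.nhds_basis_closedBall.mem_iff.mp (hU.mem_nhds hs)
  have hΓ : DifferentiableOn ℂ Complex.Gamma {s : ℂ | 0 < s.re} := by
    intro z hz
    apply (Complex.differentiableAt_Gamma _ _).differentiableWithinAt
    intro m hm
    apply add_nat_ne hz m
    rw [hm]; simp
  have hcont : ContinuousOn (fun z : ℂ => Real.Gamma z.re) (Metric.closedBall s R) := by
    intro z hz
    apply ContinuousAt.continuousWithinAt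
    have h1 : ContinuousAt Real.Gamma z.re := by
      apply (Real.differentiableAt_Gamma _).continuousAt
      intro m hm
      have h2 : 0 < z.re := hc hz
      rw [hm] at h2
      have : (0:ℝ) ≤ m := Nat.cast_nonneg m
      linarith
    exact ContinuousAt.comp (f := Complex.re) h1 Complex.continuous_re.continuousAt
  obtain ⟨M, hM⟩ := (isCompact_closedBall s R).exists_bound_of_continuousOn hcont
  have h := deriv_tendsto_of_bounded (f := fun n s => Complex.GammaSeq s n) (g := Complex.Gamma) hU (M := M) hR hc ?_ hΓ ?_ ?_
  · have h2 := h.div (GammaSeq_tendsto_Gamma s) (Complex.Gamma_ne_zero_of_re_pos hs)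
    refine h2.congr' ?_
    filter_upwards [eventually_ne_atTop 0] with n hn
    rw [← GammaSeq_logDeriv hs hn]; rfl
  · filter_upwards [eventually_ne_atTop 0] with n hn
    exact fun z hz => (GammaSeq_diffAt hz hn).differentiableWithinAt
  · filter_upwards [eventually_ne_atTop 0] with n hn z hz
    have hz' := Metric.sphere_subset_closedBall hz
    exact (GammaSeq_norm_le (hc hz') hn).trans ((le_abs_self _).trans (hM z hz'))
  · exact fun z _ => GammaSeq_tendsto_Gamma z

lemma log_step {w : ℂ} (hw : 0 < w.re) : ‖Complex.log (w+1) - Complex.log w - 1/w‖ ≤ 1/‖w‖^2 := by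
  have hw0 : w ≠ 0 := by rintro rfl; simp at hw
  have hd : ∀ u ∈ Icc (0:ℝ) 1, HasDerivWithinAt (fun u : ℝ => Complex.log (w+u) - u * (1/w))
      (1/(w+u) - 1/w) (Icc 0 1) u := by
    intro u hu
    apply HasDerivAt.hasDerivWithinAt
    have h1 : HasDerivAt (fun u : ℝ => w + (u:ℂ)) 1 u := (Complex.ofRealCLM.hasDerivAt (x := u)).const_add w
    have h2 : w + (u:ℂ) ∈ slitPlane := by
      left; simp; linarith [hu.1]
    have h3 := h1.clog_real h2
    have h4 : HasDerivAt (fun u : ℝ => (u:ℂ) * (1/w)) (1 * (1/w)) u := (Complex.ofRealCLM.hasDerivAt (x := u)).mul_const _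
    have h5 := h3.sub h4
    rw [one_mul] at h5
    exact h5
  have := norm_image_sub_le_of_norm_deriv_le_segment_01' hd (C := 1/‖w‖^2) ?_
  · refine le_trans (le_of_eq ?_) this
    congr 1
    push_cast; simp; ring
  · intro u hu
    have hwu : ‖w‖ ≤ ‖w + u‖ := by
      rw [Complex.norm_def, Complex.norm_def]
      apply Real.sqrt_le_sqrt
      simp [Complex.normSq_apply]
      nlinarith [hu.1]
    have hwu0 : w + u ≠ 0 := by
      intro h; rw [h] at hwu; simp at hwu; exact hw0 hwu
    have h0 : 0 < ‖w‖ := norm_pos_iff.mpr hw0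
    rw [show 1/(w+u) - 1/w = -u/((w+u)*w) by field_simp; ring, norm_div, norm_mul, norm_neg,
      Complex.norm_of_nonneg hu.1]
    apply div_le_div₀ zero_le_one hu.2.le (by positivity)
    rw [sq]; gcongr

lemma digamma_bound : ∃ C : ℝ, 0 < C ∧ ∀ s : ℂ, 1/4 ≤ s.re → ‖digamma s - Complex.log s‖ ≤ C := by
  have hsum : Summable (fun j : ℕ => 1/((j:ℝ) + 1/4)^2) := by
    have := (Real.summable_one_div_nat_add_rpow (1/4) 2).mpr (by norm_num)
    refine this.congr fun j => ?_
    rw [abs_of_pos (by positivity)]; norm_cast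
  refine ⟨∑' j : ℕ, 1/((j:ℝ) + 1/4)^2 + 1, by positivity, fun s hs => ?_⟩
  have hs0 : 0 < s.re := by linarith
  have hbound : ∀ n : ℕ, ‖∑ j ∈ Finset.range (n+1), (Complex.log (s+(j+1:ℕ)) - Complex.log (s+j) - 1/(s+j))‖ ≤
      ∑' j : ℕ, 1/((j:ℝ) + 1/4)^2 := by
    intro n
    refine (norm_sum_le _ _).trans ((Finset.sum_le_sum fun j _ => ?_).trans (hsum.sum_le_tsum (Finset.range (n+1)) fun j _ => by positivity))
    have h1 := log_step (w := s + j) (by simp; positivity)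
    rw [show s + (j+1:ℕ) = s + j + 1 by push_cast; ring]
    refine h1.trans ?_
    have h2 : (j:ℝ) + 1/4 ≤ ‖s + j‖ := by
      refine le_trans ?_ (Complex.re_le_norm _)
      simp; linarith
    gcongr
  have hlim : Tendsto (fun n : ℕ => Complex.log (s + (n+1:ℕ)) - Real.log n) atTop (nhds 0) := by
    have h1 : Tendsto (fun n : ℕ => Complex.log ((s+1)/n + 1)) atTop (nhds (Complex.log 1)) := by
      apply Filter.Tendsto.clog _ (by simp)
      have : Tendsto (fun n : ℕ => (s+1)/(n:ℂ)) atTop (nhds 0) := tendsto_const_div_atTop_nhds_zero_nat _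
      simpa using this.add_const 1
    rw [Complex.log_one] at h1
    refine h1.congr' ?_
    filter_upwards [eventually_gt_atTop 0] with n hn
    have hn0 : (0:ℝ) < n := by exact_mod_cast hn
    have hnc : (n:ℂ) ≠ 0 := by exact_mod_cast hn.ne'
    have : s + (n+1:ℕ) = ((n:ℝ):ℂ) * ((s+1)/n + 1) := by
      push_cast; field_simp; ring
    rw [this, Complex.log_ofReal_mul hn0]
    · ring
    · have h5 : (s+1)/n + 1 = (s + (n+1:ℕ)) / n := by push_cast; field_simp; ring
      rw [h5]
      exact div_ne_zero (add_nat_ne hs0 _) hnc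
  have hlim2 := ((digamma_series hs0).sub_const (Complex.log s)).add hlim
  rw [add_zero] at hlim2
  have h3 : ∀ n : ℕ, (Real.log n : ℂ) - ∑ j ∈ Finset.range (n+1), 1/(s+j) - Complex.log s + (Complex.log (s + (n+1:ℕ)) - Real.log n) = ∑ j ∈ Finset.range (n+1), (Complex.log (s+(j+1:ℕ)) - Complex.log (s+j) - 1/(s+j)) := by
    intro n
    rw [Finset.sum_sub_distrib, Finset.sum_range_sub (fun j : ℕ => Complex.log (s + j))]
    simp; ring
  have := le_of_tendsto hlim2.norm (Eventually.of_forall fun n => by rw [h3]; exact hbound n)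
  linarith

end SZC

namespace SZC

/-- log derivative of the completed zeta function -/
def FD (z : ℂ) : ℂ := logDeriv EE z

/-- archimedean part -/
def AA (z : ℂ) : ℂ := 1/(1/2+z) - (Real.log π : ℂ)/2 + digamma ((1/2+z)/2)/2

/-- arithmetic part -/
def GG (z : ℂ) : ℂ := FD z - AA z

lemma EE_ne_zero (hRH : RiemannHypothesis) {z : ℂ} (hz : 0 < z.re) : EE z ≠ 0 := fun h => by
  have := EE_zero_im hRH h
  linarith

lemma FD_diffAt (hRH : RiemannHypothesis) {z : ℂ} (hz : 0 < z.re) : DifferentiableAt ℂ FD z := by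
  unfold FD
  have h1 : DifferentiableAt ℂ (deriv EE) z := (EE_diff.analyticAt z).deriv.differentiableAt
  exact h1.div (EE_diff z) (EE_ne_zero hRH hz)

lemma digamma_diffAt {z : ℂ} (hz : 0 < z.re) : DifferentiableAt ℂ digamma z := by
  have hU : IsOpen {s : ℂ | 0 < s.re} := isOpen_lt continuous_const Complex.continuous_re
  have hΓ : DifferentiableOn ℂ Complex.Gamma {s : ℂ | 0 < s.re} := by
    intro z hz
    apply (Complex.differentiableAt_Gamma _ _).differentiableWithinAt
    intro m hm
    apply add_nat_ne hz m
    rw [hm]; simp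
  have h1 : DifferentiableAt ℂ (deriv Complex.Gamma) z := (hΓ.analyticAt (hU.mem_nhds hz)).deriv.differentiableAt
  exact h1.div (hΓ.differentiableAt (hU.mem_nhds hz)) (Complex.Gamma_ne_zero_of_re_pos hz)

lemma AA_diffAt {z : ℂ} (hz : 0 ≤ z.re) : DifferentiableAt ℂ AA z := by
  unfold AA
  have h0 : (1/2:ℂ) + z ≠ 0 := by
    intro h; have := congrArg Complex.re h; simp at this; linarith
  have h1 : DifferentiableAt ℂ digamma ((1/2+z)/2) := digamma_diffAt (by simp; linarith)
  have h2 : DifferentiableAt ℂ (fun z : ℂ => digamma ((1/2+z)/2)) z :=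
    DifferentiableAt.comp z (f := fun z : ℂ => (1/2+z)/2) h1 (by fun_prop)
  fun_prop (disch := exact h0)

lemma GG_diffAt (hRH : RiemannHypothesis) {z : ℂ} (hz : 0 < z.re) : DifferentiableAt ℂ GG z :=
  (FD_diffAt hRH hz).sub (AA_diffAt hz.le)

lemma Gammaℝ_logDeriv {s : ℂ} (hs : 0 < s.re) :
    logDeriv Gammaℝ s = - (Real.log π : ℂ)/2 + digamma (s/2)/2 := by
  have hs2 : 0 < (s/2).re := by simp; linarith
  have hπ : (π:ℂ) ≠ 0 := by exact_mod_cast Real.pi_ne_zero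
  have hΓ : DifferentiableAt ℂ Complex.Gamma (s/2) := by
    apply Complex.differentiableAt_Gamma
    intro m hm
    apply add_nat_ne hs2 m
    rw [hm]; simp
  have hd1 : HasDerivAt (fun s : ℂ => (π:ℂ)^(-s/2)) ((π:ℂ)^(-s/2) * Complex.log π * (-1/2)) s := by
    apply HasDerivAt.const_cpow _ (Or.inl hπ)
    exact (hasDerivAt_id' s).neg.div_const 2
  have hd2 : HasDerivAt (fun s : ℂ => Complex.Gamma (s/2)) (deriv Complex.Gamma (s/2) * (1/2)) s :=
    hΓ.hasDerivAt.comp s ((hasDerivAt_id' s).div_const 2)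
  have e : Gammaℝ = fun s => (π:ℂ)^(-s/2) * Complex.Gamma (s/2) := by
    ext s; rw [Gammaℝ_def]
  have hne : (π:ℂ)^(-s/2) ≠ 0 := by simp [hπ]
  rw [e, logDeriv_mul (f := fun s : ℂ => (π:ℂ)^(-s/2)) (g := fun s : ℂ => Complex.Gamma (s/2)) s hne (Complex.Gamma_ne_zero_of_re_pos hs2) hd1.differentiableAt hd2.differentiableAt,
    logDeriv_apply, logDeriv_apply, hd1.deriv, hd2.deriv, digamma_def, logDeriv_apply,
    Complex.ofReal_log Real.pi_pos.le]
  have := Complex.Gamma_ne_zero_of_re_pos hs2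
  field_simp

lemma GG_eq {z : ℂ} (hz : 1/2 < z.re) :
    GG z = 1/(z - 1/2) - LSeries (fun n => (ArithmeticFunction.vonMangoldt n : ℂ)) (1/2 + z) := by
  set s := 1/2 + z with hs
  have hsre : 1 < s.re := by rw [hs]; simp; linarith
  rw [ArithmeticFunction.LSeries_vonMangoldt_eq_deriv_riemannZeta_div hsre]
  have hs0 : s ≠ 0 := by intro h; rw [h] at hsre; norm_num at hsre
  have hs1 : s ≠ 1 := by intro h; rw [h] at hsre; norm_num at hsre
  have h1s : 1 - s ≠ 0 := sub_ne_zero.mpr hs1.symm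
  have hζ : riemannZeta s ≠ 0 := riemannZeta_ne_zero_of_one_le_re hsre.le
  have hG := Gammaℝ_ne_zero_of_re_pos (s := s) (by linarith)
  have hGd := Gammaℝ_diffAt (s := s) (by linarith)
  have hζd := differentiableAt_riemannZeta hs1
  have hev : EE =ᶠ[nhds z] (fun w => (fun s => s * (1-s) * (Gammaℝ s * riemannZeta s)) (1/2 + w)) := by
    have : {w : ℂ | 1/2 < w.re} ∈ nhds z := (isOpen_lt continuous_const Complex.continuous_re).mem_nhds hz
    filter_upwards [this] with w hw
    have hw : 1/2 < w.re := hw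
    have e := EE_eq (1/2 + w) (by simp; linarith) (by
      intro h; have := congrArg Complex.re h; simp at this; linarith)
    rw [show (1/2 + w) - 1/2 = w by ring] at e
    exact e
  have e1 : FD z = logDeriv (fun s => s * (1-s) * (Gammaℝ s * riemannZeta s)) s := by
    unfold FD
    rw [(logDeriv_congr_nhds hev).eq_of_nhds, logDeriv_apply, logDeriv_apply,
      deriv_comp_const_add (f := fun s => s * (1-s) * (Gammaℝ s * riemannZeta s))]
  have d1 : DifferentiableAt ℂ (fun s : ℂ => s * (1-s)) s := by fun_prop
  have e2 : logDeriv (fun s : ℂ => s * (1-s)) s = 1/s - 1/(1-s) := by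
    rw [logDeriv_mul (f := fun s : ℂ => s) (g := fun s : ℂ => 1 - s) s hs0 h1s (by fun_prop) (by fun_prop)]
    simp [logDeriv_apply]
    ring
  rw [logDeriv_mul (f := fun s : ℂ => s * (1-s)) (g := fun s => Gammaℝ s * riemannZeta s) s
    (mul_ne_zero hs0 h1s) (mul_ne_zero hG hζ) d1 (hGd.mul hζd), e2,
    logDeriv_mul (f := Gammaℝ) (g := riemannZeta) s hG hζ hGd hζd, Gammaℝ_logDeriv (by linarith)] at e1
  unfold GG AA
  rw [e1, ← hs, show z - 1/2 = -(1 - s) by rw [hs]; ring, logDeriv_apply]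
  rw [div_neg]
  ring

lemma re_one_div_sub {z a : ℂ} (ha : a.re = 0) : (1/(z-a)).re = z.re / Complex.normSq (z-a) := by
  simp [Complex.inv_re, ha]

lemma re_one_div_nonneg {z a : ℂ} (hz : 0 < z.re) (ha : a.re = 0) : 0 ≤ (1/(z-a)).re := by
  rw [re_one_div_sub ha]; exact div_nonneg hz.le (Complex.normSq_nonneg _)

lemma FD_re_ge (hRH : RiemannHypothesis) {z : ℂ} (hz : 0 < z.re) (S : Finset ℂ)
    (hS : ∀ a ∈ S, EE a = 0) :
    ∑ a ∈ S, (analyticOrderNatAt EE a : ℝ) * (1/(z-a)).re ≤ (FD z).re := by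
  apply ge_of_tendsto (EE_partial hRH hz)
  obtain ⟨N, hN⟩ : ∃ N : ℕ, ∀ a ∈ S, ‖a - 1‖ ≤ N := by
    obtain ⟨N, hN⟩ := exists_nat_ge (∑ a ∈ S, ‖a-1‖)
    exact ⟨N, fun a ha => (Finset.single_le_sum (f := fun a => ‖a-1‖) (fun _ _ => norm_nonneg _) ha).trans hN⟩
  filter_upwards [eventually_ge_atTop N] with R hR
  apply Finset.sum_le_sum_of_subset_of_nonneg
  · intro a ha
    rw [mem_ZR EE_diff EE_order_ne_top]
    exact ⟨(hN a ha).trans (by exact_mod_cast hR), hS a ha⟩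
  · intro a ha _
    rw [mem_ZR EE_diff EE_order_ne_top] at ha
    exact mul_nonneg (Nat.cast_nonneg _) (re_one_div_nonneg hz (EE_zero_im hRH ha.2))

lemma FD_re_nonneg (hRH : RiemannHypothesis) {z : ℂ} (hz : 0 < z.re) : 0 ≤ (FD z).re := by
  simpa using FD_re_ge hRH hz ∅ (by simp)

lemma AA_bound : ∃ C : ℝ, 0 < C ∧ ∀ z : ℂ, 0 ≤ z.re →
    ‖AA z‖ ≤ C + Real.log (1+‖z‖) ∧ |(AA z).re - Real.log (1+‖z‖)/2| ≤ C := by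
  obtain ⟨C, hC, h⟩ := digamma_bound
  refine ⟨C + Real.log π + Real.log 6 + 10, by
    have := Real.log_pos (show (1:ℝ) < 6 by norm_num)
    have := Real.log_pos (show (1:ℝ) < π by linarith [Real.pi_gt_three])
    linarith, fun z hz => ?_⟩
  set s := 1/2 + z with hs
  have hsre : 1/2 ≤ s.re := by rw [hs]; simp; linarith
  have h1 := h (s/2) (by simp; linarith)
  have hs1 : 1/2 ≤ ‖s‖ := hsre.trans (Complex.re_le_norm s)
  have hs2 : ‖z‖ ≤ ‖s‖ := by
    rw [Complex.norm_def, Complex.norm_def]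
    apply Real.sqrt_le_sqrt
    rw [hs]
    simp [Complex.normSq_apply]
    nlinarith
  have hs3 : ‖s‖ ≤ 1 + ‖z‖ := by
    rw [hs]; refine (norm_add_le _ _).trans ?_
    norm_num
  have hz0 := norm_nonneg z
  have hnorm : ‖s/2‖ = ‖s‖/2 := by simp
  have hlog6 : 0 < Real.log 6 := Real.log_pos (by norm_num)
  have l1 : Real.log ‖s/2‖ ≤ Real.log (1+‖z‖) := by
    rw [hnorm]; apply Real.log_le_log (by linarith); linarith
  have l2 : Real.log (1+‖z‖) - Real.log 6 ≤ Real.log ‖s/2‖ := by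
    rw [hnorm, ← Real.log_div (by linarith) (by norm_num)]
    apply Real.log_le_log (by positivity); linarith
  have l0 : 0 ≤ Real.log (1+‖z‖) := Real.log_nonneg (by linarith)
  have hπ : 0 < Real.log π := Real.log_pos (by linarith [Real.pi_gt_three])
  have e : AA z = 1/s - (Real.log π : ℂ)/2 + (digamma (s/2) - Complex.log (s/2))/2 + Complex.log (s/2)/2 := by
    unfold AA; rw [← hs]; ring
  have hr : ‖1/s - (Real.log π : ℂ)/2 + (digamma (s/2) - Complex.log (s/2))/2‖ ≤ 2 + Real.log π/2 + C/2 := by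
    refine (norm_add_le _ _).trans (add_le_add ((norm_sub_le _ _).trans (add_le_add ?_ ?_)) ?_)
    · rw [norm_div, norm_one, div_le_iff₀ (by linarith)]; linarith
    · rw [norm_div, Complex.norm_of_nonneg hπ.le]; simp
    · rw [norm_div]; simp; linarith
  have hlre : (Complex.log (s/2)).re = Real.log ‖s/2‖ := Complex.log_re _
  constructor
  · rw [e]
    refine (norm_add_le _ _).trans ?_
    have : ‖Complex.log (s/2)/2‖ ≤ (Real.log (1+‖z‖) + Real.log 6 + 4)/2 := by
      rw [norm_div]
      have h5 : ‖Complex.log (s/2)‖ ≤ Real.log (1+‖z‖) + Real.log 6 + 4 := by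
        refine (Complex.norm_le_abs_re_add_abs_im _).trans ?_
        have h6 : |(Complex.log (s/2)).im| ≤ 4 := by
          rw [Complex.log_im]; exact (Complex.abs_arg_le_pi _).trans Real.pi_le_four
        have h7 : |(Complex.log (s/2)).re| ≤ Real.log (1+‖z‖) + Real.log 6 := by
          rw [hlre, abs_le]; constructor <;> linarith
        linarith
      simp; linarith
    linarith
  · rw [e, Complex.add_re]
    have h8 := (Complex.abs_re_le_norm _).trans hr
    have h9 : (Complex.log (s/2)/2).re = Real.log ‖s/2‖/2 := by
      rw [← hlre]; simp
    rw [h9]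
    rw [abs_le] at h8 ⊢
    constructor <;> linarith

/-- growth of a function with nonnegative real part on the right half plane -/
lemma halfplane_growth {f : ℂ → ℂ} (hf : ∀ z : ℂ, 0 < z.re → DifferentiableAt ℂ f z)
    (hre : ∀ z : ℂ, 0 < z.re → 0 ≤ (f z).re) :
    ∃ C : ℝ, 0 < C ∧ ∀ z : ℂ, 0 < z.re → ‖f z‖ ≤ C * (1+‖z‖)^2/z.re := by
  set p := f 1 + 1 with hp
  have hpre : 1 ≤ p.re := by
    have := hre 1 (by simp)
    rw [hp]; simp; linarith
  -- the map to the disc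
  set φ : ℂ → ℂ := fun z => (f z + 1 - p)/(f z + 1 + (starRingEnd ℂ) p) with hφ
  have hden : ∀ z : ℂ, 0 < z.re → f z + 1 + (starRingEnd ℂ) p ≠ 0 := by
    intro z hz h
    have := congrArg Complex.re h
    have h2 := hre z hz
    simp at this
    linarith
  have hφ1 : ∀ z : ℂ, 0 < z.re → ‖φ z‖ < 1 := by
    intro z hz
    rw [hφ]
    simp only [norm_div]
    rw [div_lt_one (norm_pos_iff.mpr (hden z hz)), Complex.norm_def, Complex.norm_def]
    apply Real.sqrt_lt_sqrt (Complex.normSq_nonneg _)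
    have h2 := hre z hz
    simp [Complex.normSq_apply]
    nlinarith
  -- Cayley
  set c : ℂ → ℂ := fun w => (1+w)/(1-w) with hc
  have hc1 : ∀ w : ℂ, ‖w‖ < 1 → 1 - w ≠ 0 := by
    intro w hw h
    have : w = 1 := by linear_combination -h
    rw [this] at hw; simp at hw
  have hcre : ∀ w : ℂ, ‖w‖ < 1 → 0 < (c w).re := by
    intro w hw
    have h3 : Complex.normSq w < 1 := by
      rw [Complex.normSq_eq_norm_sq]; nlinarith [norm_nonneg w]
    have h4 : 0 < Complex.normSq (1-w) := Complex.normSq_pos.mpr (hc1 w hw)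
    rw [hc]
    simp only [Complex.div_re]
    rw [← add_div]
    apply div_pos _ h4
    simp [Complex.normSq_apply] at h3 ⊢
    nlinarith
  have hmaps : MapsTo (φ ∘ c) (Metric.ball 0 1) (Metric.ball 0 1) := by
    intro w hw
    simp at hw ⊢
    exact hφ1 _ (hcre w hw)
  have hdiff : DifferentiableOn ℂ (φ ∘ c) (Metric.ball 0 1) := by
    intro w hw
    simp at hw
    apply DifferentiableAt.differentiableWithinAt
    apply DifferentiableAt.comp
    · have h5 := hf _ (hcre w hw)
      exact ((h5.add_const 1).sub_const p).div ((h5.add_const 1).add_const _) (hden _ (hcre w hw))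
    · rw [hc]
      apply DifferentiableAt.div (by fun_prop) (by fun_prop) (hc1 w hw)
  have h00 : (φ ∘ c) 0 = 0 := by simp [hφ, hc, hp]
  have hsch : ∀ w : ℂ, ‖w‖ < 1 → ‖φ (c w)‖ ≤ ‖w‖ := by
    intro w hw
    exact Complex.norm_le_norm_of_mapsTo_ball hdiff (by simpa using hmaps.mono_right Metric.ball_subset_closedBall) h00 hw
  refine ⟨4 * ‖p‖ + 1, by positivity, fun z hz => ?_⟩
  set w := (z-1)/(z+1) with hw
  have hz1 : z + 1 ≠ 0 := by
    intro h; have := congrArg Complex.re h; simp at this; linarith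
  have hcw : c w = z := by
    rw [hc, hw]; 
    have : (1:ℂ) - (z-1)/(z+1) = 2/(z+1) := by field_simp; ring
    simp only [this]
    field_simp; ring
  have hz1n : 0 < ‖z+1‖ := norm_pos_iff.mpr hz1
  have hwn : ‖w‖ ≤ 1 - 2*z.re/‖z+1‖^2 := by
    -- norm squared
    have h6 : ‖w‖^2 = 1 - 4*z.re/‖z+1‖^2 := by
      rw [hw, norm_div, div_pow, ← Complex.normSq_eq_norm_sq, ← Complex.normSq_eq_norm_sq]
      have : 0 < Complex.normSq (z+1) := Complex.normSq_pos.mpr hz1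
      field_simp
      simp [Complex.normSq_apply]; ring
    have h8 : 0 ≤ 2*z.re/‖z+1‖^2 := by positivity
    have h9 : 4*z.re/‖z+1‖^2 = 2 * (2*z.re/‖z+1‖^2) := by ring
    rw [h9] at h6
    nlinarith [norm_nonneg w, sq_nonneg (‖w‖-1)]
  have hq : 0 < 2*z.re/‖z+1‖^2 := by positivity
  have hw1 : ‖w‖ < 1 := by linarith
  have h10 := hsch w hw1
  rw [hcw] at h10
  have h11 : (f z + 1) * (1 - φ z) = p + φ z * (starRingEnd ℂ) p := by
    have := hden z hz
    simp only [hφ]; field_simp; ring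
  have h12 : ‖f z + 1‖ * (1 - ‖φ z‖) ≤ 2 * ‖p‖ := by
    calc ‖f z + 1‖ * (1 - ‖φ z‖) ≤ ‖f z + 1‖ * ‖1 - φ z‖ := by
          gcongr
          have := norm_sub_norm_le 1 (φ z)
          simpa using this
      _ = ‖p + φ z * (starRingEnd ℂ) p‖ := by rw [← norm_mul, h11]
      _ ≤ ‖p‖ + ‖φ z‖ * ‖p‖ := by
          refine (norm_add_le _ _).trans ?_
          rw [norm_mul, RCLike.norm_conj]
      _ ≤ 2 * ‖p‖ := by nlinarith [norm_nonneg p, hφ1 z hz]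
  have h13 : ‖f z + 1‖ * (2*z.re/‖z+1‖^2) ≤ 2 * ‖p‖ := by
    refine le_trans ?_ h12
    gcongr; linarith
  have h14 : ‖z+1‖ ≤ 1 + ‖z‖ := by
    refine (norm_add_le _ _).trans ?_; simp [add_comm]
  have h15 : ‖f z + 1‖ ≤ ‖p‖ * (1+‖z‖)^2/z.re := by
    rw [le_div_iff₀ hz]
    have h16 : ‖f z + 1‖ * z.re ≤ ‖p‖ * ‖z+1‖^2 := by
      rw [mul_div_assoc', div_le_iff₀ (by positivity)] at h13
      linarith
    exact h16.trans (by gcongr)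
  have h17 : ‖f z‖ ≤ ‖f z + 1‖ + 1 := by
    have := norm_sub_le (f z + 1) 1
    simpa using this
  have h18 : 1 ≤ (1+‖z‖)^2/z.re := by
    rw [le_div_iff₀ hz]
    have := Complex.re_le_norm z
    nlinarith
  calc ‖f z‖ ≤ ‖p‖ * (1+‖z‖)^2/z.re + (1+‖z‖)^2/z.re := by linarith
    _ = (‖p‖ + 1) * ((1+‖z‖)^2/z.re) := by ring
    _ ≤ (4*‖p‖ + 1) * ((1+‖z‖)^2/z.re) := by gcongr; linarith [norm_nonneg p]
    _ = _ := by ring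

end SZC

namespace SZC

lemma integrable_line {f : ℂ → ℂ} {a C : ℝ} (hf : ∀ z : ℂ, z.re = a → DifferentiableAt ℂ f z)
    (hC : ∀ z : ℂ, z.re = a → ‖f z‖ ≤ C/(1+z.im^2)) : Integrable (fun t : ℝ => f (a + t*I)) := by
  have hIntg : Integrable (fun t : ℝ => C * (1+t^2)⁻¹) := integrable_inv_one_add_sq.const_mul C
  apply hIntg.mono'
  · apply Continuous.aestronglyMeasurable
    rw [continuous_iff_continuousAt]
    intro t
    exact ContinuousAt.comp (f := fun t : ℝ => (a + t*I : ℂ)) (hf _ (by simp)).continuousAt (by fun_prop)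
  · refine Eventually.of_forall fun t => ?_
    have := hC (a + t*I) (by simp)
    simpa [div_eq_mul_inv] using this

theorem vertical_shift {f : ℂ → ℂ} {a b C : ℝ} (hab : a ≤ b)
    (hf : ∀ z : ℂ, a ≤ z.re → z.re ≤ b → DifferentiableAt ℂ f z)
    (hC : ∀ z : ℂ, a ≤ z.re → z.re ≤ b → ‖f z‖ ≤ C/(1+z.im^2)) :
    ∫ t : ℝ, f (a + t*I) = ∫ t : ℝ, f (b + t*I) := by
  have ia : Integrable (fun t : ℝ => f (a + t*I)) :=
    integrable_line (fun z hz => hf z hz.ge (hz.le.trans hab)) (fun z hz => hC z hz.ge (hz.le.trans hab))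
  have ib : Integrable (fun t : ℝ => f (b + t*I)) :=
    integrable_line (fun z hz => hf z (hab.trans hz.ge) hz.le) (fun z hz => hC z (hab.trans hz.ge) hz.le)
  have ta := intervalIntegral_tendsto_integral ia tendsto_neg_atTop_atBot tendsto_id
  have tb := intervalIntegral_tendsto_integral ib tendsto_neg_atTop_atBot tendsto_id
  have hC0 : 0 ≤ C := by
    have := (norm_nonneg _).trans (hC a (by simp) (by simpa using hab))
    simpa using this
  have hbd : ∀ R : ℝ, ∀ x ∈ Set.uIoc a b, ‖f (x + R*I)‖ ≤ C/(1+R^2) := by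
    intro R x hx
    rw [uIoc_of_le hab] at hx
    have := hC (x + R*I) (by simpa using hx.1.le) (by simpa using hx.2)
    simpa using this
  have hz : ∀ s : ℝ → ℝ, (∀ R, (s R)^2 = R^2) → Tendsto (fun R : ℝ => ∫ x in a..b, f (x + (s R : ℝ)*I)) atTop (nhds 0) := by
    intro s hs
    have h1 : ∀ R, ‖∫ x in a..b, f (x + (s R : ℝ)*I)‖ ≤ C/(1+R^2) * |b-a| := by
      intro R
      rw [← hs R]
      exact intervalIntegral.norm_integral_le_of_norm_le_const (hbd (s R))
    apply squeeze_zero_norm h1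
    have h2 : Tendsto (fun R : ℝ => 1+R^2) atTop atTop :=
      tendsto_atTop_add_const_left _ _ (tendsto_pow_atTop (by norm_num))
    have h3 := (h2.const_div_atTop C).mul_const |b-a|
    simpa using h3
  have z1 := hz (fun R => R) (fun R => rfl)
  have z2 := hz (fun R => -R) (fun R => by ring)
  have hrect : ∀ R : ℝ, (∫ x in a..b, f (x + ((-R:ℝ):ℂ)*I)) - (∫ x in a..b, f (x + (R:ℂ)*I)) +
      I • (∫ y in (-R)..R, f (b + y*I)) - I • (∫ y in (-R)..R, f (a + y*I)) = 0 := by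
    intro R
    have := Complex.integral_boundary_rect_eq_zero_of_differentiableOn f (⟨a, -R⟩ : ℂ) (⟨b, R⟩ : ℂ) (by
      intro z hz
      have h4 : z.re ∈ uIcc a b := hz.1
      rw [uIcc_of_le hab] at h4
      exact (hf z h4.1 h4.2).differentiableWithinAt)
    simpa using this
  have hlim := ((z2.sub z1).add (tb.const_smul I)).sub (ta.const_smul I)
  have h5 := tendsto_nhds_unique (hlim.congr (fun R => hrect R)) tendsto_const_nhds
  simp at h5
  have h6 : I * ((∫ t : ℝ, f (b + t*I)) - ∫ t : ℝ, f (a + t*I)) = 0 := by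
    linear_combination h5
  have h7 := (mul_eq_zero.mp h6).resolve_left I_ne_zero
  exact (sub_eq_zero.mp h7).symm

/-- `sinh w / w` -/
def SH (w : ℂ) : ℂ := dslope Complex.sinh 0 w

lemma SH_diff : Differentiable ℂ SH := by
  intro z
  have : DifferentiableOn ℂ (dslope Complex.sinh 0) Set.univ :=
    (differentiableOn_dslope univ_mem).mpr Complex.differentiable_sinh.differentiableOn
  exact this.differentiableAt univ_mem

lemma SH_zero : SH 0 = 1 := by
  simp [SH, dslope_same]

lemma SH_of_ne {w : ℂ} (hw : w ≠ 0) : SH w = Complex.sinh w / w := by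
  rw [SH, dslope_of_ne _ hw, slope_def_field]; simp

lemma norm_cosh_le (w : ℂ) : ‖Complex.cosh w‖ ≤ Real.exp |w.re| := by
  rw [Complex.cosh, norm_div]
  have h1 := norm_add_le (Complex.exp w) (Complex.exp (-w))
  rw [Complex.norm_exp, Complex.norm_exp] at h1
  have h2 := Real.exp_le_exp.mpr (le_abs_self w.re)
  have h3 := Real.exp_le_exp.mpr (neg_le_abs w.re)
  simp at h1 ⊢
  linarith

lemma norm_sinh_le (w : ℂ) : ‖Complex.sinh w‖ ≤ Real.exp |w.re| := by
  rw [Complex.sinh, norm_div]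
  have h1 := norm_sub_le (Complex.exp w) (Complex.exp (-w))
  rw [Complex.norm_exp, Complex.norm_exp] at h1
  have h2 := Real.exp_le_exp.mpr (le_abs_self w.re)
  have h3 := Real.exp_le_exp.mpr (neg_le_abs w.re)
  simp at h1 ⊢
  linarith

lemma norm_sinh_le' (w : ℂ) : ‖Complex.sinh w‖ ≤ ‖w‖ * Real.exp |w.re| := by
  have hd : ∀ u ∈ Icc (0:ℝ) 1, HasDerivWithinAt (fun u : ℝ => Complex.sinh (u * w))
      (Complex.cosh (u*w) * w) (Icc 0 1) u := by
    intro u hu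
    apply HasDerivAt.hasDerivWithinAt
    have h1 : HasDerivAt (fun u : ℝ => (u:ℂ) * w) (1 * w) u := (Complex.ofRealCLM.hasDerivAt (x := u)).mul_const w
    rw [one_mul] at h1
    exact (Complex.hasDerivAt_sinh (u*w)).comp u h1
  have := norm_image_sub_le_of_norm_deriv_le_segment_01' hd (C := ‖w‖ * Real.exp |w.re|) ?_
  · simpa using this
  · intro u hu
    rw [norm_mul, mul_comm]
    gcongr
    refine (norm_cosh_le _).trans ?_
    apply Real.exp_le_exp.mpr
    simp [abs_mul, abs_of_nonneg hu.1]
    nlinarith [abs_nonneg w.re, hu.2]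

lemma SH_bound (w : ℂ) : ‖SH w‖^4 ≤ 4 * Real.exp (4*|w.re|) / (1+‖w‖^2)^2 := by
  by_cases hw : w = 0
  · simp [hw, SH_zero]
  have hw0 : 0 < ‖w‖ := norm_pos_iff.mpr hw
  have e1 : ‖SH w‖ ≤ Real.exp |w.re| := by
    rw [SH_of_ne hw, norm_div, div_le_iff₀ hw0, mul_comm]; exact norm_sinh_le' w
  have e2 : ‖SH w‖ * ‖w‖ ≤ Real.exp |w.re| := by
    rw [SH_of_ne hw, norm_div, div_mul_cancel₀ _ hw0.ne']; exact norm_sinh_le w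
  have e3 : ‖SH w‖^2 * (1+‖w‖^2) ≤ 2 * (Real.exp |w.re|)^2 := by
    have h1 : ‖SH w‖^2 ≤ (Real.exp |w.re|)^2 := by gcongr
    have h2 : (‖SH w‖ * ‖w‖)^2 ≤ (Real.exp |w.re|)^2 := by gcongr
    nlinarith
  rw [le_div_iff₀ (by positivity)]
  calc ‖SH w‖^4 * (1+‖w‖^2)^2 = (‖SH w‖^2 * (1+‖w‖^2))^2 := by ring
    _ ≤ (2 * (Real.exp |w.re|)^2)^2 := by gcongr
    _ = 4 * (Real.exp |w.re|)^4 := by ring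
    _ = _ := by rw [← Real.exp_nat_mul]; norm_num

/-- the kernel -/
def KK (L : ℝ) (w : ℂ) : ℂ := SH (L*w/4)^4

/-- the kernel on the imaginary axis -/
def hh (L : ℝ) (u : ℝ) : ℝ := Real.sinc (L*u/4)^4

lemma KK_diff (L : ℝ) : Differentiable ℂ (KK L) := by
  unfold KK
  have := SH_diff
  fun_prop

lemma KK_bound {L : ℝ} (hL : 0 < L) (w : ℂ) :
    ‖KK L w‖ ≤ 4 * Real.exp (L*|w.re|) / (1+(L*‖w‖/4)^2)^2 := by
  unfold KK
  rw [norm_pow]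
  refine (SH_bound _).trans (le_of_eq ?_)
  have h1 : ((L:ℂ)*w/4).re = L * w.re/4 := by
    rw [show (L:ℂ)*w/4 = ((L/4:ℝ):ℂ) * w by push_cast; ring, Complex.re_ofReal_mul]; ring
  have h2 : ‖(L:ℂ)*w/4‖ = L*‖w‖/4 := by
    rw [norm_div, norm_mul, Complex.norm_of_nonneg hL.le]; simp
  rw [h1, h2, abs_div, abs_mul, abs_of_pos hL]
  congr 3
  simp; ring

lemma KK_I (L u : ℝ) : KK L (u*I) = (hh L u : ℂ) := by
  unfold KK hh
  by_cases h : L*u/4 = 0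
  · rw [h, show (L:ℂ)*(u*I)/4 = ((L*u/4:ℝ):ℂ)*I by push_cast; ring, h]
    simp [SH_zero]
  · rw [Real.sinc_of_ne_zero h, show (L:ℂ)*(u*I)/4 = ((L*u/4:ℝ):ℂ)*I by push_cast; ring]
    have h2 : ((L*u/4:ℝ):ℂ) ≠ 0 := by exact_mod_cast h
    rw [SH_of_ne (mul_ne_zero h2 I_ne_zero), Complex.sinh_mul_I, mul_div_mul_right _ _ I_ne_zero]
    push_cast; rfl

lemma hh_nonneg (L u : ℝ) : 0 ≤ hh L u := by unfold hh; positivity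

lemma hh_le {L : ℝ} (hL : 0 < L) (u : ℝ) : hh L u ≤ 4 / (1+(L*u/4)^2)^2 := by
  have h := KK_bound hL (u*I)
  rw [KK_I, Complex.norm_of_nonneg (hh_nonneg L u)] at h
  simp at h
  refine h.trans (le_of_eq ?_)
  congr 2
  rw [div_pow, mul_pow, sq_abs]; ring

lemma hh_ge {L u : ℝ} (hL : 0 < L) (hu : |u| ≤ 1/L) : 1/16 ≤ hh L u := by
  unfold hh
  have key : ∀ x : ℝ, 0 ≤ x → x ≤ 1 → 1/2 ≤ Real.sinc x := by
    intro x h0 h1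
    rcases h0.eq_or_lt with rfl | h0
    · norm_num
    · rw [Real.sinc_of_ne_zero h0.ne', le_div_iff₀ h0]
      have := Real.mul_le_sin h0.le (by linarith [Real.pi_gt_three])
      have h4 : 1/2 ≤ 2/π := by
        rw [div_le_div_iff₀ (by norm_num) Real.pi_pos]; linarith [Real.pi_le_four]
      nlinarith
  have h1 : 1/2 ≤ Real.sinc (L*u/4) := by
    have h2 : |L*u/4| ≤ 1 := by
      rw [abs_div, abs_mul, abs_of_pos hL]
      rw [le_div_iff₀ hL] at hu
      norm_num; linarith
    rcases abs_cases (L*u/4) with ⟨h, _⟩ | ⟨h, _⟩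
    · exact key _ (h ▸ abs_nonneg _) (h ▸ h2)
    · rw [← Real.sinc_neg]; exact key _ (h ▸ abs_nonneg _) (h ▸ h2)
  calc (1/16:ℝ) = (1/2)^4 := by norm_num
    _ ≤ _ := by gcongr

lemma hh_cont (L : ℝ) : Continuous (hh L) := by
  unfold hh
  have := Real.continuous_sinc
  fun_prop

lemma integrable_scaled {L : ℝ} (hL : 0 < L) : Integrable (fun u : ℝ => (1+(L*u/4)^2)⁻¹) := by
  have := integrable_inv_one_add_sq.comp_mul_left' (R := L/4) (by positivity)
  refine this.congr (Eventually.of_forall fun u => ?_)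
  simp only; congr 3; ring

lemma integral_scaled {L : ℝ} (hL : 0 < L) : ∫ u : ℝ, (1+(L*u/4)^2)⁻¹ = 4*π/L := by
  have := Measure.integral_comp_mul_left (fun x : ℝ => (1+x^2)⁻¹) (L/4)
  rw [integral_univ_inv_one_add_sq] at this
  have h2 : ∀ u : ℝ, (1+(L*u/4)^2)⁻¹ = (1+(L/4*u)^2)⁻¹ := fun u => by congr 3; ring
  simp_rw [h2, this]
  rw [abs_of_pos (by positivity)]
  simp; field_simp

lemma hh_le1 {L : ℝ} (hL : 0 < L) (u : ℝ) : hh L u ≤ 4 * (1+(L*u/4)^2)⁻¹ := by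
  refine (hh_le hL u).trans ?_
  rw [← div_eq_mul_inv]
  have h1 : 1 ≤ 1+(L*u/4)^2 := by nlinarith [sq_nonneg (L*u/4)]
  apply div_le_div_of_nonneg_left (by norm_num) (by positivity)
  nlinarith

lemma hh_integrable {L : ℝ} (hL : 0 < L) : Integrable (hh L) := by
  apply ((integrable_scaled hL).const_mul 4).mono' (hh_cont L).aestronglyMeasurable
  refine Eventually.of_forall fun u => ?_
  rw [Real.norm_of_nonneg (hh_nonneg _ _)]
  exact hh_le1 hL u

lemma hh_integral_le {L : ℝ} (hL : 0 < L) : ∫ u, hh L u ≤ 16*π/L := by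
  calc ∫ u, hh L u ≤ ∫ u, 4 * (1+(L*u/4)^2)⁻¹ :=
        integral_mono (hh_integrable hL) ((integrable_scaled hL).const_mul 4) (hh_le1 hL)
    _ = _ := by rw [integral_const_mul, integral_scaled hL]; ring

lemma hh_abs_le {L : ℝ} (hL : 4 ≤ L) (u : ℝ) : |u| * hh L u ≤ 4 * (1+(L*u/4)^2)⁻¹ := by
  have hL0 : 0 < L := by linarith
  have h1 := hh_le hL0 u
  set x := L*u/4 with hx
  have hux : |u| ≤ |x| := by
    rw [hx, abs_div, abs_mul, abs_of_pos hL0]; norm_num; nlinarith [abs_nonneg u]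
  have hx1 : |x| ≤ 1 + x^2 := by rw [← sq_abs x]; nlinarith [sq_nonneg (|x|-1), abs_nonneg x]
  calc |u| * hh L u ≤ (1+x^2) * (4/(1+x^2)^2) := by
        have := hh_nonneg L u
        gcongr; exact hux.trans hx1
    _ = _ := by field_simp

end SZC

namespace SZC

/-- shifted kernel -/
def HH (L t0 : ℝ) (z : ℂ) : ℂ := KK L (z - ((1/L:ℝ):ℂ) - t0*I)

lemma HH_diff (L t0 : ℝ) : Differentiable ℂ (HH L t0) := by
  unfold HH
  have := KK_diff L
  fun_prop

lemma HH_line (L t0 t : ℝ) : HH L t0 (((1/L:ℝ):ℂ) + t*I) = (hh L (t-t0) : ℂ) := by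
  unfold HH
  rw [← KK_I]
  congr 1
  push_cast; ring

lemma KK_bound4 {L : ℝ} (hL : 4 ≤ L) (w : ℂ) :
    ‖KK L w‖ ≤ 4 * Real.exp (L*|w.re|) / (1+‖w‖^2)^2 := by
  refine (KK_bound (by linarith) w).trans ?_
  have h : ‖w‖ ≤ L*‖w‖/4 := by nlinarith [norm_nonneg w]
  gcongr

lemma one_add_sq_le (s t : ℝ) : 1 + s^2 ≤ 2*(1+t^2)*(1+(s-t)^2) := by
  nlinarith [sq_nonneg (s - 2*t), sq_nonneg t, sq_nonneg (s-t), mul_nonneg (sq_nonneg t) (sq_nonneg (s-t))]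

lemma HH_bound {L t0 : ℝ} (hL : 4 ≤ L) {z : ℂ} (h1 : 1/L ≤ z.re) (h2 : z.re ≤ 3/2) :
    ‖HH L t0 z‖ ≤ 4 * Real.exp (2*L) / (1+‖z - ((1/L:ℝ):ℂ) - t0*I‖^2)^2 := by
  refine (KK_bound4 hL _).trans ?_
  have hL0 : 0 < 1/L := by positivity
  have h3 : |(z - ((1/L:ℝ):ℂ) - t0*I).re| ≤ 2 := by
    have : (z - ((1/L:ℝ):ℂ) - t0*I).re = z.re - 1/L := by simp
    rw [this, abs_le]; constructor <;> linarith
  have h4 : L * |(z - ((1/L:ℝ):ℂ) - t0*I).re| ≤ 2*L := by nlinarith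
  gcongr

lemma strip_bound {L t0 B : ℝ} (hL : 4 ≤ L) {f : ℂ → ℂ} 
    (hB : ∀ z : ℂ, 1/L ≤ z.re → z.re ≤ 3/2 → ‖f z‖ ≤ B*(1+‖z‖)^2) :
    ∃ C, ∀ z : ℂ, 1/L ≤ z.re → z.re ≤ 3/2 → ‖f z * HH L t0 z‖ ≤ C/(1+z.im^2) := by
  refine ⟨(B * ((2+|t0|)^2*2)) * (4 * Real.exp (2*L)) * (2*(1+t0^2)), fun z h1 h2 => ?_⟩
  have hL0 : 0 < 1/L := by positivity
  have hL1 : 1/L ≤ 1 := by rw [div_le_one (by linarith)]; linarith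
  have hb := hB z h1 h2
  have hh := HH_bound (t0 := t0) hL h1 h2
  set w := z - ((1/L:ℝ):ℂ) - t0*I with hw
  have hB0 : 0 ≤ B := by
    have : 0 ≤ B*(1+‖z‖)^2 := (norm_nonneg _).trans hb
    exact nonneg_of_mul_nonneg_left this (by positivity)
  have hz : ‖z‖ ≤ ‖w‖ + 1 + |t0| := by
    have e : z = w + ((1/L:ℝ):ℂ) + t0*I := by rw [hw]; ring
    calc ‖z‖ = ‖w + ((1/L:ℝ):ℂ) + t0*I‖ := by rw [← e]
      _ ≤ ‖w‖ + ‖((1/L:ℝ):ℂ)‖ + ‖(t0*I:ℂ)‖ := norm_add₃_le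
      _ ≤ _ := by
        rw [Complex.norm_of_nonneg hL0.le, norm_mul, Complex.norm_I, Complex.norm_real, Real.norm_eq_abs]
        linarith
  have hz2 : (1+‖z‖)^2 ≤ (2+|t0|)^2*2*(1+‖w‖^2) := by
    have a1 : 1+‖z‖ ≤ (2+|t0|)*(1+‖w‖) := by nlinarith [abs_nonneg t0, norm_nonneg w]
    calc (1+‖z‖)^2 ≤ ((2+|t0|)*(1+‖w‖))^2 := by gcongr
      _ = (2+|t0|)^2*(1+‖w‖)^2 := by ring
      _ ≤ (2+|t0|)^2*(2*(1+‖w‖^2)) := by gcongr; nlinarith [sq_nonneg (‖w‖-1)]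
      _ = _ := by ring
  have him : 1+z.im^2 ≤ 2*(1+t0^2)*(1+‖w‖^2) := by
    refine (one_add_sq_le z.im t0).trans ?_
    have : (z.im-t0)^2 ≤ ‖w‖^2 := by
      have e : w.im = z.im - t0 := by simp [hw]
      rw [← e, ← sq_abs w.im]
      have := Complex.abs_im_le_norm w
      gcongr
    gcongr
  rw [norm_mul, le_div_iff₀ (by positivity)]
  calc ‖f z‖ * ‖HH L t0 z‖ * (1+z.im^2)
      ≤ (B*((2+|t0|)^2*2*(1+‖w‖^2))) * (4 * Real.exp (2*L) / (1+‖w‖^2)^2) * (2*(1+t0^2)*(1+‖w‖^2)) := by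
        gcongr
        exact hb.trans (by gcongr)
    _ = _ := by field_simp

lemma FD_strip (hRH : RiemannHypothesis) : ∃ C > 0, ∀ L : ℝ, 4 ≤ L → ∀ z : ℂ, 1/L ≤ z.re → 
    ‖FD z‖ ≤ C*L*(1+‖z‖)^2 ∧ ‖AA z‖ ≤ C*L*(1+‖z‖)^2 := by
  obtain ⟨C1, hC1, h1⟩ := halfplane_growth (fun z hz => FD_diffAt hRH hz) (fun z hz => FD_re_nonneg hRH hz)
  obtain ⟨C2, hC2, h2⟩ := AA_bound
  refine ⟨C1 + C2 + 1, by positivity, fun L hL z hz => ?_⟩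
  have hL0 : 0 < 1/L := by positivity
  have hz0 : 0 < z.re := by linarith
  have hn := norm_nonneg z
  constructor
  · refine (h1 z hz0).trans ?_
    rw [div_le_iff₀ hz0]
    have : 1 ≤ L * z.re := by
      rw [div_le_iff₀ (by linarith)] at hz; linarith
    calc C1*(1+‖z‖)^2 ≤ (C1+C2+1)*(1+‖z‖)^2 * 1 := by
          rw [mul_one]; gcongr; linarith
      _ ≤ (C1+C2+1)*(1+‖z‖)^2 * (L*z.re) := by gcongr
      _ = _ := by ring
  · refine (h2 z hz0.le).1.trans ?_
    have h3 : Real.log (1+‖z‖) ≤ (1+‖z‖)^2 := by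
      have := Real.log_le_sub_one_of_pos (show 0 < 1+‖z‖ by linarith)
      nlinarith
    have h4 : 1 ≤ (1+‖z‖)^2 := by nlinarith
    calc C2 + Real.log (1+‖z‖) ≤ C2 * (1+‖z‖)^2 + (1+‖z‖)^2 := by nlinarith
      _ ≤ (C1+C2+1)*1*(1+‖z‖)^2 := by nlinarith
      _ ≤ _ := by gcongr; linarith

lemma lower_int (hRH : RiemannHypothesis) {L : ℝ} (hL : 4 ≤ L) (t0 : ℝ) (S : Finset ℂ)
    (hS : ∀ a ∈ S, EE a = 0 ∧ |a.im - t0| ≤ 1/L)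
    (hi : Integrable (fun t : ℝ => (FD (((1/L:ℝ):ℂ) + t*I)).re * hh L (t-t0))) :
    (∑ a ∈ S, (analyticOrderNatAt EE a : ℝ)) / 40 ≤ ∫ t : ℝ, (FD (((1/L:ℝ):ℂ) + t*I)).re * hh L (t-t0) := by
  have hL0 : 0 < L := by linarith
  set d := 1/L with hd
  have hd0 : 0 < d := by positivity
  set n : ℝ := ∑ a ∈ S, (analyticOrderNatAt EE a : ℝ) with hn
  have hn0 : 0 ≤ n := Finset.sum_nonneg fun _ _ => by positivity
  have key : ∀ t, (Icc (t0-d) (t0+d)).indicator (fun _ => n/(80*d)) t ≤ (FD ((d:ℂ) + t*I)).re * hh L (t-t0) := by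
    intro t
    have hre : 0 < ((d:ℂ) + t*I).re := by simpa using hd0
    by_cases ht : t ∈ Icc (t0-d) (t0+d)
    · rw [indicator_of_mem ht]
      have htd : |t - t0| ≤ d := by rw [abs_le]; constructor <;> linarith [ht.1, ht.2]
      have h1 : n/(5*d) ≤ (FD ((d:ℂ) + t*I)).re := by
        refine le_trans ?_ (FD_re_ge hRH hre S (fun a ha => (hS a ha).1))
        rw [hn, Finset.sum_div]
        apply Finset.sum_le_sum
        intro a ha
        have har := EE_zero_im hRH (hS a ha).1
        rw [re_one_div_sub har, div_eq_mul_inv]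
        gcongr
        have e1 : normSq ((d:ℂ) + t*I - a) = d^2 + (t-a.im)^2 := by
          rw [normSq_apply]; simp [har]; ring
        rw [e1]
        have e2 : |t - a.im| ≤ 2*d := by
          have := (hS a ha).2
          rw [abs_le] at *; constructor <;> linarith
        have e3 : (t-a.im)^2 ≤ (2*d)^2 := sq_le_sq' (abs_le.mp e2).1 (abs_le.mp e2).2
        have e4 : ((d:ℂ) + t*I).re = d := by simp
        rw [e4, le_div_iff₀ (by positivity), inv_mul_le_iff₀ (by positivity)]
        nlinarith
      have h2 := hh_ge hL0 htd
      calc n/(80*d) = n/(5*d) * (1/16) := by field_simp; ring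
        _ ≤ _ := mul_le_mul h1 h2 (by norm_num) (FD_re_nonneg hRH hre)
    · rw [indicator_of_notMem ht]
      exact mul_nonneg (FD_re_nonneg hRH hre) (hh_nonneg _ _)
  have hii : Integrable ((Icc (t0-d) (t0+d)).indicator (fun _ : ℝ => n/(80*d))) :=
    (integrable_indicator_iff measurableSet_Icc).mpr (integrableOn_const (by simp) (by simp))
  refine le_trans (le_of_eq ?_) (integral_mono hii hi key)
  rw [integral_indicator measurableSet_Icc, setIntegral_const]
  simp [Measure.real]
  rw [ENNReal.toReal_ofReal (by linarith)]
  field_simp; ring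

lemma AA_int_le : ∃ C > 0, ∀ L : ℝ, 4 ≤ L → ∀ t0 : ℝ, 
    Integrable (fun t : ℝ => (AA (((1/L:ℝ):ℂ) + t*I)).re * hh L (t-t0)) →
    ∫ t : ℝ, (AA (((1/L:ℝ):ℂ) + t*I)).re * hh L (t-t0) ≤ C * ((Real.log (2+|t0|)+1)/L) := by
  obtain ⟨C, hC, h⟩ := AA_bound
  refine ⟨(C+2)*(16*π), by positivity, fun L hL t0 hi => ?_⟩
  have hL0 : 0 < L := by linarith
  have hl0 : 0 ≤ Real.log (2+|t0|) := Real.log_nonneg (by linarith [abs_nonneg t0])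
  have hd1 : 1/L ≤ 1 := by rw [div_le_one hL0]; linarith
  have hd0 : 0 < 1/L := by positivity
  have key : ∀ t : ℝ, (AA (((1/L:ℝ):ℂ) + t*I)).re * hh L (t-t0) ≤ 
     (Real.log (2+|t0|)+C) * hh L (t-t0) + 4 * (1+(L*(t-t0)/4)^2)⁻¹ := by
    intro t
    have h1 := (abs_le.mp (h (((1/L:ℝ):ℂ) + t*I) (by simpa using hL0.le)).2).2
    have h2 : Real.log (1+‖((1/L:ℝ):ℂ) + t*I‖) ≤ Real.log (2+|t0|) + |t-t0| := by
      have e1 : ‖((1/L:ℝ):ℂ) + t*I‖ ≤ 1 + |t| := by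
        refine (norm_add_le _ _).trans ?_
        rw [Complex.norm_of_nonneg hd0.le, norm_mul, Complex.norm_I, Complex.norm_real, Real.norm_eq_abs]
        linarith
      have e2 : |t| ≤ |t0| + |t-t0| := by
        have := abs_add_le t0 (t-t0); simpa using this
      have e3 : 1+‖((1/L:ℝ):ℂ) + t*I‖ ≤ (2+|t0|)*(1+|t-t0|) := by
        nlinarith [abs_nonneg t0, abs_nonneg (t-t0)]
      calc Real.log (1+‖((1/L:ℝ):ℂ) + t*I‖) ≤ Real.log ((2+|t0|)*(1+|t-t0|)) := by
            apply Real.log_le_log (by positivity) e3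
        _ = Real.log (2+|t0|) + Real.log (1+|t-t0|) := Real.log_mul (by positivity) (by positivity)
        _ ≤ _ := by
          have := Real.log_le_sub_one_of_pos (show 0 < 1+|t-t0| by positivity)
          linarith
    have h3 := hh_nonneg L (t-t0)
    have h4 := hh_abs_le hL (t-t0)
    have h5 : (AA (((1/L:ℝ):ℂ) + t*I)).re ≤ (Real.log (2+|t0|)+C) + |t-t0| := by
      have : 0 ≤ Real.log (1+‖((1/L:ℝ):ℂ) + t*I‖) := Real.log_nonneg (by linarith [norm_nonneg (((1/L:ℝ):ℂ) + t*I)])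
      linarith
    calc _ ≤ ((Real.log (2+|t0|)+C) + |t-t0|) * hh L (t-t0) := by gcongr
      _ = (Real.log (2+|t0|)+C) * hh L (t-t0) + |t-t0| * hh L (t-t0) := by ring
      _ ≤ _ := by linarith
  have i1 : Integrable (fun t => (Real.log (2+|t0|)+C) * hh L (t-t0)) := ((hh_integrable hL0).comp_sub_right t0).const_mul _
  have i2 : Integrable (fun t => 4 * (1+(L*(t-t0)/4)^2)⁻¹) := ((integrable_scaled hL0).comp_sub_right t0).const_mul _
  refine (integral_mono hi (i1.add i2) key).trans ?_
  have e0 := integral_add i1 i2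
  have e1 : ∫ t, (Real.log (2+|t0|)+C) * hh L (t-t0) = (Real.log (2+|t0|)+C) * ∫ t, hh L t := by
    rw [integral_const_mul, integral_sub_right_eq_self (hh L) t0]
  have e2 : ∫ t, 4 * (1+(L*(t-t0)/4)^2)⁻¹ = 4*(4*π/L) := by
    rw [integral_const_mul, integral_sub_right_eq_self (fun t => (1+(L*t/4)^2)⁻¹) t0, integral_scaled hL0]
  have e3 : (∫ t, ((Real.log (2+|t0|)+C) * hh L (t-t0) + 4 * (1+(L*(t-t0)/4)^2)⁻¹)) = 
     (Real.log (2+|t0|)+C) * (∫ t, hh L t) + 4*(4*π/L) := by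
    rw [← e1, ← e2, ← e0]
  refine le_trans (le_of_eq e3) ?_
  have e4 := hh_integral_le hL0
  calc _ ≤ (Real.log (2+|t0|)+C) * (16*π/L) + 16*π/L := by
        have : 4*(4*π/L) = 16*π/L := by ring
        rw [this]; gcongr
    _ = (Real.log (2+|t0|)+C+1) * (16*π)/L := by ring
    _ ≤ ((C+2)*(Real.log (2+|t0|)+1)) * (16*π)/L := by
        gcongr; nlinarith
    _ = _ := by ring

end SZC

namespace SZC

/-- `n^{-w} K(w)` -/
def gn (L : ℝ) (n : ℕ) (w : ℂ) : ℂ := Complex.exp (-w * Real.log n) * KK L w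

lemma gn_diff (L : ℝ) (n : ℕ) : Differentiable ℂ (gn L n) := by
  unfold gn
  have := KK_diff L
  fun_prop

lemma gn_bound {L : ℝ} (hL : 4 ≤ L) (n : ℕ) {w : ℂ} (hw : 0 ≤ w.re) :
    ‖gn L n w‖ ≤ 4 * Real.exp ((L - Real.log n) * w.re) / (1+w.im^2) := by
  unfold gn
  rw [norm_mul, Complex.norm_exp]
  have h1 : (-w * (Real.log n:ℂ)).re = - w.re * Real.log n := by rw [Complex.re_mul_ofReal, Complex.neg_re]
  rw [h1]
  have h2 := KK_bound4 hL w
  rw [abs_of_nonneg hw] at h2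
  have h3 : 1+w.im^2 ≤ (1+‖w‖^2)^2 := by
    have : w.im^2 ≤ ‖w‖^2 := by
      rw [← sq_abs w.im]
      have := Complex.abs_im_le_norm w
      gcongr
    nlinarith [sq_nonneg (‖w‖)]
  calc _ ≤ Real.exp (-w.re * Real.log n) * (4 * Real.exp (L*w.re) / (1+‖w‖^2)^2) := by gcongr
    _ ≤ Real.exp (-w.re * Real.log n) * (4 * Real.exp (L*w.re) / (1+w.im^2)) := by gcongr
    _ = _ := by
      rw [show (L - Real.log n) * w.re = -w.re * Real.log n + L*w.re by ring, Real.exp_add]; ring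

def BB (L : ℝ) (n : ℕ) : ℂ := ∫ u : ℝ, gn L n (u*I)

lemma gn_int {L : ℝ} (hL : 4 ≤ L) (n : ℕ) {c : ℝ} (hc : 0 ≤ c) :
    Integrable (fun u : ℝ => gn L n (c + u*I)) := by
  apply integrable_line (C := 4 * Real.exp ((L - Real.log n) * c)) (fun z _ => gn_diff L n z)
  intro z hz
  have := gn_bound hL n (w := z) (hz ▸ hc)
  rwa [hz] at this

lemma gn_shift {L : ℝ} (hL : 4 ≤ L) (n : ℕ) {c : ℝ} (hc : 0 ≤ c) :
    ∫ u : ℝ, gn L n (c + u*I) = BB L n := by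
  have := vertical_shift (f := gn L n) (a := 0) (b := c) (C := 4 * Real.exp (|L - Real.log n| * c)) hc
    (fun z _ _ => gn_diff L n z) (by
      intro z h0 h1
      refine (gn_bound hL n h0).trans ?_
      have : (L - Real.log n) * z.re ≤ |L - Real.log n| * c := by
        calc _ ≤ |L - Real.log n| * z.re := by gcongr; exact le_abs_self _
          _ ≤ _ := by gcongr
      gcongr)
  rw [BB, ← this]; simp

lemma BB_norm {L : ℝ} (hL : 4 ≤ L) (n : ℕ) : ‖BB L n‖ ≤ 16*π/L := by
  refine le_trans ?_ (hh_integral_le (by linarith : 0 < L))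
  refine (norm_integral_le_integral_norm _).trans (le_of_eq ?_)
  congr 1
  ext u
  rw [gn, norm_mul, Complex.norm_exp, KK_I, Complex.norm_of_nonneg (hh_nonneg _ _), Complex.re_mul_ofReal]
  simp

lemma BB_zero {L : ℝ} (hL : 4 ≤ L) {n : ℕ} (hn : L < Real.log n) : BB L n = 0 := by
  have h1 : ∀ c : ℕ, ‖BB L n‖ ≤ 4*π * (Real.exp (L - Real.log n))^c := by
    intro c
    rw [← gn_shift hL n (Nat.cast_nonneg c)]
    have h2 : ∀ u : ℝ, ‖gn L n ((c:ℝ) + u*I)‖ ≤ (4 * (Real.exp (L - Real.log n))^c) * (1+u^2)⁻¹ := by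
      intro u
      have := gn_bound hL n (w := ((c:ℝ) + u*I)) (by simp)
      simp only [Complex.add_re, Complex.add_im] at this
      simp at this
      simpa [← Real.exp_nat_mul, mul_comm, div_eq_mul_inv] using this
    refine (norm_integral_le_of_norm_le (integrable_inv_one_add_sq.const_mul _) (Eventually.of_forall h2)).trans ?_
    rw [integral_const_mul, integral_univ_inv_one_add_sq]
    linarith
  have h3 : Tendsto (fun c : ℕ => 4*π * (Real.exp (L - Real.log n))^c) atTop (nhds (4*π*0)) :=
    (tendsto_pow_atTop_nhds_zero_of_lt_one (Real.exp_nonneg _) (by rw [Real.exp_lt_one_iff]; linarith)).const_mul _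
  have h4 := ge_of_tendsto' h3 h1
  simpa using h4

/-- Dirichlet polynomial coefficients -/
def aa (L : ℝ) (n : ℕ) : ℂ := (ArithmeticFunction.vonMangoldt n : ℂ) * Complex.exp (-((1/2 + 1/L : ℝ):ℂ) * Real.log n) * BB L n

/-- Dirichlet polynomial -/
def DD (L t : ℝ) : ℂ := ∑ n ∈ Finset.range (⌊Real.exp L⌋₊ + 1), aa L n * Complex.exp (-(t*I) * Real.log n)

lemma LS_term {n : ℕ} (s : ℂ) : LSeries.term (fun n => (ArithmeticFunction.vonMangoldt n : ℂ)) s n = 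
    (ArithmeticFunction.vonMangoldt n : ℂ) * Complex.exp (-s * Real.log n) := by
  by_cases hn : n = 0
  · simp [hn]
  · rw [LSeries.term_of_ne_zero hn, div_eq_mul_inv, ← Complex.cpow_neg, Complex.cpow_def_of_ne_zero (by exact_mod_cast hn), 
      Complex.natCast_log, mul_comm (Complex.log n)]

lemma term_shift {L : ℝ} (hL : 4 ≤ L) (t0 : ℝ) (n : ℕ) :
    Integrable (fun t : ℝ => LSeries.term (fun n => (ArithmeticFunction.vonMangoldt n : ℂ)) (1/2+(((3/2:ℝ):ℂ)+t*I)) n * HH L t0 (((3/2:ℝ):ℂ)+t*I)) ∧ 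
    ∫ t : ℝ, LSeries.term (fun n => (ArithmeticFunction.vonMangoldt n : ℂ)) (1/2+(((3/2:ℝ):ℂ)+t*I)) n * HH L t0 (((3/2:ℝ):ℂ)+t*I)
      = aa L n * Complex.exp (-(t0*I) * Real.log n) := by
  have hL0 : 0 < L := by linarith
  have hc : 0 ≤ 3/2 - 1/L := by
    have : 1/L ≤ 1 := by rw [div_le_one hL0]; linarith
    linarith
  set K : ℂ := (ArithmeticFunction.vonMangoldt n : ℂ) * Complex.exp (-((1/2 + 1/L : ℝ):ℂ) * Real.log n) * Complex.exp (-(t0*I) * Real.log n) with hK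
  have e : ∀ t : ℝ, LSeries.term (fun n => (ArithmeticFunction.vonMangoldt n : ℂ)) (1/2+(((3/2:ℝ):ℂ)+t*I)) n * HH L t0 (((3/2:ℝ):ℂ)+t*I)
      = K * gn L n (((3/2-1/L:ℝ):ℂ) + ((t-t0:ℝ):ℂ)*I) := by
    intro t
    rw [LS_term, HH, gn, hK]
    have e1 : ((3/2:ℝ):ℂ)+t*I - ((1/L:ℝ):ℂ) - t0*I = ((3/2-1/L:ℝ):ℂ) + ((t-t0:ℝ):ℂ)*I := by push_cast; ring
    rw [e1]
    have e2 : Complex.exp (-(1/2+(((3/2:ℝ):ℂ)+t*I)) * Real.log n) = Complex.exp (-((1/2 + 1/L : ℝ):ℂ) * Real.log n) * Complex.exp (-(t0*I) * Real.log n) * Complex.exp (-(((3/2-1/L:ℝ):ℂ) + ((t-t0:ℝ):ℂ)*I) * Real.log n) := by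
      rw [← Complex.exp_add, ← Complex.exp_add]
      congr 1
      push_cast; ring
    rw [e2]; ring
  simp_rw [e]
  constructor
  · exact ((gn_int hL n hc).comp_sub_right t0).const_mul K
  · rw [integral_const_mul, integral_sub_right_eq_self (fun t : ℝ => gn L n (((3/2-1/L:ℝ):ℂ) + (t:ℂ)*I)) t0, gn_shift hL n hc, aa, hK]
    ring

lemma LS_int {L : ℝ} (hL : 4 ≤ L) (t0 : ℝ) : 
    ∫ t : ℝ, LSeries (fun n => (ArithmeticFunction.vonMangoldt n : ℂ)) (1/2+(((3/2:ℝ):ℂ)+t*I)) * HH L t0 (((3/2:ℝ):ℂ)+t*I)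
      = DD L t0 := by
  have hL0 : 0 < L := by linarith
  have hL1 : 1/L ≤ 1 := by rw [div_le_one hL0]; linarith
  have hsum : Summable (fun n => ‖LSeries.term (fun n => (ArithmeticFunction.vonMangoldt n : ℂ)) 2 n‖) :=
    (ArithmeticFunction.LSeriesSummable_vonMangoldt (s := 2) (by norm_num)).norm
  have hn : ∀ (n : ℕ) (t : ℝ), ‖LSeries.term (fun n => (ArithmeticFunction.vonMangoldt n : ℂ)) (1/2+(((3/2:ℝ):ℂ)+t*I)) n‖ = ‖LSeries.term (fun n => (ArithmeticFunction.vonMangoldt n : ℂ)) 2 n‖ := by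
    intro n t
    rw [LS_term, LS_term, norm_mul, norm_mul, Complex.norm_exp, Complex.norm_exp, Complex.re_mul_ofReal, Complex.re_mul_ofReal]
    congr 3
    simp; norm_num
  have hHi : Integrable (fun t : ℝ => ‖HH L t0 (((3/2:ℝ):ℂ)+t*I)‖) := by
    obtain ⟨C, hC⟩ := strip_bound (t0 := t0) (B := 1) hL (f := fun _ => 1) (fun z _ _ => by
      simp only [norm_one, one_mul]
      nlinarith [norm_nonneg z])
    refine (integrable_line (C := C) (fun z _ => HH_diff L t0 z) (fun z hz => ?_)).norm
    have := hC z (by rw [hz]; linarith) hz.le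
    simpa using this
  have hs := hasSum_integral_of_summable_integral_norm (fun n => (term_shift hL t0 n).1) (by
    simp_rw [norm_mul, hn, integral_const_mul]
    exact hsum.mul_right _)
  have e1 : ∀ t : ℝ, ∑' n, LSeries.term (fun n => (ArithmeticFunction.vonMangoldt n : ℂ)) (1/2+(((3/2:ℝ):ℂ)+t*I)) n * HH L t0 (((3/2:ℝ):ℂ)+t*I) = LSeries (fun n => (ArithmeticFunction.vonMangoldt n : ℂ)) (1/2+(((3/2:ℝ):ℂ)+t*I)) * HH L t0 (((3/2:ℝ):ℂ)+t*I) := by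
    intro t
    rw [tsum_mul_right]; rfl
  simp_rw [e1] at hs
  rw [← hs.tsum_eq]
  simp_rw [(term_shift hL t0 _).2]
  rw [DD]
  apply tsum_eq_sum
  intro n hn
  have h1 : Real.exp L < n := by
    simp only [Finset.mem_range, not_lt] at hn
    exact (Nat.lt_floor_add_one _).trans_le (by exact_mod_cast hn)
  have h2 : L < Real.log n := by
    rw [Real.lt_log_iff_exp_lt ((Real.exp_pos _).trans h1)]; exact h1
  rw [aa, BB_zero hL h2]; simp

lemma pole_int : ∃ C > 0, ∀ L : ℝ, 4 ≤ L → ∀ t0 : ℝ, 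
    Integrable (fun t : ℝ => 1/((((3/2:ℝ):ℂ)+t*I) - 1/2) * HH L t0 (((3/2:ℝ):ℂ)+t*I)) ∧
    ‖∫ t : ℝ, 1/((((3/2:ℝ):ℂ)+t*I) - 1/2) * HH L t0 (((3/2:ℝ):ℂ)+t*I)‖ ≤ C * (Real.exp (2*L)/√(1+t0^2)) := by
  refine ⟨8*π, by positivity, fun L hL t0 => ?_⟩
  have hL0 : 0 < L := by linarith
  have hL1 : 1/L ≤ 1 := by rw [div_le_one hL0]; linarith
  have hs : 0 < √(1+t0^2) := Real.sqrt_pos.mpr (by positivity)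
  have key : ∀ t : ℝ, ‖1/((((3/2:ℝ):ℂ)+t*I) - 1/2) * HH L t0 (((3/2:ℝ):ℂ)+t*I)‖ ≤ 
     (8 * (Real.exp (2*L)/√(1+t0^2))) * (1+(t-t0)^2)⁻¹ := by
    intro t
    have h1 := HH_bound (t0 := t0) hL (z := ((3/2:ℝ):ℂ)+t*I) (by simp; rw [← one_div]; linarith) (by simp)
    have h2 : (t-t0)^2 ≤ ‖((3/2:ℝ):ℂ)+t*I - ((1/L:ℝ):ℂ) - t0*I‖^2 := by
      have := Complex.abs_im_le_norm (((3/2:ℝ):ℂ)+t*I - ((1/L:ℝ):ℂ) - t0*I)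
      have e : (((3/2:ℝ):ℂ)+t*I - ((1/L:ℝ):ℂ) - t0*I).im = t-t0 := by simp
      rw [e] at this
      rw [← sq_abs (t-t0)]; gcongr
    have h3 : ‖(((3/2:ℝ):ℂ)+t*I) - 1/2‖ = √(1+t^2) := by
      rw [Complex.norm_def, normSq_apply]; congr 1; simp; norm_num; ring
    have ht : 0 < √(1+t^2) := Real.sqrt_pos.mpr (by positivity)
    have h4 : √(1+t0^2) ≤ √(1+t^2) * (2*(1+(t-t0)^2)) := by
      rw [Real.sqrt_le_left (by positivity), mul_pow, Real.sq_sqrt (by positivity)]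
      have := one_add_sq_le t0 t
      have h6 : 1 ≤ 1+(t0-t)^2 := by nlinarith [sq_nonneg (t0-t)]
      rw [show (t-t0)^2 = (t0-t)^2 by ring]
      refine this.trans ?_
      have : 2*(1+(t0-t)^2) ≤ (2*(1+(t0-t)^2))^2 := by nlinarith
      calc 2*(1+t^2)*(1+(t0-t)^2) = (1+t^2)*(2*(1+(t0-t)^2)) := by ring
        _ ≤ _ := by gcongr
    rw [norm_mul, norm_div, norm_one, h3]
    have h5 : 1/√(1+t^2) ≤ 2*(1+(t-t0)^2)/√(1+t0^2) := by
      rw [div_le_div_iff₀ ht hs]; linarith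
    calc 1/√(1+t^2) * ‖HH L t0 (((3/2:ℝ):ℂ)+t*I)‖ ≤ (2*(1+(t-t0)^2)/√(1+t0^2)) * (4 * Real.exp (2*L) / (1+(t-t0)^2)^2) := by
          refine mul_le_mul h5 (h1.trans ?_) (norm_nonneg _) (by positivity)
          gcongr
      _ = _ := by field_simp; ring
  have ii : Integrable (fun t : ℝ => (8 * (Real.exp (2*L)/√(1+t0^2))) * (1+(t-t0)^2)⁻¹) :=
    (integrable_inv_one_add_sq.comp_sub_right t0).const_mul _
  constructor
  · apply ii.mono' _ (Eventually.of_forall key)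
    apply Continuous.aestronglyMeasurable
    have := (HH_diff L t0).continuous
    apply Continuous.mul
    · apply Continuous.div (by fun_prop) (by fun_prop)
      intro t h
      have := congrArg Complex.re h
      norm_num at this
    · fun_prop
  · refine (norm_integral_le_of_norm_le ii (Eventually.of_forall key)).trans (le_of_eq ?_)
    rw [integral_const_mul, integral_sub_right_eq_self (fun t : ℝ => (1+t^2)⁻¹) t0, integral_univ_inv_one_add_sq]
    ring

end SZC

namespace SZC

theorem key_ineq (hRH : RiemannHypothesis) : ∃ C > 0, ∀ L : ℝ, 4 ≤ L → ∀ t0 : ℝ, ∀ S : Finset ℂ,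
    (∀ a ∈ S, EE a = 0 ∧ |a.im - t0| ≤ 1/L) → 
    (∑ a ∈ S, (analyticOrderNatAt EE a : ℝ)) ≤ 
      C * ((Real.log (2+|t0|)+1)/L + Real.exp (2*L)/√(1+t0^2) + ‖DD L t0‖) := by
  obtain ⟨C1, hC1, hA⟩ := AA_int_le
  obtain ⟨C2, hC2, hP⟩ := pole_int
  obtain ⟨C3, hC3, hF⟩ := FD_strip hRH
  refine ⟨40*(C1+C2+1), by positivity, fun L hL t0 S hS => ?_⟩
  have hL0 : 0 < L := by linarith
  have hd0 : 0 < 1/L := by positivity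
  have hL1 : 1/L ≤ 1 := by rw [div_le_one hL0]; linarith
  obtain ⟨K1, hK1⟩ := strip_bound (t0 := t0) (B := C3*L) hL (f := FD) (fun z h1 h2 => (hF L hL z h1).1)
  obtain ⟨K2, hK2⟩ := strip_bound (t0 := t0) (B := C3*L) hL (f := AA) (fun z h1 h2 => (hF L hL z h1).2)
  obtain ⟨K3, hK3⟩ := strip_bound (t0 := t0) (B := C3*L+C3*L) hL (f := GG) (fun z h1 h2 => by
    unfold GG
    refine (norm_sub_le _ _).trans ?_
    rw [add_mul]
    exact add_le_add (hF L hL z h1).1 (hF L hL z h1).2)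
  have hdH := HH_diff L t0
  have hr : ∀ z : ℂ, z.re = 1/L → 0 < z.re := fun z hz => hz ▸ hd0
  have iF : Integrable (fun t : ℝ => FD (((1/L:ℝ):ℂ) + t*I) * HH L t0 (((1/L:ℝ):ℂ) + t*I)) :=
    integrable_line (f := fun z => FD z * HH L t0 z) (fun z hz => (FD_diffAt hRH (hr z hz)).mul (hdH z))
      (fun z hz => hK1 z hz.ge (by rw [hz]; linarith))
  have iA : Integrable (fun t : ℝ => AA (((1/L:ℝ):ℂ) + t*I) * HH L t0 (((1/L:ℝ):ℂ) + t*I)) :=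
    integrable_line (f := fun z => AA z * HH L t0 z) (fun z hz => (AA_diffAt (hr z hz).le).mul (hdH z))
      (fun z hz => hK2 z hz.ge (by rw [hz]; linarith))
  have iG : Integrable (fun t : ℝ => GG (((1/L:ℝ):ℂ) + t*I) * HH L t0 (((1/L:ℝ):ℂ) + t*I)) :=
    integrable_line (f := fun z => GG z * HH L t0 z) (fun z hz => (GG_diffAt hRH (hr z hz)).mul (hdH z))
      (fun z hz => hK3 z hz.ge (by rw [hz]; linarith))
  have reF : ∀ (f : ℂ → ℂ) (t : ℝ), (f (((1/L:ℝ):ℂ) + t*I) * HH L t0 (((1/L:ℝ):ℂ) + t*I)).re = (f (((1/L:ℝ):ℂ) + t*I)).re * hh L (t-t0) := by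
    intro f t
    rw [HH_line, Complex.re_mul_ofReal]
  have jF : Integrable (fun t : ℝ => (FD (((1/L:ℝ):ℂ) + t*I)).re * hh L (t-t0)) := by
    have := iF.re
    refine this.congr (Eventually.of_forall fun t => ?_)
    exact reF FD t
  have jA : Integrable (fun t : ℝ => (AA (((1/L:ℝ):ℂ) + t*I)).re * hh L (t-t0)) := by
    have := iA.re
    refine this.congr (Eventually.of_forall fun t => ?_)
    exact reF AA t
  have h1 := lower_int hRH hL t0 S hS jF
  have h2 := hA L hL t0 jA
  have h3 : ∫ t : ℝ, (FD (((1/L:ℝ):ℂ) + t*I)).re * hh L (t-t0) = 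
      (∫ t : ℝ, (AA (((1/L:ℝ):ℂ) + t*I)).re * hh L (t-t0)) + 
      (∫ t : ℝ, GG (((1/L:ℝ):ℂ) + t*I) * HH L t0 (((1/L:ℝ):ℂ) + t*I)).re := by
    have jG : Integrable (fun t : ℝ => (GG (((1/L:ℝ):ℂ) + t*I) * HH L t0 (((1/L:ℝ):ℂ) + t*I)).re) := iG.re
    have e : (∫ t : ℝ, GG (((1/L:ℝ):ℂ) + t*I) * HH L t0 (((1/L:ℝ):ℂ) + t*I)).re = 
      ∫ t : ℝ, (GG (((1/L:ℝ):ℂ) + t*I) * HH L t0 (((1/L:ℝ):ℂ) + t*I)).re := (integral_re iG).symm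
    rw [e, ← integral_add jA jG]
    congr 1; ext t
    rw [reF GG t, GG, Complex.sub_re]; ring
  have h4 : ∫ t : ℝ, GG (((1/L:ℝ):ℂ) + t*I) * HH L t0 (((1/L:ℝ):ℂ) + t*I) = 
      ∫ t : ℝ, GG (((3/2:ℝ):ℂ) + t*I) * HH L t0 (((3/2:ℝ):ℂ) + t*I) :=
    vertical_shift (f := fun z => GG z * HH L t0 z) (by linarith) (fun z h1 h2 => (GG_diffAt hRH (by linarith)).mul (hdH z)) hK3
  have h5 : ∫ t : ℝ, GG (((3/2:ℝ):ℂ) + t*I) * HH L t0 (((3/2:ℝ):ℂ) + t*I) = 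
      (∫ t : ℝ, 1/((((3/2:ℝ):ℂ)+t*I) - 1/2) * HH L t0 (((3/2:ℝ):ℂ)+t*I)) - DD L t0 := by
    have iP := (hP L hL t0).1
    have iG2 : Integrable (fun t : ℝ => GG (((3/2:ℝ):ℂ) + t*I) * HH L t0 (((3/2:ℝ):ℂ) + t*I)) :=
      integrable_line (f := fun z => GG z * HH L t0 z) (fun z hz => (GG_diffAt hRH (by rw [hz]; norm_num)).mul (hdH z))
        (fun z hz => hK3 z (by rw [hz]; linarith) hz.le)
    rw [← LS_int hL t0]
    rw [eq_sub_iff_add_eq, ← eq_sub_iff_add_eq', ← integral_sub iP iG2]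
    congr 1; ext t
    rw [GG_eq (by norm_num)]; ring
  have h6 : (∫ t : ℝ, GG (((1/L:ℝ):ℂ) + t*I) * HH L t0 (((1/L:ℝ):ℂ) + t*I)).re ≤ 
      C2 * (Real.exp (2*L)/√(1+t0^2)) + ‖DD L t0‖ := by
    rw [h4, h5]
    refine (Complex.re_le_norm _).trans ((norm_sub_le _ _).trans ?_)
    exact add_le_add (hP L hL t0).2 le_rfl
  rw [h3] at h1
  have hl0 : 0 ≤ Real.log (2+|t0|) := Real.log_nonneg (by linarith [abs_nonneg t0])
  have p1 : 0 ≤ (Real.log (2+|t0|)+1)/L := by positivity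
  have p2 : 0 ≤ Real.exp (2*L)/√(1+t0^2) := by positivity
  have p3 := norm_nonneg (DD L t0)
  nlinarith [mul_nonneg hC1.le p2, mul_nonneg hC1.le p3, mul_nonneg hC2.le p1, mul_nonneg hC2.le p3]

end SZC

namespace SZC

lemma sum_Lambda_div (N : ℕ) : ∑ n ∈ Finset.Ioc 0 N, ArithmeticFunction.vonMangoldt n / n ≤ 2 * Real.log N := by
  rcases Nat.eq_zero_or_pos N with rfl | hN
  · simp
  have hN0 : (0:ℝ) < N := by exact_mod_cast hN
  have h1 := ArithmeticFunction.sum_Ioc_mul_zeta_eq_sum ArithmeticFunction.vonMangoldt N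
  rw [ArithmeticFunction.vonMangoldt_mul_zeta] at h1
  have h2 : ∑ n ∈ Finset.Ioc 0 N, ArithmeticFunction.log n ≤ N * Real.log N := by
    calc ∑ n ∈ Finset.Ioc 0 N, ArithmeticFunction.log n ≤ ∑ n ∈ Finset.Ioc 0 N, Real.log N := by
          apply Finset.sum_le_sum
          intro n hn
          rw [Finset.mem_Ioc] at hn
          rw [ArithmeticFunction.log_apply]
          exact Real.log_le_log (by exact_mod_cast hn.1) (by exact_mod_cast hn.2)
      _ = _ := by simp
  have h3 : (N/2:ℝ) * ∑ n ∈ Finset.Ioc 0 N, ArithmeticFunction.vonMangoldt n / n ≤ 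
      ∑ n ∈ Finset.Ioc 0 N, ArithmeticFunction.vonMangoldt n * ((N/n : ℕ):ℝ) := by
    rw [Finset.mul_sum]
    apply Finset.sum_le_sum
    intro n hn
    rw [Finset.mem_Ioc] at hn
    have hn0 : (0:ℝ) < n := by exact_mod_cast hn.1
    have h4 : (N:ℝ)/n < ((N/n:ℕ):ℝ) + 1 := by
      have := Nat.lt_div_mul_add hn.1 (a := N)
      rw [div_lt_iff₀ hn0]
      have h' : N < (N/n+1)*n := by nlinarith
      exact_mod_cast h'
    have h5 : (1:ℝ) ≤ ((N/n:ℕ):ℝ) := by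
      exact_mod_cast Nat.div_pos hn.2 hn.1
    have h6 := ArithmeticFunction.vonMangoldt_nonneg (n := n)
    calc (N/2:ℝ) * (ArithmeticFunction.vonMangoldt n / n) = ArithmeticFunction.vonMangoldt n * ((N:ℝ)/n/2) := by ring
      _ ≤ _ := by gcongr; linarith
  rw [← h1] at h3
  have h7 := h3.trans h2
  have h8 : (N:ℝ) * (∑ n ∈ Finset.Ioc 0 N, ArithmeticFunction.vonMangoldt n / n) ≤ N * (2 * Real.log N) := by linarith
  exact le_of_mul_le_mul_left h8 hN0

lemma exp_int {l : ℝ} (hl : l ≠ 0) (T : ℝ) : ‖∫ t in (0:ℝ)..T, Complex.exp (-(t*I)*l)‖ ≤ 2/|l| := by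
  have e : ∀ t : ℝ, Complex.exp (-(t*I)*l) = Complex.exp ((-(l*I)) * t) := fun t => by congr 1; ring
  simp_rw [e]
  rw [integral_exp_mul_complex (by simp [hl])]
  rw [norm_div]
  have h1 : ‖(-(l*I) : ℂ)‖ = |l| := by simp
  rw [h1]
  gcongr
  refine (norm_sub_le _ _).trans ?_
  rw [Complex.norm_exp, Complex.norm_exp]
  simp; norm_num

lemma log_gap {m n : ℕ} {N : ℝ} (hm : 0 < m) (hn : 0 < n) (hmn : m ≠ n) (hmN : m ≤ N) (hnN : n ≤ N) :
    1/|Real.log m - Real.log n| ≤ N := by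
  wlog h : m < n generalizing m n
  · have := this hn hm hmn.symm hnN hmN (by omega)
    rwa [abs_sub_comm]
  have hm0 : (0:ℝ) < m := by exact_mod_cast hm
  have hn0 : (0:ℝ) < n := by exact_mod_cast hn
  have h1 : (m:ℝ)+1 ≤ n := by exact_mod_cast h
  have h2 : Real.log m - Real.log n ≤ (m:ℝ)/n - 1 := by
    rw [← Real.log_div hm0.ne' hn0.ne']
    exact Real.log_le_sub_one_of_pos (by positivity)
  have h3 : (m:ℝ)/n - 1 ≤ -(1/n) := by
    rw [div_sub_one hn0.ne', ← neg_div]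
    gcongr; linarith
  have h4 : 1/(n:ℝ) ≤ |Real.log m - Real.log n| := by
    rw [abs_of_neg]
    · linarith
    · have : 0 < 1/(n:ℝ) := by positivity
      linarith
  have h5 : 0 < 1/(n:ℝ) := by positivity
  calc 1/|Real.log m - Real.log n| ≤ 1/(1/(n:ℝ)) := by gcongr
    _ = n := by simp
    _ ≤ N := hnN

lemma mean_value (a : ℕ → ℂ) (S : Finset ℕ) {N : ℝ} (hS : ∀ n ∈ S, 0 < n ∧ (n:ℝ) ≤ N) {T : ℝ} (hT : 0 ≤ T) :
    ∫ t in (0:ℝ)..T, ‖∑ n ∈ S, a n * Complex.exp (-(t*I) * Real.log n)‖^2 ≤ 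
      T * (∑ n ∈ S, ‖a n‖^2) + 2*N*(∑ n ∈ S, ‖a n‖)^2 := by
  have e1 : ∀ t : ℝ, ((‖∑ n ∈ S, a n * Complex.exp (-(t*I) * Real.log n)‖^2 : ℝ) : ℂ) = 
      ∑ m ∈ S, ∑ n ∈ S, (a m * starRingEnd ℂ (a n)) * Complex.exp (-(t*I)*((Real.log m - Real.log n : ℝ):ℂ)) := by
    intro t
    rw [← Complex.normSq_eq_norm_sq, ← Complex.mul_conj, map_sum, Finset.sum_mul_sum]
    refine Finset.sum_congr rfl fun m _ => Finset.sum_congr rfl fun n _ => ?_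
    rw [map_mul, ← Complex.exp_conj]
    have : starRingEnd ℂ (-(t*I) * Real.log n) = (t*I) * Real.log n := by
      rw [map_mul, map_neg, map_mul, Complex.conj_I, Complex.conj_ofReal, Complex.conj_ofReal]; ring
    rw [this]
    have e2 : Complex.exp (-(t*I)*((Real.log m - Real.log n : ℝ):ℂ)) = Complex.exp (-(t*I) * Real.log m) * Complex.exp ((t*I) * Real.log n) := by
      rw [← Complex.exp_add]; congr 1; push_cast; ring
    rw [e2]; ring
  have e3 : ((∫ t in (0:ℝ)..T, ‖∑ n ∈ S, a n * Complex.exp (-(t*I) * Real.log n)‖^2 : ℝ) : ℂ) = 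
      ∑ m ∈ S, ∑ n ∈ S, (a m * starRingEnd ℂ (a n)) * ∫ t in (0:ℝ)..T, Complex.exp (-(t*I)*((Real.log m - Real.log n : ℝ):ℂ)) := by
    rw [← intervalIntegral.integral_ofReal]
    simp_rw [e1]
    rw [intervalIntegral.integral_finsetSum]
    · refine Finset.sum_congr rfl fun m _ => ?_
      rw [intervalIntegral.integral_finsetSum]
      · refine Finset.sum_congr rfl fun n _ => ?_
        rw [intervalIntegral.integral_const_mul]
      · intro n _
        apply Continuous.intervalIntegrable; fun_prop
    · intro n _
      apply Continuous.intervalIntegrable; fun_prop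
  have hN : ∀ n ∈ S, 0 ≤ N := fun n hn => (Nat.cast_nonneg n).trans (hS n hn).2
  have e4 : ∀ m ∈ S, ∀ n ∈ S, ‖(a m * starRingEnd ℂ (a n)) * ∫ t in (0:ℝ)..T, Complex.exp (-(t*I)*((Real.log m - Real.log n : ℝ):ℂ))‖ ≤ 
      (if m = n then T*‖a m‖^2 else 0) + 2*N*(‖a m‖*‖a n‖) := by
    intro m hm n hn
    have hN0 := hN m hm
    rw [norm_mul, norm_mul, RCLike.norm_conj]
    by_cases h : m = n
    · subst h
      simp only [sub_self, ↓reduceIte]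
      have : ‖∫ t in (0:ℝ)..T, Complex.exp (-(t*I)*((0:ℝ):ℂ))‖ = T := by
        simp [abs_of_nonneg hT]
      rw [this]
      have : 0 ≤ 2*N*(‖a m‖*‖a m‖) := by positivity
      nlinarith
    · rw [if_neg h, zero_add]
      have hg := log_gap (hS m hm).1 (hS n hn).1 h (hS m hm).2 (hS n hn).2
      have hne : Real.log m - Real.log n ≠ 0 := by
        intro h0
        apply h
        have := Real.log_injOn_pos (show (0:ℝ) < m by exact_mod_cast (hS m hm).1) (show (0:ℝ) < n by exact_mod_cast (hS n hn).1) (sub_eq_zero.mp h0)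
        exact_mod_cast this
      have h2 : ‖∫ t in (0:ℝ)..T, Complex.exp (-(t*I)*((Real.log m - Real.log n : ℝ):ℂ))‖ ≤ 2*N := by
        refine (exp_int hne T).trans ?_
        calc 2/|Real.log m - Real.log n| = 2*(1/|Real.log m - Real.log n|) := by ring
          _ ≤ _ := by gcongr
      calc _ ≤ ‖a m‖*‖a n‖*(2*N) := by gcongr
        _ = _ := by ring
  have e5 : 0 ≤ ∫ t in (0:ℝ)..T, ‖∑ n ∈ S, a n * Complex.exp (-(t*I) * Real.log n)‖^2 :=
    intervalIntegral.integral_nonneg hT (fun _ _ => by positivity)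
  calc _ = ‖((∫ t in (0:ℝ)..T, ‖∑ n ∈ S, a n * Complex.exp (-(t*I) * Real.log n)‖^2 : ℝ) : ℂ)‖ := by
        rw [Complex.norm_of_nonneg e5]
    _ ≤ ∑ m ∈ S, ∑ n ∈ S, ((if m = n then T*‖a m‖^2 else 0) + 2*N*(‖a m‖*‖a n‖)) := by
        rw [e3]
        refine (norm_sum_le _ _).trans (Finset.sum_le_sum fun m hm => ?_)
        exact (norm_sum_le _ _).trans (Finset.sum_le_sum fun n hn => e4 m hm n hn)
    _ = _ := by
        simp_rw [Finset.sum_add_distrib]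
        congr 1
        · rw [Finset.mul_sum]
          refine Finset.sum_congr rfl fun m hm => ?_
          rw [Finset.sum_ite_eq]; simp [hm]
        · rw [pow_two, Finset.sum_mul_sum, Finset.mul_sum]
          refine Finset.sum_congr rfl fun m hm => ?_
          rw [Finset.mul_sum]

lemma aa_norm {L : ℝ} (hL : 4 ≤ L) {n : ℕ} (hn : 0 < n) : 
    ‖aa L n‖ ≤ ArithmeticFunction.vonMangoldt n * (16*π/L) ∧ 
    ‖aa L n‖^2 ≤ ArithmeticFunction.vonMangoldt n^2/n * (16*π/L)^2 := by
  have hL0 : 0 < L := by linarith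
  have hv := ArithmeticFunction.vonMangoldt_nonneg (n := n)
  have hn1 : (1:ℝ) ≤ n := by exact_mod_cast hn
  have hl := Real.log_nonneg hn1
  have h1 : ‖aa L n‖ ≤ ArithmeticFunction.vonMangoldt n * Real.exp (-(1/2)*Real.log n) * (16*π/L) := by
    rw [aa, norm_mul, norm_mul, Complex.norm_of_nonneg hv, Complex.norm_exp, Complex.re_mul_ofReal]
    have hB := BB_norm hL n
    have h2 : (-((1/2+1/L:ℝ):ℂ)).re * Real.log n ≤ -(1/2)*Real.log n := by
      rw [Complex.neg_re, Complex.ofReal_re]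
      have : 0 < 1/L := by positivity
      nlinarith
    gcongr
  have h3 : Real.exp (-(1/2)*Real.log n) ≤ 1 := by
    rw [Real.exp_le_one_iff]; nlinarith
  have h4 : Real.exp (-(1/2)*Real.log n)^2 = 1/n := by
    rw [← Real.exp_nat_mul]
    rw [show ((2:ℕ):ℝ) * (-(1/2)*Real.log n) = -Real.log n by push_cast; ring, Real.exp_neg, Real.exp_log (by linarith)]
    simp
  constructor
  · refine h1.trans ?_
    have : 0 ≤ 16*π/L := by positivity
    calc _ ≤ ArithmeticFunction.vonMangoldt n * 1 * (16*π/L) := by gcongr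
      _ = _ := by ring
  · calc ‖aa L n‖^2 ≤ (ArithmeticFunction.vonMangoldt n * Real.exp (-(1/2)*Real.log n) * (16*π/L))^2 := by gcongr
      _ = _ := by rw [mul_pow, mul_pow, h4]; ring

lemma DD_mean : ∃ C > 0, ∀ L : ℝ, 4 ≤ L → ∀ T : ℝ, 0 ≤ T → 
    ∫ t in (0:ℝ)..T, ‖DD L t‖^2 ≤ C * (T + Real.exp (3*L)) := by
  refine ⟨2*(16*π)^2, by positivity, fun L hL T hT => ?_⟩
  have hL0 : 0 < L := by linarith
  set N := ⌊Real.exp L⌋₊ with hN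
  have hNL : (N:ℝ) ≤ Real.exp L := Nat.floor_le (Real.exp_nonneg _)
  have hN1 : 1 ≤ N := by
    rw [hN, Nat.one_le_floor_iff]; exact Real.one_le_exp hL0.le
  have hD : ∀ t, DD L t = ∑ n ∈ Finset.Ioc 0 N, aa L n * Complex.exp (-(t*I) * Real.log n) := by
    intro t
    rw [DD, ← hN]
    symm
    apply Finset.sum_subset
    · intro n hn; simp at *; omega
    · intro n hn hn'
      have : n = 0 := by simp at *; omega
      subst this
      simp [aa]
  simp_rw [hD]
  have hS : ∀ n ∈ Finset.Ioc 0 N, 0 < n ∧ (n:ℝ) ≤ Real.exp L := by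
    intro n hn
    rw [Finset.mem_Ioc] at hn
    exact ⟨hn.1, le_trans (by exact_mod_cast hn.2) hNL⟩
  refine (mean_value (aa L) (Finset.Ioc 0 N) hS hT).trans ?_
  have hlog : ∀ n ∈ Finset.Ioc 0 N, ArithmeticFunction.vonMangoldt n ≤ L := by
    intro n hn
    refine ArithmeticFunction.vonMangoldt_le_log.trans ?_
    rw [Real.log_le_iff_le_exp (by exact_mod_cast (hS n hn).1)]
    exact (hS n hn).2
  have hlN : Real.log N ≤ L := by
    rw [Real.log_le_iff_le_exp (by exact_mod_cast hN1)]; exact hNL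
  have h1 : ∑ n ∈ Finset.Ioc 0 N, ‖aa L n‖^2 ≤ 2*(16*π)^2 := by
    calc ∑ n ∈ Finset.Ioc 0 N, ‖aa L n‖^2 ≤ ∑ n ∈ Finset.Ioc 0 N, L * (16*π/L)^2 * (ArithmeticFunction.vonMangoldt n/n) := by
          apply Finset.sum_le_sum
          intro n hn
          refine (aa_norm hL (hS n hn).1).2.trans ?_
          have hv := ArithmeticFunction.vonMangoldt_nonneg (n := n)
          have := hlog n hn
          calc _ = ArithmeticFunction.vonMangoldt n * ((ArithmeticFunction.vonMangoldt n/n) * (16*π/L)^2) := by ring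
            _ ≤ L * ((ArithmeticFunction.vonMangoldt n/n) * (16*π/L)^2) := by gcongr
            _ = _ := by ring
      _ = L * (16*π/L)^2 * ∑ n ∈ Finset.Ioc 0 N, ArithmeticFunction.vonMangoldt n/n := by rw [Finset.mul_sum]
      _ ≤ L * (16*π/L)^2 * (2*L) := by
          gcongr
          exact (sum_Lambda_div N).trans (by linarith)
      _ = _ := by field_simp
  have h2 : ∑ n ∈ Finset.Ioc 0 N, ‖aa L n‖ ≤ 16*π * Real.exp L := by
    calc ∑ n ∈ Finset.Ioc 0 N, ‖aa L n‖ ≤ ∑ n ∈ Finset.Ioc 0 N, 16*π := by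
          apply Finset.sum_le_sum
          intro n hn
          refine (aa_norm hL (hS n hn).1).1.trans ?_
          have := hlog n hn
          calc _ ≤ L * (16*π/L) := by gcongr
            _ = _ := by field_simp
      _ = 16*π*N := by simp; ring
      _ ≤ _ := by gcongr
  have h3 : 0 ≤ ∑ n ∈ Finset.Ioc 0 N, ‖aa L n‖ := Finset.sum_nonneg fun _ _ => norm_nonneg _
  calc _ ≤ T * (2*(16*π)^2) + 2*Real.exp L * (16*π * Real.exp L)^2 := by gcongr
    _ = 2*(16*π)^2 * (T + Real.exp L^3) := by ring
    _ = _ := by rw [← Real.exp_nat_mul]; norm_num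

end SZC

namespace SZC

/-- finite set of zeros -/
def ZZ (T : ℝ) : Finset ℂ := (zerosUpTo_finite T).toFinset

lemma mem_ZZ {T : ℝ} {ρ : ℂ} : ρ ∈ ZZ T ↔ ZetaNontrivZero ρ ∧ 0 < ρ.im ∧ ρ.im ≤ T := by
  rw [ZZ, Set.Finite.mem_toFinset]; rfl

lemma summable_int : Summable (fun i : ℤ => 1/(1+(i:ℝ)^2)) := by
  have h1 : Summable (fun i : ℤ => 1/(i:ℝ)^2) := Real.summable_one_div_int_pow.mpr (by norm_num)
  have h2 : Summable (fun i : ℤ => if i = 0 then (1:ℝ) else 0) := (hasSum_ite_eq 0 1).summable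
  refine Summable.of_nonneg_of_le (fun i => by positivity) (fun i => ?_) (h1.add h2)
  by_cases hi : i = 0
  · simp [hi]
  · have : (0:ℝ) < (i:ℝ)^2 := by positivity
    simp only [hi, if_false, add_zero]
    gcongr; linarith

lemma sum_row : ∃ K > 0, ∀ J j : ℕ, ∑ k ∈ Finset.range J, 1/(1+((j:ℝ)-k)^2) ≤ K := by
  refine ⟨(∑' i : ℤ, 1/(1+(i:ℝ)^2)) + 1, ?_, fun J j => ?_⟩
  · have : 0 ≤ ∑' i : ℤ, 1/(1+(i:ℝ)^2) := tsum_nonneg fun i => by positivity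
    linarith
  · have h1 : ∑ k ∈ Finset.range J, 1/(1+((j:ℝ)-k)^2) = ∑ i ∈ (Finset.range J).image (fun k : ℕ => (j:ℤ)-k), 1/(1+(i:ℝ)^2) := by
      rw [Finset.sum_image]
      · simp
      · intro a _ b _ h; simp at h; omega
    rw [h1]
    have := summable_int.sum_le_tsum ((Finset.range J).image (fun k : ℕ => (j:ℤ)-k)) (fun i _ => by positivity)
    linarith

/-- abstract bin inequality -/
lemma bins (Z : Finset ℂ) (m : ℂ → ℝ) (hm : ∀ z, 0 ≤ m z) (x : ℂ → ℝ) (J : ℕ) 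
    (hx : ∀ z ∈ Z, 0 ≤ x z ∧ ⌊x z⌋₊ < J) {K : ℝ} (hK : ∀ J j : ℕ, ∑ k ∈ Finset.range J, 1/(1+((j:ℝ)-k)^2) ≤ K) :
    ∑ z ∈ Z, ∑ z' ∈ Z, m z * m z' / (1+(x z - x z')^2) ≤ 
      3 * K * ∑ j ∈ Finset.range J, (∑ z ∈ Z with ⌊x z⌋₊ = j, m z)^2 := by
  set b : ℕ → ℝ := fun j => ∑ z ∈ Z with ⌊x z⌋₊ = j, m z with hb
  have h1 : ∀ z ∈ Z, ∀ z' ∈ Z, m z * m z' / (1+(x z - x z')^2) ≤ 3 * (m z * m z' / (1+((⌊x z⌋₊:ℝ) - ⌊x z'⌋₊)^2)) := by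
    intro z hz z' hz'
    have a1 := Nat.floor_le (hx z hz).1
    have a2 := Nat.floor_le (hx z' hz').1
    have a3 := Nat.lt_floor_add_one (x z)
    have a4 := Nat.lt_floor_add_one (x z')
    set j : ℝ := (⌊x z⌋₊:ℝ)
    set k : ℝ := (⌊x z'⌋₊:ℝ)
    have h2 : 1+(j-k)^2 ≤ 3*(1+(x z - x z')^2) := by
      have : |(j-k) - (x z - x z')| ≤ 1 := by rw [abs_le]; constructor <;> linarith
      obtain ⟨b1, b2⟩ := abs_le.mp this
      set y := x z - x z'
      have h3 : (j-k-y)^2 ≤ 1 := by nlinarith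
      nlinarith [sq_nonneg (j-k-y-y)]
    have hmm : 0 ≤ m z * m z' := mul_nonneg (hm z) (hm z')
    rw [← mul_div_assoc, div_le_div_iff₀ (by positivity) (by positivity)]
    nlinarith
  have hmap : ∀ z ∈ Z, ⌊x z⌋₊ ∈ Finset.range J := fun z hz => Finset.mem_range.mpr (hx z hz).2
  have h2 : ∑ z ∈ Z, ∑ z' ∈ Z, (m z * m z' / (1+((⌊x z⌋₊:ℝ) - ⌊x z'⌋₊)^2)) = 
      ∑ j ∈ Finset.range J, ∑ k ∈ Finset.range J, b j * b k / (1+((j:ℝ)-k)^2) := by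
    rw [← Finset.sum_fiberwise_of_maps_to hmap]
    refine Finset.sum_congr rfl fun j _ => ?_
    have : ∀ z, ∑ z' ∈ Z, (m z * m z' / (1+((⌊x z⌋₊:ℝ) - ⌊x z'⌋₊)^2)) = 
        ∑ k ∈ Finset.range J, m z * b k / (1+((⌊x z⌋₊:ℝ)-k)^2) := by
      intro z
      rw [← Finset.sum_fiberwise_of_maps_to hmap]
      refine Finset.sum_congr rfl fun k _ => ?_
      rw [hb]
      simp only
      rw [Finset.mul_sum, Finset.sum_div]
      refine Finset.sum_congr rfl fun z' hz' => ?_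
      rw [(Finset.mem_filter.mp hz').2]
    simp_rw [this]
    rw [Finset.sum_comm]
    refine Finset.sum_congr rfl fun k _ => ?_
    conv_rhs => rw [hb]
    simp only
    rw [Finset.sum_mul, Finset.sum_div]
    refine Finset.sum_congr rfl fun z hz => ?_
    rw [(Finset.mem_filter.mp hz).2]
  have h3 : ∑ j ∈ Finset.range J, ∑ k ∈ Finset.range J, b j * b k / (1+((j:ℝ)-k)^2) ≤ 
      ∑ j ∈ Finset.range J, ∑ k ∈ Finset.range J, ((b j^2/2) * (1/(1+((j:ℝ)-k)^2)) + (b k^2/2) * (1/(1+((j:ℝ)-k)^2))) := by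
    refine Finset.sum_le_sum fun j _ => Finset.sum_le_sum fun k _ => ?_
    rw [← add_mul, mul_one_div]
    gcongr
    nlinarith [sq_nonneg (b j - b k)]
  have h4 : ∑ j ∈ Finset.range J, ∑ k ∈ Finset.range J, ((b j^2/2) * (1/(1+((j:ℝ)-k)^2)) + (b k^2/2) * (1/(1+((j:ℝ)-k)^2))) ≤ 
      K * ∑ j ∈ Finset.range J, b j^2 := by
    simp_rw [Finset.sum_add_distrib]
    have a1 : ∑ j ∈ Finset.range J, ∑ k ∈ Finset.range J, (b j^2/2) * (1/(1+((j:ℝ)-k)^2)) ≤ ∑ j ∈ Finset.range J, K * (b j^2/2) := by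
      refine Finset.sum_le_sum fun j _ => ?_
      rw [← Finset.mul_sum, mul_comm]
      have := hK J j
      gcongr
    have a2 : ∑ j ∈ Finset.range J, ∑ k ∈ Finset.range J, (b k^2/2) * (1/(1+((j:ℝ)-k)^2)) = ∑ j ∈ Finset.range J, ∑ k ∈ Finset.range J, (b j^2/2) * (1/(1+((j:ℝ)-k)^2)) := by
      rw [Finset.sum_comm]
      refine Finset.sum_congr rfl fun j _ => Finset.sum_congr rfl fun k _ => ?_
      rw [show ((k:ℝ)-j)^2 = ((j:ℝ)-k)^2 by ring]
    rw [a2]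
    refine (add_le_add a1 a1).trans (le_of_eq ?_)
    rw [← Finset.sum_add_distrib, Finset.mul_sum]
    refine Finset.sum_congr rfl fun j _ => ?_
    ring
  calc _ ≤ ∑ z ∈ Z, ∑ z' ∈ Z, 3 * (m z * m z' / (1+((⌊x z⌋₊:ℝ) - ⌊x z'⌋₊)^2)) :=
        Finset.sum_le_sum fun z hz => Finset.sum_le_sum fun z' hz' => h1 z hz z' hz'
    _ = 3 * ∑ z ∈ Z, ∑ z' ∈ Z, (m z * m z' / (1+((⌊x z⌋₊:ℝ) - ⌊x z'⌋₊)^2)) := by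
        simp_rw [Finset.mul_sum]
    _ ≤ _ := by rw [h2, mul_assoc]; gcongr; exact h3.trans h4

def QQ (L t : ℝ) : ℝ := (Real.log (2+|t|)+1)/L + Real.exp (2*L)/√(1+t^2) + ‖DD L t‖

lemma DD_cont (L : ℝ) : Continuous (DD L) := by
  unfold DD; fun_prop

lemma QQ_cont (L : ℝ) : Continuous (QQ L) := by
  unfold QQ
  have := DD_cont L
  have h1 : ∀ t : ℝ, 2+|t| ≠ 0 := fun t => by positivity
  have h2 : ∀ t : ℝ, √(1+t^2) ≠ 0 := fun t => (Real.sqrt_pos.mpr (by positivity)).ne'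
  fun_prop (disch := assumption)

lemma QQ_int : ∃ C > 0, ∀ T : ℝ, Real.exp 32 ≤ T → 
    ∫ t in (0:ℝ)..(T+1), QQ (Real.log T/8) t^2 ≤ C * T := by
  obtain ⟨C, hC, hD⟩ := DD_mean
  refine ⟨3*(256*2+π+3*C), by positivity, fun T hT => ?_⟩
  have hT33 : 33 ≤ T := by
    have := Real.add_one_le_exp 32; linarith
  have hT0 : 0 < T := by linarith
  set L := Real.log T/8 with hLd
  have hlT : 32 ≤ Real.log T := by rw [Real.le_log_iff_exp_le hT0]; exact hT
  have hL : 4 ≤ L := by rw [hLd]; linarith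
  have hL0 : 0 < L := by linarith
  have e8 : Real.exp (8*L) = T := by rw [hLd, mul_div_cancel₀ _ (by norm_num), Real.exp_log hT0]
  have e4 : Real.exp (4*L) ≤ T := by rw [← e8]; apply Real.exp_le_exp.mpr; linarith
  have e3 : Real.exp (3*L) ≤ T := by rw [← e8]; apply Real.exp_le_exp.mpr; linarith
  have hc := DD_cont L
  have key : ∀ t ∈ Icc 0 (T+1), QQ L t^2 ≤ 3*(256 + Real.exp (4*L) * (1+t^2)⁻¹ + ‖DD L t‖^2) := by
    intro t ht
    have h1 : (Real.log (2+|t|)+1)/L ≤ 16 := by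
      rw [div_le_iff₀ hL0]
      have : Real.log (2+|t|) + 1 ≤ 2*Real.log T := by
        rw [abs_of_nonneg ht.1]
        have a1 : Real.log (2+t) ≤ Real.log (T*2) := Real.log_le_log (by linarith [ht.1]) (by linarith [ht.2])
        rw [Real.log_mul hT0.ne' (by norm_num)] at a1
        have := Real.log_two_lt_d9
        linarith
      rw [hLd]; linarith
    have h0 : 0 ≤ (Real.log (2+|t|)+1)/L := by
      have : 0 ≤ Real.log (2+|t|) := Real.log_nonneg (by linarith [abs_nonneg t])
      positivity
    have h2 : (Real.exp (2*L)/√(1+t^2))^2 = Real.exp (4*L) * (1+t^2)⁻¹ := by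
      rw [div_pow, Real.sq_sqrt (by positivity), ← Real.exp_nat_mul, div_eq_mul_inv]
      congr 2; push_cast; ring
    have h3 : ((Real.log (2+|t|)+1)/L)^2 ≤ 256 := by nlinarith
    rw [← h2, QQ]
    set a := (Real.log (2+|t|)+1)/L
    set b := Real.exp (2*L)/√(1+t^2)
    set d := ‖DD L t‖
    nlinarith [sq_nonneg (a-b), sq_nonneg (b-d), sq_nonneg (a-d)]
  have i1 : IntervalIntegrable (fun t : ℝ => Real.exp (4*L) * (1+t^2)⁻¹) volume 0 (T+1) := by
    apply Continuous.intervalIntegrable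
    have h2 : ∀ t : ℝ, 1+t^2 ≠ 0 := fun t => by positivity
    fun_prop (disch := assumption)
  have i2 : IntervalIntegrable (fun t : ℝ => ‖DD L t‖^2) volume 0 (T+1) := by
    apply Continuous.intervalIntegrable; fun_prop
  have i0 : IntervalIntegrable (fun t : ℝ => (256:ℝ)) volume 0 (T+1) := by
    apply Continuous.intervalIntegrable; fun_prop
  have hmono := intervalIntegral.integral_mono_on (by linarith : (0:ℝ) ≤ T+1) 
    (((QQ_cont L).pow 2).intervalIntegrable 0 (T+1)) (((i0.add i1).add i2).const_mul 3) key
  refine hmono.trans ?_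
  have e5 : ∫ t in (0:ℝ)..(T+1), (3*(256 + Real.exp (4*L) * (1+t^2)⁻¹ + ‖DD L t‖^2)) = 
     3*((T+1)*256 + Real.exp (4*L) * (Real.arctan (T+1)) + ∫ t in (0:ℝ)..(T+1), ‖DD L t‖^2) := by
    rw [intervalIntegral.integral_const_mul, intervalIntegral.integral_add (i0.add i1) i2,
      intervalIntegral.integral_add i0 i1, intervalIntegral.integral_const_mul, integral_inv_one_add_sq]
    simp
  refine (le_of_eq e5).trans ?_
  have e6 := hD L hL (T+1) (by linarith)
  have e7 : Real.arctan (T+1) ≤ π := by linarith [Real.arctan_lt_pi_div_two (T+1), Real.pi_pos]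
  have e9 : Real.exp (4*L) * Real.arctan (T+1) ≤ T * π := by
    calc _ ≤ Real.exp (4*L) * π := by gcongr
      _ ≤ _ := by gcongr
  nlinarith

theorem pair_bound (hRH : RiemannHypothesis) : ∃ C > 0, ∀ T : ℝ, Real.exp 32 ≤ T →
    ∑ ρ ∈ ZZ T, ∑ ρ' ∈ ZZ T, (zetaMult ρ : ℝ) * zetaMult ρ' / (1+(ρ.im*(Real.log T/8) - ρ'.im*(Real.log T/8))^2) ≤ 
      C * (T * Real.log T) := by
  obtain ⟨C1, hC1, hk⟩ := key_ineq hRH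
  obtain ⟨C2, hC2, hQ⟩ := QQ_int
  obtain ⟨K, hK0, hK⟩ := sum_row
  refine ⟨3*K*(C1^2*C2/8), by positivity, fun T hT => ?_⟩
  have hT33 : 33 ≤ T := by
    have := Real.add_one_le_exp 32; linarith
  have hT0 : 0 < T := by linarith
  have hlT : 32 ≤ Real.log T := by rw [Real.le_log_iff_exp_le hT0]; exact hT
  have hQT := hQ T hT
  set L := Real.log T/8 with hLd
  have hL : 4 ≤ L := by rw [hLd]; linarith
  have hL0 : 0 < L := by linarith
  set J := ⌊T*L⌋₊ + 1 with hJ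
  have hb := bins (ZZ T) (fun ρ => (zetaMult ρ : ℝ)) (fun _ => Nat.cast_nonneg _) (fun ρ => ρ.im*L) J (by
    intro ρ hρ
    rw [mem_ZZ] at hρ
    refine ⟨mul_nonneg hρ.2.1.le hL0.le, ?_⟩
    rw [hJ, Nat.lt_succ_iff]
    apply Nat.floor_le_floor
    exact mul_le_mul_of_nonneg_right hρ.2.2 hL0.le) hK
  refine hb.trans ?_
  set b : ℕ → ℝ := fun j => ∑ z ∈ ZZ T with ⌊z.im*L⌋₊ = j, (zetaMult z:ℝ) with hbd
  have h1 : ∀ j : ℕ, ∀ t : ℝ, (j:ℝ)/L ≤ t → t ≤ ((j+1:ℕ):ℝ)/L → b j ≤ C1 * QQ L t := by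
    intro j t h1 h2
    have hs := hk L hL t (((ZZ T).filter (fun z => ⌊z.im*L⌋₊ = j)).image (fun ρ => ρ - 1/2)) (by
      intro a ha
      rw [Finset.mem_image] at ha
      obtain ⟨ρ, hρ, rfl⟩ := ha
      rw [Finset.mem_filter, mem_ZZ] at hρ
      obtain ⟨⟨hz, h0, hT'⟩, hj⟩ := hρ
      constructor
      · rw [EE_zero_nontriv]; simpa using hz
      · have e : (ρ - 1/2).im = ρ.im := by simp
        rw [e]
        rw [div_le_iff₀ hL0] at h1
        rw [le_div_iff₀ hL0] at h2
        push_cast at h2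
        have a1 := Nat.floor_le (mul_nonneg h0.le hL0.le)
        have a2 := Nat.lt_floor_add_one (ρ.im*L)
        rw [hj] at a1 a2
        rw [le_div_iff₀ hL0]
        rw [← abs_of_pos hL0, ← abs_mul, abs_le]
        constructor <;> nlinarith)
    rw [Finset.sum_image (by intro x _ y _ h; simpa using h)] at hs
    refine le_trans (le_of_eq ?_) hs
    rw [hbd]
    refine Finset.sum_congr rfl fun ρ hρ => ?_
    rw [Finset.mem_filter, mem_ZZ] at hρ
    rw [EE_mult hρ.1.1.2.1]
    intro h1
    have := hρ.1.2.1
    rw [h1] at this; simp at this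
  have hb0 : ∀ j, 0 ≤ b j := fun j => Finset.sum_nonneg fun _ _ => Nat.cast_nonneg _
  have hcont : Continuous (fun t => (C1 * QQ L t)^2) := by
    have := QQ_cont L
    fun_prop
  have h2 : ∀ j : ℕ, b j^2/L ≤ ∫ t in ((j:ℕ):ℝ)/L..((j+1:ℕ):ℝ)/L, (C1 * QQ L t)^2 := by
    intro j
    have hle : (j:ℝ)/L ≤ ((j+1:ℕ):ℝ)/L := by gcongr; simp
    have := intervalIntegral.integral_mono_on hle (f := fun _ => b j^2) (g := fun t => (C1 * QQ L t)^2)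
      (μ := volume) (continuous_const.intervalIntegrable _ _) (hcont.intervalIntegrable _ _) (by
        intro t ht
        have := h1 j t ht.1 ht.2
        have := hb0 j
        gcongr)
    refine le_trans (le_of_eq ?_) this
    rw [intervalIntegral.integral_const]
    simp only [smul_eq_mul]; push_cast; field_simp; ring
  have h3 : ∑ j ∈ Finset.range J, b j^2/L ≤ ∫ t in (0:ℝ)..(T+1), (C1 * QQ L t)^2 := by
    calc _ ≤ ∑ j ∈ Finset.range J, ∫ t in ((j:ℕ):ℝ)/L..((j+1:ℕ):ℝ)/L, (C1 * QQ L t)^2 := 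
          Finset.sum_le_sum fun j _ => h2 j
      _ = ∫ t in ((0:ℕ):ℝ)/L..(J:ℝ)/L, (C1 * QQ L t)^2 := 
          intervalIntegral.sum_integral_adjacent_intervals (a := fun j : ℕ => (j:ℝ)/L) (fun j _ => hcont.intervalIntegrable _ _)
      _ ≤ _ := by
          simp only [Nat.cast_zero, zero_div]
          have hJT : (J:ℝ)/L ≤ T+1 := by
            rw [div_le_iff₀ hL0, hJ]
            have := Nat.floor_le (mul_nonneg hT0.le hL0.le)
            push_cast; nlinarith
          apply intervalIntegral.integral_mono_interval le_rfl (by positivity) hJT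
          · exact Eventually.of_forall fun t => by positivity
          · exact hcont.intervalIntegrable _ _
  have h4 : ∫ t in (0:ℝ)..(T+1), (C1 * QQ L t)^2 ≤ C1^2 * (C2 * T) := by
    simp_rw [mul_pow]
    rw [intervalIntegral.integral_const_mul]
    gcongr
  rw [← Finset.sum_div] at h3
  have h5 := h3.trans h4
  rw [div_le_iff₀ hL0] at h5
  calc _ ≤ 3*K*(C1^2*(C2*T)*L) := by gcongr
    _ = _ := by rw [hLd]; ring

end SZC

namespace SZC

lemma GG_bound : ∃ C > 0, ∀ z : ℂ, 1 ≤ z.re → ‖GG z‖ ≤ C := by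
  have hsum : Summable (fun n => ‖LSeries.term (fun n => (ArithmeticFunction.vonMangoldt n : ℂ)) ((3/2:ℝ):ℂ) n‖) :=
    (ArithmeticFunction.LSeriesSummable_vonMangoldt (s := ((3/2:ℝ):ℂ)) (by norm_num)).norm
  refine ⟨2 + ∑' n, ‖LSeries.term (fun n => (ArithmeticFunction.vonMangoldt n : ℂ)) ((3/2:ℝ):ℂ) n‖, ?_, fun z hz => ?_⟩
  · have : 0 ≤ ∑' n, ‖LSeries.term (fun n => (ArithmeticFunction.vonMangoldt n : ℂ)) ((3/2:ℝ):ℂ) n‖ := tsum_nonneg fun _ => norm_nonneg _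
    linarith
  rw [GG_eq (by linarith)]
  refine (norm_sub_le _ _).trans (add_le_add ?_ ?_)
  · rw [norm_div, norm_one]
    have : 1/2 ≤ ‖z-1/2‖ := by
      refine le_trans ?_ (Complex.re_le_norm _)
      simp; linarith
    rw [div_le_iff₀ (by linarith)]; linarith
  · have hle : ∀ n, ‖LSeries.term (fun n => (ArithmeticFunction.vonMangoldt n : ℂ)) (1/2+z) n‖ ≤ ‖LSeries.term (fun n => (ArithmeticFunction.vonMangoldt n : ℂ)) ((3/2:ℝ):ℂ) n‖ := by
      intro n
      apply LSeries.norm_term_le_of_re_le_re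
      simp; linarith
    have hs2 := Summable.of_nonneg_of_le (fun _ => norm_nonneg _) hle hsum
    exact (norm_tsum_le_tsum_norm hs2).trans (hs2.tsum_le_tsum hle hsum)

lemma FD_right : ∃ C > 0, ∀ z : ℂ, 1 ≤ z.re → 
    (FD z).re ≤ Real.log (1+‖z‖)/2 + C ∧ Real.log (1+‖z‖)/2 - C ≤ (FD z).re := by
  obtain ⟨C1, hC1, h1⟩ := GG_bound
  obtain ⟨C2, hC2, h2⟩ := AA_bound
  refine ⟨C1+C2, by positivity, fun z hz => ?_⟩
  have e : (FD z).re = (AA z).re + (GG z).re := by rw [GG, Complex.sub_re]; ring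
  have a1 := abs_le.mp ((Complex.abs_re_le_norm (GG z)).trans (h1 z hz))
  have a2 := abs_le.mp (h2 z (by linarith)).2
  rw [e]
  constructor <;> linarith [a1.1, a1.2, a2.1, a2.2]

/-- weighted count -/
def NN (T : ℝ) : ℝ := ∑ ρ ∈ ZZ T, (zetaMult ρ : ℝ)

lemma P_upper (hRH : RiemannHypothesis) {T t : ℝ} (h0 : 0 ≤ t) (hT : t ≤ T) :
    (FD (1 + t*I)).re ≤ (∑ ρ ∈ ZZ T, (zetaMult ρ : ℝ) * (1+(t-ρ.im)^2)⁻¹) + 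
      2/(1+T-t) * (FD (((1+T-t:ℝ):ℂ) + T*I)).re + 2/(1+t) * (FD ((1+t:ℝ):ℂ)).re := by
  have hre : 0 < (1 + t*I : ℂ).re := by simp
  refine le_of_tendsto' (EE_partial hRH hre) fun R => ?_
  set S := ZR EE R
  have hS : ∀ a ∈ S, EE a = 0 := fun a ha => ((mem_ZR EE_diff EE_order_ne_top R a).mp ha).2
  have hform : ∀ a ∈ S, (1/(1 + t*I - a)).re = (1+(t-a.im)^2)⁻¹ := by
    intro a ha
    have har := EE_zero_im hRH (hS a ha)
    rw [re_one_div_sub har]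
    have e1 : normSq ((1:ℂ) + t*I - a) = 1 + (t-a.im)^2 := by
      rw [normSq_apply]; simp [har]; ring
    rw [e1]; simp
  have hform2 : ∀ (y s : ℝ), ∀ a ∈ S, (1/((y:ℂ) + s*I - a)).re = y/(y^2+(s-a.im)^2) := by
    intro y s a ha
    have har := EE_zero_im hRH (hS a ha)
    rw [re_one_div_sub har]
    have e1 : normSq ((y:ℂ) + s*I - a) = y^2 + (s-a.im)^2 := by
      rw [normSq_apply]; simp [har]; ring
    rw [e1]; simp
  rw [← Finset.sum_filter_add_sum_filter_not S (fun a => 0 < a.im ∧ a.im ≤ T)]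
  rw [← Finset.sum_filter_add_sum_filter_not (S.filter (fun a => ¬ (0 < a.im ∧ a.im ≤ T))) (fun a => 0 < a.im)]
  rw [add_assoc]
  refine add_le_add ?_ (add_le_add ?_ ?_)
  · have hs : ∑ a ∈ S with (0 < a.im ∧ a.im ≤ T), (analyticOrderNatAt EE a : ℝ) * (1/(1 + t*I - a)).re = 
        ∑ ρ ∈ (S.filter (fun a => 0 < a.im ∧ a.im ≤ T)).image (fun a => 1/2 + a), (zetaMult ρ : ℝ) * (1+(t-ρ.im)^2)⁻¹ := by
      rw [Finset.sum_image (by intro x _ y _ h; simpa using h)]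
      refine Finset.sum_congr rfl fun a ha => ?_
      rw [Finset.mem_filter] at ha
      rw [hform a ha.1]
      have hz := EE_zero_nontriv.mp (hS a ha.1)
      have := EE_mult hz.2.1 (by
        intro h1
        have := congrArg Complex.im h1
        simp at this
        linarith [ha.2.1])
      rw [add_sub_cancel_left] at this
      rw [this]; simp
    rw [hs]
    apply Finset.sum_le_sum_of_subset_of_nonneg
    · intro ρ hρ
      rw [Finset.mem_image] at hρ
      obtain ⟨a, ha, rfl⟩ := hρ
      rw [Finset.mem_filter] at ha
      rw [mem_ZZ]
      refine ⟨EE_zero_nontriv.mp (hS a ha.1), ?_⟩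
      simpa using ha.2
    · intro _ _ _; positivity
  · have hy : 0 < 1+T-t := by linarith
    have hr : 0 < (((1+T-t:ℝ):ℂ) + T*I).re := by simpa using hy
    have := FD_re_ge hRH hr ((S.filter (fun a => ¬ (0 < a.im ∧ a.im ≤ T))).filter (fun a => 0 < a.im)) (by
      intro a ha
      exact hS a (Finset.mem_filter.mp (Finset.mem_filter.mp ha).1).1)
    refine le_trans ?_ (mul_le_mul_of_nonneg_left this (by positivity))
    rw [Finset.mul_sum]
    refine Finset.sum_le_sum fun a ha => ?_
    simp only [Finset.mem_filter, not_and, not_le] at ha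
    obtain ⟨⟨ha, h1⟩, h2⟩ := ha
    have h3 := h1 h2
    rw [hform a ha, hform2 _ _ a ha]
    have e : 2/(1+T-t) * ((analyticOrderNatAt EE a : ℝ) * ((1+T-t)/((1+T-t)^2+(T-a.im)^2))) = 
       (analyticOrderNatAt EE a : ℝ) * (2/((1+T-t)^2+(T-a.im)^2)) := by field_simp
    rw [e]
    gcongr
    rw [inv_eq_one_div, div_le_div_iff₀ (by positivity) (by positivity)]
    nlinarith [sq_nonneg (T-t-1), mul_nonneg (sub_nonneg.mpr hT) (sub_nonneg.mpr h3.le)]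
  · have hy : 0 < 1+t := by linarith
    have hr : 0 < (((1+t:ℝ):ℂ) + (0:ℝ)*I).re := by simpa using hy
    have := FD_re_ge hRH hr ((S.filter (fun a => ¬ (0 < a.im ∧ a.im ≤ T))).filter (fun a => ¬ 0 < a.im)) (by
      intro a ha
      exact hS a (Finset.mem_filter.mp (Finset.mem_filter.mp ha).1).1)
    rw [show ((1+t:ℝ):ℂ) = ((1+t:ℝ):ℂ) + (0:ℝ)*I by simp]
    refine le_trans ?_ (mul_le_mul_of_nonneg_left this (by positivity))
    rw [Finset.mul_sum]
    refine Finset.sum_le_sum fun a ha => ?_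
    simp only [Finset.mem_filter, not_lt] at ha
    obtain ⟨⟨ha, h1⟩, h2⟩ := ha
    rw [hform a ha, hform2 _ _ a ha]
    have e : 2/(1+t) * ((analyticOrderNatAt EE a : ℝ) * ((1+t)/((1+t)^2+(0-a.im)^2))) = 
       (analyticOrderNatAt EE a : ℝ) * (2/((1+t)^2+(0-a.im)^2)) := by field_simp
    rw [e]
    gcongr
    rw [inv_eq_one_div, div_le_div_iff₀ (by positivity) (by positivity)]
    nlinarith [sq_nonneg (t-1), mul_nonneg h0 (neg_nonneg.mpr h2)]

lemma log_sq_le {x : ℝ} (hx : 1 ≤ x) : Real.log x^2 ≤ 4*x := by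
  have h1 : Real.log x ≤ 2*√x := by
    have : Real.log x = 2 * Real.log (√x) := by
      rw [Real.log_sqrt (by linarith)]; ring
    rw [this]
    have := Real.log_le_sub_one_of_pos (show 0 < √x from Real.sqrt_pos.mpr (by linarith))
    linarith
  have h2 := Real.log_nonneg hx
  calc Real.log x^2 ≤ (2*√x)^2 := by gcongr
    _ = 4*x := by rw [mul_pow, Real.sq_sqrt (by linarith)]; norm_num

theorem NN_lower (hRH : RiemannHypothesis) : ∃ C > 0, ∀ T : ℝ, 2 ≤ T → 
    T/(2*π) * Real.log T - C*T ≤ NN T := by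
  obtain ⟨C, hC, hF⟩ := FD_right
  have hpi := Real.pi_gt_three
  refine ⟨(1/2+C) + 16*(8+C), by positivity, fun T hT => ?_⟩
  have hl0 : 0 ≤ Real.log T := Real.log_nonneg (by linarith)
  set B := Real.log (3*(1+T))/2 + C with hB
  have hB1 : ∀ z : ℂ, 1 ≤ z.re → ‖z‖ ≤ 2 + 2*T → (FD z).re ≤ B := by
    intro z h1 h2
    refine (hF z h1).1.trans ?_
    have : Real.log (1+‖z‖) ≤ Real.log (3*(1+T)) := Real.log_le_log (by positivity) (by linarith)
    rw [hB]; linarith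
  have hP : ∀ t ∈ Icc 0 T, Real.log (1+t)/2 - C ≤ 
      (∑ ρ ∈ ZZ T, (zetaMult ρ : ℝ) * (1+(t-ρ.im)^2)⁻¹) + 2*B/(1+T-t) + 2*B/(1+t) := by
    intro t ht
    have h1 := P_upper hRH ht.1 ht.2
    have h2 := (hF (1+t*I) (by simp)).2
    have h3 : Real.log (1+t) ≤ Real.log (1+‖(1+t*I:ℂ)‖) := by
      apply Real.log_le_log (by linarith [ht.1])
      have := Complex.im_le_norm (1+t*I)
      simp at this; linarith
    have h4 : (FD (((1+T-t:ℝ):ℂ) + T*I)).re ≤ B := by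
      apply hB1
      · simp; linarith [ht.2]
      · refine (norm_add_le _ _).trans ?_
        rw [Complex.norm_of_nonneg (by linarith [ht.2]), norm_mul, Complex.norm_I, Complex.norm_of_nonneg (by linarith)]
        linarith [ht.1]
    have h5 : (FD ((1+t:ℝ):ℂ)).re ≤ B := by
      apply hB1
      · simp; linarith [ht.1]
      · rw [Complex.norm_of_nonneg (by linarith [ht.1])]
        linarith [ht.1, ht.2]
    have p1 : 0 < 1+T-t := by linarith [ht.2]
    have p2 : 0 < 1+t := by linarith [ht.1]
    have h6 : 2/(1+T-t) * (FD (((1+T-t:ℝ):ℂ) + T*I)).re ≤ 2*B/(1+T-t) := by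
      calc _ ≤ 2/(1+T-t) * B := by gcongr
        _ = _ := by ring
    have h7 : 2/(1+t) * (FD ((1+t:ℝ):ℂ)).re ≤ 2*B/(1+t) := by
      calc _ ≤ 2/(1+t) * B := by gcongr
        _ = _ := by ring
    linarith
  have hT0 : 0 ≤ T := by linarith
  have c1 : ContinuousOn (fun t : ℝ => Real.log (1+t)/2 - C) (uIcc 0 T) := by
    apply ContinuousOn.sub _ continuousOn_const
    apply ContinuousOn.div_const
    apply ContinuousOn.log (by fun_prop)
    intro t ht
    rw [uIcc_of_le hT0] at ht
    linarith [ht.1]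
  have c2 : Continuous (fun t : ℝ => ∑ ρ ∈ ZZ T, (zetaMult ρ : ℝ) * (1+(t-ρ.im)^2)⁻¹) := by
    apply continuous_finsetSum
    intro ρ _
    apply Continuous.mul continuous_const
    apply Continuous.inv₀ (by fun_prop)
    intro t; positivity
  have c3 : ContinuousOn (fun t : ℝ => 2*B/(1+T-t)) (uIcc 0 T) := by
    apply ContinuousOn.div (by fun_prop) (by fun_prop)
    intro t ht
    rw [uIcc_of_le hT0] at ht
    linarith [ht.2]
  have c4 : ContinuousOn (fun t : ℝ => 2*B/(1+t)) (uIcc 0 T) := by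
    apply ContinuousOn.div (by fun_prop) (by fun_prop)
    intro t ht
    rw [uIcc_of_le hT0] at ht
    linarith [ht.1]
  have i2 := c2.intervalIntegrable (μ := volume) 0 T
  have i3 := c3.intervalIntegrable (μ := volume)
  have i4 := c4.intervalIntegrable (μ := volume)
  have hIntg := intervalIntegral.integral_mono_on hT0 c1.intervalIntegrable ((i2.add i3).add i4) hP
  have il : IntervalIntegrable (fun t : ℝ => Real.log (1+t)/2) volume 0 T := by
    have := c1.intervalIntegrable (μ := volume) |>.add (continuous_const (y := C) |>.intervalIntegrable 0 T)
    refine this.congr ?_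
    exact fun t _ => by simp
  have e1 : ∫ t in (0:ℝ)..T, (Real.log (1+t)/2 - C) = ((1+T)*Real.log (1+T) - T)/2 - T*C := by
    rw [intervalIntegral.integral_sub il (continuous_const.intervalIntegrable 0 T), intervalIntegral.integral_div,
      intervalIntegral.integral_comp_add_left (fun x => Real.log x) 1, integral_log]
    simp
    ring
  have e2 : ∫ t in (0:ℝ)..T, ((∑ ρ ∈ ZZ T, (zetaMult ρ : ℝ) * (1+(t-ρ.im)^2)⁻¹) + 2*B/(1+T-t) + 2*B/(1+t)) =
      (∑ ρ ∈ ZZ T, (zetaMult ρ : ℝ) * (Real.arctan (T-ρ.im) - Real.arctan (0-ρ.im))) + 2*B*Real.log (1+T) + 2*B*Real.log (1+T) := by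
    have a1 : ∫ t in (0:ℝ)..T, (∑ ρ ∈ ZZ T, (zetaMult ρ : ℝ) * (1+(t-ρ.im)^2)⁻¹) = 
        (∑ ρ ∈ ZZ T, (zetaMult ρ : ℝ) * (Real.arctan (T-ρ.im) - Real.arctan (0-ρ.im))) := by
      rw [intervalIntegral.integral_finsetSum]
      · refine Finset.sum_congr rfl fun ρ _ => ?_
        rw [intervalIntegral.integral_const_mul, intervalIntegral.integral_comp_sub_right (fun x => (1+x^2)⁻¹) ρ.im, integral_inv_one_add_sq]
      · intro ρ _
        apply Continuous.intervalIntegrable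
        apply Continuous.mul continuous_const
        apply Continuous.inv₀ (by fun_prop)
        intro t; positivity
    have a3 : ∫ t in (0:ℝ)..T, 2*B/(1+t) = 2*B*Real.log (1+T) := by
      simp_rw [div_eq_mul_inv]
      rw [intervalIntegral.integral_const_mul, intervalIntegral.integral_comp_add_left (fun x => x⁻¹) 1, 
        integral_inv_of_pos (by norm_num) (by linarith)]
      simp
    have a2 : ∫ t in (0:ℝ)..T, 2*B/(1+T-t) = 2*B*Real.log (1+T) := by
      simp_rw [div_eq_mul_inv]
      rw [intervalIntegral.integral_const_mul, intervalIntegral.integral_comp_sub_left (fun x => x⁻¹) (1+T), 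
        integral_inv_of_pos (by linarith) (by linarith)]
      simp
    rw [intervalIntegral.integral_add (i2.add i3) i4, intervalIntegral.integral_add i2 i3, a1, a2, a3]
  rw [e1] at hIntg
  have hIntg2 := hIntg.trans (le_of_eq e2)
  have h5 : (∑ ρ ∈ ZZ T, (zetaMult ρ : ℝ) * (Real.arctan (T-ρ.im) - Real.arctan (0-ρ.im))) ≤ π * NN T := by
    rw [NN, Finset.mul_sum]
    refine Finset.sum_le_sum fun ρ _ => ?_
    rw [mul_comm]
    gcongr
    linarith [Real.arctan_lt_pi_div_two (T-ρ.im), Real.neg_pi_div_two_lt_arctan (0-ρ.im)]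
  have h6 : T * Real.log T ≤ (1+T)*Real.log (1+T) := by
    have : Real.log T ≤ Real.log (1+T) := Real.log_le_log (by linarith) (by linarith)
    nlinarith
  have h7 : 4*B*Real.log (1+T) ≤ 4*(8+C)*(3*(1+T)) := by
    have a1 : Real.log (1+T) ≤ Real.log (3*(1+T)) := Real.log_le_log (by linarith) (by linarith)
    have a0 : 0 ≤ Real.log (1+T) := Real.log_nonneg (by linarith)
    have a2 := log_sq_le (show 1 ≤ 3*(1+T) by linarith)
    have a3 := Real.log_le_sub_one_of_pos (show 0 < 3*(1+T) by linarith)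
    set l := Real.log (3*(1+T))
    have a4 : 0 ≤ l := a0.trans a1
    have b1 : 4*B*Real.log (1+T) ≤ 4*B*l := by
      have : 0 ≤ B := by positivity
      gcongr
    have b2 : 4*B*l = 2*l^2 + 4*C*l := by rw [hB]; ring
    nlinarith
  have h8 : T*Real.log T/2 - T/2 - T*C - 4*(8+C)*(3*(1+T)) ≤ π * NN T := by linarith
  have h9 : (T/(2*π) * Real.log T - ((1/2+C) + 16*(8+C))*T) * π ≤ NN T * π := by
    have e : T/(2*π) * Real.log T * π = T*Real.log T/2 := by field_simp
    have : ((1/2+C) + 16*(8+C))*T*3 ≤ ((1/2+C) + 16*(8+C))*T*π := by gcongr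
    rw [sub_mul, e]
    nlinarith
  exact le_of_mul_le_mul_right h9 (by linarith)

end SZC

namespace SZC

/-- cosine transform of the one-sided tent -/
def JJ (k v : ℝ) : ℝ := ∫ α in (0:ℝ)..k, (1 - α/k) * Real.cos (α * v)

lemma JJ_zero (k : ℝ) (hk : 0 < k) : JJ k 0 = k/2 := by
  unfold JJ
  have : ∀ x : ℝ, HasDerivAt (fun x : ℝ => x - x^2/(2*k)) (1 - x/k) x := by
    intro x
    have h := (hasDerivAt_id x).sub ((hasDerivAt_pow 2 x).div_const (2*k))
    refine h.congr_deriv ?_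
    field_simp
    norm_num
    ring
  simp only [mul_zero, Real.cos_zero, mul_one]
  rw [intervalIntegral.integral_eq_sub_of_hasDerivAt (fun x _ => this x)
    (Continuous.intervalIntegrable (by fun_prop) _ _)]
  field_simp
  ring

lemma JJ_eq (k v : ℝ) (hk : 0 < k) (hv : v ≠ 0) : JJ k v = (1 - Real.cos (k*v))/(k*v^2) := by
  unfold JJ
  have : ∀ x : ℝ, HasDerivAt (fun x : ℝ => (1 - x/k) * (Real.sin (x*v)/v) - Real.cos (x*v)/(k*v^2))
      ((1 - x/k) * Real.cos (x*v)) x := by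
    intro x
    have h0 : HasDerivAt (fun x : ℝ => x*v) v x := by simpa using (hasDerivAt_id x).mul_const v
    have h1 : HasDerivAt (fun x : ℝ => 1 - x/k) (-(1/k)) x := by
      simpa using ((hasDerivAt_id x).div_const k).const_sub 1
    have h := (h1.mul (h0.sin.div_const v)).sub (h0.cos.div_const (k*v^2))
    refine h.congr_deriv ?_
    field_simp
    ring
  rw [intervalIntegral.integral_eq_sub_of_hasDerivAt (fun x _ => this x)
    (Continuous.intervalIntegrable (by fun_prop) _ _)]
  have : k / k = 1 := div_self hk.ne'
  simp [this]
  field_simp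
  ring

lemma JJ_nonneg (k v : ℝ) (hk : 0 < k) : 0 ≤ JJ k v := by
  by_cases hv : v = 0
  · rw [hv, JJ_zero k hk]; positivity
  · rw [JJ_eq k v hk hv]
    apply div_nonneg _ (by positivity)
    linarith [Real.cos_le_one (k*v)]

lemma JJ_le (k v : ℝ) (hk : 1 ≤ k) (hk2 : k ≤ 2) : JJ k v ≤ 2 / (1 + (v/8)^2) := by
  have hk0 : 0 < k := by linarith
  rw [le_div_iff₀ (by positivity)]
  by_cases hv : v = 0
  · rw [hv, JJ_zero k hk0]; norm_num; linarith
  · have hv2 : 0 < v^2 := by positivity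
    rw [JJ_eq k v hk0 hv, div_mul_eq_mul_div, div_le_iff₀ (by positivity)]
    have h1 := Real.one_sub_sq_div_two_le_cos (x := k*v)
    have h2 := Real.neg_one_le_cos (k*v)
    have h3 : (1 - Real.cos (k*v)) * (v/8)^2 ≤ 2 * (v/8)^2 := by
      apply mul_le_mul_of_nonneg_right _ (by positivity)
      linarith
    nlinarith [mul_nonneg (mul_nonneg hk0.le (sub_nonneg.2 hk2)) hv2.le, mul_nonneg (sub_nonneg.2 hk) hv2.le]

/-- The unnormalised real pair correlation sum -/
def fT (T α : ℝ) : ℝ := ∑ ρ ∈ ZZ T, ∑ ρ' ∈ ZZ T, (zetaMult ρ : ℝ) * zetaMult ρ' *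
  (4 / (4 + (ρ.im - ρ'.im)^2)) * Real.cos (α * ((ρ.im - ρ'.im) * Real.log T))

lemma fT_cont (T : ℝ) : Continuous (fT T) := by
  unfold fT
  refine continuous_finsetSum _ fun ρ _ => continuous_finsetSum _ fun ρ' _ => ?_
  fun_prop

lemma FF_re (T α : ℝ) (hT : 0 < T) : (FF α T).re = (T/(2*π)*Real.log T)⁻¹ * fT T α := by
  have : Fintype (zerosUpTo T) := (zerosUpTo_finite T).fintype
  have hconv : ∀ g : ℂ → ℝ, ∑ ρ : zerosUpTo T, g ρ = ∑ ρ ∈ ZZ T, g ρ := by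
    intro g
    rw [← Finset.sum_subtype (ZZ T) (p := fun ρ => ρ ∈ zerosUpTo T)]
    intro x; rw [mem_ZZ]; rfl
  unfold FF Fxt
  rw [← Complex.ofReal_inv, Complex.re_ofReal_mul, tsum_fintype, Fintype.sum_prod_type]
  congr 1
  unfold fT
  rw [Complex.re_sum, ← hconv]
  refine Finset.sum_congr rfl fun ρ _ => ?_
  rw [Complex.re_sum, ← hconv]
  refine Finset.sum_congr rfl fun ρ' _ => ?_
  rw [Complex.re_mul_ofReal, Real.log_rpow hT]
  have h1 : Complex.I * ((((ρ:ℂ).im - (ρ':ℂ).im : ℝ)) : ℂ) * ((α * Real.log T : ℝ) : ℂ) =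
    ((α * (((ρ:ℂ).im - (ρ':ℂ).im) * Real.log T) : ℝ) : ℂ) * Complex.I := by push_cast; ring
  have h2 : ((zetaMult ρ : ℂ) * (zetaMult ρ' : ℂ)) = (((zetaMult ρ : ℝ) * zetaMult ρ' : ℝ) : ℂ) := by
    push_cast; ring
  rw [h1, h2, Complex.re_ofReal_mul, Complex.exp_ofReal_mul_I_re]
  ring

lemma Nstar_eq (T : ℝ) : Nstar T = (T/(2*π)*Real.log T)⁻¹ * ∑ ρ ∈ ZZ T, (zetaMult ρ : ℝ)^2 := by
  have : Fintype (zerosUpTo T) := (zerosUpTo_finite T).fintype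
  unfold Nstar
  rw [tsum_fintype, ← Finset.sum_subtype (ZZ T) (p := fun ρ => ρ ∈ zerosUpTo T) (f := fun ρ => (zetaMult ρ : ℝ)^2)]
  intro x; rw [mem_ZZ]; rfl

/-- Tent-weighted sums -/
def SS (T k : ℝ) : ℝ := ∑ ρ ∈ ZZ T, ∑ ρ' ∈ ZZ T, (zetaMult ρ : ℝ) * zetaMult ρ' *
  (4 / (4 + (ρ.im - ρ'.im)^2)) * JJ k ((ρ.im - ρ'.im) * Real.log T)

lemma SS_eq (T k : ℝ) : ∫ α in (0:ℝ)..k, (1 - α/k) * fT T α = SS T k := by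
  unfold SS fT JJ
  simp_rw [Finset.mul_sum]
  rw [intervalIntegral.integral_finsetSum]
  · refine Finset.sum_congr rfl fun ρ _ => ?_
    rw [intervalIntegral.integral_finsetSum]
    · refine Finset.sum_congr rfl fun ρ' _ => ?_
      rw [← intervalIntegral.integral_const_mul]
      congr 1; funext α; ring
    · intro ρ' _
      exact Continuous.intervalIntegrable (by fun_prop) _ _
  · intro ρ _
    refine Continuous.intervalIntegrable ?_ _ _
    refine continuous_finsetSum _ fun ρ' _ => ?_
    fun_prop

lemma SS_nonneg (T k : ℝ) (hk : 0 < k) : 0 ≤ SS T k := by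
  unfold SS
  refine Finset.sum_nonneg fun ρ _ => Finset.sum_nonneg fun ρ' _ => ?_
  have := JJ_nonneg k ((ρ.im - ρ'.im) * Real.log T) hk
  positivity

lemma SS_lower (T k : ℝ) (hk : 0 < k) : k/2 * ∑ ρ ∈ ZZ T, (zetaMult ρ : ℝ)^2 ≤ SS T k := by
  unfold SS
  rw [Finset.mul_sum]
  refine Finset.sum_le_sum fun ρ hρ => ?_
  refine le_trans (le_of_eq ?_) (Finset.single_le_sum (f := fun ρ' : ℂ => (zetaMult ρ : ℝ) * zetaMult ρ' *
  (4 / (4 + (ρ.im - ρ'.im)^2)) * JJ k ((ρ.im - ρ'.im) * Real.log T)) (fun ρ' _ => ?_) hρ)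
  · simp only [sub_self, zero_mul, JJ_zero k hk]; norm_num; ring
  · have := JJ_nonneg k ((ρ.im - ρ'.im) * Real.log T) hk
    positivity

lemma SS_upper (hRH : RiemannHypothesis) : ∃ C > 0, ∀ T, Real.exp 32 ≤ T → ∀ k, 1 ≤ k → k ≤ 2 →
    SS T k ≤ C * (T * Real.log T) := by
  obtain ⟨C, hC, h⟩ := pair_bound hRH
  refine ⟨2*C, by positivity, fun T hT k hk hk2 => ?_⟩
  have h1 := h T hT
  rw [mul_assoc]
  refine le_trans ?_ (mul_le_mul_of_nonneg_left h1 (by norm_num : (0:ℝ) ≤ 2))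
  unfold SS
  rw [Finset.mul_sum]
  refine Finset.sum_le_sum fun ρ hρ => ?_
  rw [Finset.mul_sum]
  refine Finset.sum_le_sum fun ρ' hρ' => ?_
  have a1 := JJ_le k ((ρ.im - ρ'.im) * Real.log T) hk hk2
  have a0 := JJ_nonneg k ((ρ.im - ρ'.im) * Real.log T) (by linarith)
  have a2 : 4 / (4 + (ρ.im - ρ'.im)^2) ≤ 1 := by
    rw [div_le_one (by positivity)]; nlinarith [sq_nonneg (ρ.im - ρ'.im)]
  have a3 : (ρ.im * (Real.log T/8) - ρ'.im * (Real.log T/8)) = (ρ.im - ρ'.im) * Real.log T / 8 := by ring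
  rw [a3]
  calc _ ≤ (zetaMult ρ : ℝ) * zetaMult ρ' * 1 * (2 / (1 + ((ρ.im - ρ'.im) * Real.log T/8)^2)) := by
        gcongr
    _ = _ := by ring

lemma upper_ineq (T M ε : ℝ) (hM : 2 ≤ M) (hε : 0 < ε) (hε1 : ε ≤ 1) (hT : Real.exp 32 ≤ T)
    (h : ∀ α, 1 ≤ α → α ≤ M → ‖FF α T - 1‖ ≤ ε) :
    M/2 * ∑ ρ ∈ ZZ T, (zetaMult ρ : ℝ)^2 ≤ (1+ε) * (T/(2*π)*Real.log T) * (M/2) + 2 * SS T 2 + SS T 1 := by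
  have hTe : 1 < T := lt_of_lt_of_le (Real.one_lt_exp_iff.2 (by norm_num)) hT
  have hlog : 0 < Real.log T := Real.log_pos hTe
  have hT0 : 0 < T := by linarith
  set n := T/(2*π)*Real.log T with hn
  have hn0 : 0 < n := by positivity
  have hf : ∀ α, 1 ≤ α → α ≤ M → 0 ≤ fT T α ∧ fT T α ≤ (1+ε)*n := by
    intro α h1 h2
    have a := (Complex.abs_re_le_norm _).trans (h α h1 h2)
    rw [Complex.sub_re, FF_re T α hT0, ← hn, Complex.one_re, abs_le] at a
    have e : fT T α = n * (n⁻¹ * fT T α) := by field_simp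
    constructor
    · rw [e]; apply mul_nonneg hn0.le; linarith
    · rw [e, mul_comm (1+ε)]; apply mul_le_mul_of_nonneg_left _ hn0.le; linarith
  have cf := fT_cont T
  have c : ∀ k, Continuous (fun α => (1 - α/k) * fT T α) := fun k => by fun_prop
  have ii : ∀ k a b, IntervalIntegrable (fun α => (1 - α/k) * fT T α) volume a b :=
    fun k a b => (c k).intervalIntegrable a b
  have iF : ∀ a b, IntervalIntegrable (fun α => fT T α) volume a b :=
    fun a b => cf.intervalIntegrable a b
  have hM0 : 0 < M := by linarith
  have b0 := SS_lower T M hM0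
  have b1 : SS T M = (∫ α in (0:ℝ)..1, (1 - α/M) * fT T α) + ∫ α in (1:ℝ)..M, (1 - α/M) * fT T α := by
    rw [← SS_eq, intervalIntegral.integral_add_adjacent_intervals (ii _ _ _) (ii _ _ _)]
  have b2 : SS T 2 = (∫ α in (0:ℝ)..1, (1 - α/2) * fT T α) + ∫ α in (1:ℝ)..2, (1 - α/2) * fT T α := by
    rw [← SS_eq, intervalIntegral.integral_add_adjacent_intervals (ii _ _ _) (ii _ _ _)]
  have b3 : SS T 1 = ∫ α in (0:ℝ)..1, (1 - α/1) * fT T α := (SS_eq _ _).symm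
  have b4 : 0 ≤ ∫ α in (1:ℝ)..2, (1 - α/2) * fT T α := by
    apply intervalIntegral.integral_nonneg (by norm_num)
    intro α hα
    apply mul_nonneg (by linarith [hα.2]) (hf α hα.1 (by linarith [hα.2])).1
  have b5 : ∫ α in (1:ℝ)..M, (1 - α/M) * fT T α ≤ (1+ε)*n*(M/2) := by
    have t1 : ∀ α, HasDerivAt (fun x : ℝ => (1+ε)*n*(x - x^2/(2*M))) ((1+ε)*n*(1 - α/M)) α := by
      intro x
      have h := ((hasDerivAt_id x).sub ((hasDerivAt_pow 2 x).div_const (2*M))).const_mul ((1+ε)*n)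
      refine h.congr_deriv ?_
      field_simp
      norm_num
      ring
    have cc : Continuous (fun α : ℝ => (1+ε)*n*(1 - α/M)) := by fun_prop
    have t2 := intervalIntegral.integral_mono_on (by linarith : (1:ℝ) ≤ M) (ii M 1 M) (cc.intervalIntegrable (μ := volume) 1 M)
      (fun α hα => by
        have : 0 ≤ 1 - α/M := by rw [sub_nonneg, div_le_one hM0]; exact hα.2
        rw [mul_comm]
        exact mul_le_mul_of_nonneg_right (hf α hα.1 hα.2).2 this)
    rw [intervalIntegral.integral_eq_sub_of_hasDerivAt (fun x _ => t1 x) (cc.intervalIntegrable _ _)] at t2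
    refine t2.trans ?_
    rw [← mul_sub]
    apply mul_le_mul_of_nonneg_left _ (by positivity)
    have : M - M^2/(2*M) = M/2 := by field_simp; ring
    rw [this]
    have : 1^2/(2*M) ≤ 1 := by rw [div_le_one (by positivity)]; linarith
    linarith
  have b6 : (∫ α in (0:ℝ)..1, (1 - α/2) * fT T α) = (1/2) * (∫ α in (0:ℝ)..1, fT T α) + (1/2) * (∫ α in (0:ℝ)..1, (1 - α/1) * fT T α) := by
    rw [← intervalIntegral.integral_const_mul, ← intervalIntegral.integral_const_mul,
      ← intervalIntegral.integral_add ((iF _ _).const_mul _) ((ii _ _ _).const_mul _)]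
    congr 1; funext α; ring
  have b7 : (∫ α in (0:ℝ)..1, (1 - α/M) * fT T α) = (1-1/M) * (∫ α in (0:ℝ)..1, fT T α) + (1/M) * (∫ α in (0:ℝ)..1, (1 - α/1) * fT T α) := by
    rw [← intervalIntegral.integral_const_mul, ← intervalIntegral.integral_const_mul,
      ← intervalIntegral.integral_add ((iF _ _).const_mul _) ((ii _ _ _).const_mul _)]
    congr 1; funext α; ring
  rw [← b3] at b6 b7
  have s1 := SS_nonneg T 1 (by norm_num)
  have s2 := SS_nonneg T 2 (by norm_num)
  have hM1 : 1/M ≤ 1 := by rw [div_le_one hM0]; linarith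
  have hM2 : 0 ≤ 1/M := by positivity
  have k1 : (∫ α in (0:ℝ)..1, fT T α) ≤ 2 * SS T 2 := by linarith
  have k2 : (1-1/M) * (∫ α in (0:ℝ)..1, fT T α) ≤ 2 * SS T 2 := by
    refine (mul_le_mul_of_nonneg_left k1 (by linarith)).trans ?_
    nlinarith
  have k3 : (1/M) * SS T 1 ≤ SS T 1 := by nlinarith
  linarith

lemma Nstar_upper (hRH : RiemannHypothesis) (hSPC : SPC) (δ : ℝ) (hδ : 0 < δ) :
    ∀ᶠ T in atTop, Nstar T ≤ 1 + δ := by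
  obtain ⟨C, hC, hS⟩ := SS_upper hRH
  set M : ℝ := 2 + 12*π*C*2/δ with hMdef
  have hM : 2 ≤ M := by rw [hMdef]; have : 0 ≤ 12*π*C*2/δ := by positivity
                        linarith
  have hM0 : 0 < M := by linarith
  set ε := min 1 (δ/2) with hε
  have hε0 : 0 < ε := by positivity
  obtain ⟨T₀, h0⟩ := hSPC M (by linarith) ε hε0
  filter_upwards [eventually_ge_atTop T₀, eventually_ge_atTop (Real.exp 32)] with T hT hTe
  have u := upper_ineq T M ε hM hε0 (min_le_left _ _) hTe (h0 T hT)
  have u1 := hS T hTe 1 (by norm_num) (by norm_num)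
  have u2 := hS T hTe 2 (by norm_num) (by norm_num)
  have hT1 : 1 < T := lt_of_lt_of_le (Real.one_lt_exp_iff.2 (by norm_num)) hTe
  have hlog : 0 < Real.log T := Real.log_pos hT1
  have hT0 : 0 < T := by linarith
  rw [Nstar_eq]
  set n := T/(2*π)*Real.log T with hn
  have hn0 : 0 < n := by positivity
  have hTn : T * Real.log T = 2*π*n := by rw [hn]; field_simp
  rw [hTn] at u1 u2
  rw [inv_mul_le_iff₀ hn0]
  have e2 : ε ≤ δ/2 := min_le_right _ _
  have hMd : 12*π*C ≤ M * (δ/2) := by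
    have : M * (δ/2) = δ + 12*π*C := by rw [hMdef]; field_simp
    linarith
  have key : M/2 * ∑ ρ ∈ ZZ T, (zetaMult ρ : ℝ)^2 ≤ M/2 * (n*(1+δ)) := by
    have w1 : ε * (n * (M/2)) ≤ δ/2 * (n*(M/2)) := mul_le_mul_of_nonneg_right e2 (by positivity)
    have w2 : 12*π*C*n ≤ M * (δ/2) * n := mul_le_mul_of_nonneg_right hMd hn0.le
    nlinarith
  exact le_of_mul_le_mul_left key (by positivity)

lemma Nstar_lower (hRH : RiemannHypothesis) (δ : ℝ) (hδ : 0 < δ) :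
    ∀ᶠ T in atTop, 1 - δ ≤ Nstar T := by
  obtain ⟨C, hC, hN⟩ := NN_lower hRH
  filter_upwards [eventually_ge_atTop 2, Real.tendsto_log_atTop.eventually_ge_atTop (C*(2*π)/δ)] with T hT hL
  have h := hN T hT
  have hlog : 0 < Real.log T := Real.log_pos (by linarith)
  rw [Nstar_eq]
  set n := T/(2*π)*Real.log T with hn
  have hn0 : 0 < n := by positivity
  rw [le_inv_mul_iff₀ hn0]
  have h2 : NN T ≤ ∑ ρ ∈ ZZ T, (zetaMult ρ : ℝ)^2 := by
    unfold NN
    refine Finset.sum_le_sum fun ρ _ => ?_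
    exact_mod_cast Nat.le_self_pow two_ne_zero _
  have h3 : C*T ≤ δ*n := by
    rw [div_le_iff₀ hδ] at hL
    rw [hn]
    have : δ*(T/(2*π)*Real.log T) = T/(2*π) * (Real.log T*δ) := by ring
    rw [this]
    calc C*T = T/(2*π) * (C*(2*π)) := by field_simp
      _ ≤ _ := mul_le_mul_of_nonneg_left hL (by positivity)
  linarith

theorem final (hRH : RiemannHypothesis) (hSPC : SPC) :
    Filter.Tendsto Nstar Filter.atTop (nhds 1) := by
  rw [Metric.tendsto_nhds]
  intro ε hε
  filter_upwards [Nstar_upper hRH hSPC (ε/2) (by positivity), Nstar_lower hRH (ε/2) (by positivity)] with T h1 h2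
  rw [Real.dist_eq, abs_lt]
  constructor <;> linarith

end SZC

/-- Assuming RH and the Strong Pair Correlation Conjecture, the Simple Zeros Conjecture
holds: `N*(T) → 1` as `T → ∞`. -/
theorem SPC_implies_SZC (hRH : RiemannHypothesis) (hSPC : SPC) :
    Filter.Tendsto Nstar Filter.atTop (nhds 1) := by
  exact SZC.final hRH hSPC
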